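/- arXiv:1511.09073 — 3 statements merged into one kernel-verified Lean document; each statement's English description precedes it below -/
import Mathlib

section
/- Let H be as in the Setup with n = 12 (a connected {P,C}-free 3-graph on 12 vertices containing a copy of P_2 ∪ K_3, with U, W_0, W_1 and H_1 defined from a fixed such copy). If H_1 ≠ ∅ and H is not contained in the comet Co(12), then |H| < 25. -/
/-- A 3-graph: a finite vertex set together with a finite set of edges
(intended to be 3-element subsets of the vertex set). -/
structure ThreeGraph where
  verts : Finset ℕ
  edges : Finset (Finset ℕ)

namespace ThreeGraph

/-- `G` is a genuine 3-uniform hypergraph: every edge is a 3-element subset of the vertex set. -/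
def IsValid (G : ThreeGraph) : Prop :=
  ∀ e ∈ G.edges, e.card = 3 ∧ e ⊆ G.verts

/-- `H.ContainsCopy F` means `F ⊆ H`: there is an injective map of the vertices of `F`
into those of `H` carrying every edge of `F` to an edge of `H`. -/
def ContainsCopy (H F : ThreeGraph) : Prop :=
  ∃ f : ℕ → ℕ, Set.InjOn f ↑F.verts ∧ (∀ v ∈ F.verts, f v ∈ H.verts) ∧
    ∀ e ∈ F.edges, e.image f ∈ H.edges

/-- `H.Free F` : `H` contains no copy of `F`. -/
def Free (H F : ThreeGraph) : Prop := ¬ H.ContainsCopy F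

/-- `IsoCopy F H` : `H` is isomorphic to `F`. -/
def IsoCopy (F H : ThreeGraph) : Prop :=
  ∃ f : ℕ → ℕ, Set.InjOn f ↑F.verts ∧ F.verts.image f = H.verts ∧
    F.edges.image (Finset.image f) = H.edges

/-- Connectivity: any two vertices are joined by a sequence of vertices in which
consecutive ones lie in a common edge. -/
def Connected (G : ThreeGraph) : Prop :=
  ∀ u ∈ G.verts, ∀ v ∈ G.verts,
    Relation.ReflTransGen (fun a b => ∃ e ∈ G.edges, a ∈ e ∧ b ∈ e) u v

/-- Shift all vertices by `k`. -/
def shiftBy (G : ThreeGraph) (k : ℕ) : ThreeGraph :=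
  ⟨G.verts.image (· + k), G.edges.image (Finset.image (· + k))⟩

/-- Vertex-disjoint union of two 3-graphs. -/
def dUnion (G H : ThreeGraph) : ThreeGraph :=
  ⟨G.verts ∪ (H.shiftBy (G.verts.sup id + 1)).verts,
   G.edges ∪ (H.shiftBy (G.verts.sup id + 1)).edges⟩

end ThreeGraph

/-- The loose 3-uniform path of length 3. -/
def pathP : ThreeGraph :=
  ⟨{0,1,2,3,4,5,6}, {{0,1,2},{2,3,4},{4,5,6}}⟩

/-- The triangle `C`. -/
def triangleC : ThreeGraph :=
  ⟨{0,1,2,3,4,5}, {{0,1,2},{2,3,4},{4,5,0}}⟩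

/-- The matching `M`: two disjoint edges. -/
def matchingM : ThreeGraph :=
  ⟨{0,1,2,3,4,5}, {{0,1,2},{3,4,5}}⟩

/-- `P_2`: two edges sharing exactly one vertex. -/
def pairP2 : ThreeGraph :=
  ⟨{0,1,2,3,4}, {{0,1,2},{2,3,4}}⟩

/-- The complete 3-graph `K_n`. -/
def KK (n : ℕ) : ThreeGraph :=
  ⟨Finset.range n, (Finset.range n).powersetCard 3⟩

/-- The full star `S_n` with center `0`. -/
def SS (n : ℕ) : ThreeGraph :=
  ⟨Finset.range n, ((Finset.range n).powersetCard 3).filter (fun e => 0 ∈ e)⟩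

/-- `G_1(n)` with `x,y,z,v = 0,1,2,3`. -/
def G1 (n : ℕ) : ThreeGraph :=
  ⟨Finset.range n,
   insert {0,1,2}
     (((Finset.range n).powersetCard 3).filter
       (fun h => 3 ∈ h ∧ (h ∩ ({0,1,2} : Finset ℕ)).Nonempty))⟩

/-- `G_2(n)` with `x,y,z = 0,1,2`. -/
def G2 (n : ℕ) : ThreeGraph :=
  ⟨Finset.range n,
   insert {0,1,2}
     (((Finset.range n).powersetCard 3).filter
       (fun h => (h ∩ ({0,1,2} : Finset ℕ)).card = 2))⟩

/-- `G_3(n)` with `x,y₁,y₂,z₁,z₂ = 0,1,2,3,4`. -/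
def G3 (n : ℕ) : ThreeGraph :=
  ⟨Finset.range n,
   ((({0,1,2,3,4} : Finset ℕ).powersetCard 3) \ {{1,2,3},{1,2,4}}) ∪
     ((Finset.range n \ ({0,1,2,3,4} : Finset ℕ)).biUnion (fun w => {{0,3,w},{0,4,w}}))⟩

/-- `K_5^{+t}`: `K_5` on `{0,…,4}` with `a,b = 0,1` and `t` pendant edges `{0,1,v}`. -/
def K5plus (t : ℕ) : ThreeGraph :=
  ⟨Finset.range (5 + t),
   ((Finset.range 5).powersetCard 3) ∪ ((Finset.Ico 5 (5 + t)).image (fun v => {0,1,v}))⟩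

/-- The comet `Co(n)`: a `K_4` on `{0,1,2,3}` and a full star on `{0} ∪ {4,…,n-1}`
with center `0`. -/
def comet (n : ℕ) : ThreeGraph :=
  ⟨Finset.range n,
   (({0,1,2,3} : Finset ℕ).powersetCard 3) ∪
     (((insert 0 (Finset.Ico 4 n)).powersetCard 3).filter (fun e => 0 ∈ e))⟩

/-- `W = V(H) \ U`. -/
def Wset (H : ThreeGraph) (U : Finset ℕ) : Finset ℕ := H.verts \ U

/-- `W_0`: the vertices of `W` lying in no edge of `H` entirely contained in `W`. -/
def W0set (H : ThreeGraph) (U : Finset ℕ) : Finset ℕ :=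
  (Wset H U).filter (fun v => ∀ e ∈ H.edges, e ⊆ Wset H U → v ∉ e)

/-- `W_1 = W \ W_0`. -/
def W1set (H : ThreeGraph) (U : Finset ℕ) : Finset ℕ :=
  Wset H U \ W0set H U

/-- `H_1`: the edges of `H` meeting both `U` and `W_1`. -/
def H1set (H : ThreeGraph) (U : Finset ℕ) : Finset (Finset ℕ) :=
  H.edges.filter (fun e => (e ∩ U).Nonempty ∧ (e ∩ W1set H U).Nonempty)

/-- `H[U]`: the edges of `H` entirely contained in `U`. -/
def HUset (H : ThreeGraph) (U : Finset ℕ) : Finset (Finset ℕ) :=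
  H.edges.filter (fun e => e ⊆ U)

/-! ### A small verified branch-and-bound search over bit masks of triples of labels `0..11` -/

/-- Branching tree: `n g t₁ t₂` branches on whether the triple `g` is an edge. -/
inductive BTree where
  | l : BTree
  | n : ℕ → BTree → BTree → BTree

/-- The mask has exactly one bit (among bits `0..11`). -/
def oneB (x : ℕ) : Bool := Nat.beq (2048 % x) 0

def pathB (e f g : ℕ) : Bool :=
  oneB (Nat.land e f) && (oneB (Nat.land f g) && Nat.beq (Nat.land e g) 0)

def triB (e f g : ℕ) : Bool :=
  oneB (Nat.land e f) && (oneB (Nat.land f g) && (oneB (Nat.land e g) &&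
    Nat.beq (Nat.land (Nat.land e f) g) 0))

/-- The three triples form a forbidden configuration. -/
def badB (e f g : ℕ) : Bool :=
  pathB e f g || (pathB f e g || (pathB e g f || triB e f g))

/-- Filtering in continuation-passing style (so that the kernel evaluates strictly). -/
def filtK (p : ℕ → Bool) : List ℕ → List ℕ → (List ℕ → Bool) → Bool
  | [], acc, k => k acc
  | h :: t, acc, k => cond (p h) (filtK p t (h :: acc) k) (filtK p t acc k)

theorem filtK_eq (p : ℕ → Bool) (l acc : List ℕ) (k : List ℕ → Bool) :
    filtK p l acc k = k ((l.filter p).reverse ++ acc) := by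
  induction l generalizing acc with
  | nil => simp [filtK]
  | cons h t ih =>
    cases hp : p h <;> simp [filtK, ih, hp]

def okAll (S : List ℕ) (g h : ℕ) : Bool := S.all fun s => !badB s g h

def checkT (c : List ℕ) : BTree → List ℕ → List ℕ → Bool
  | .l, _, A => Nat.ble A.length 24 || A.all (fun h => c.any (Nat.beq h))
  | .n g t₁ t₂, S, A =>
    filtK (okAll S g) A [] (fun A' => checkT c t₁ (g :: S) A') &&
    filtK (fun h => !Nat.beq h g) A [] (fun A' => checkT c t₂ S A')

theorem checkT_sound (M : ℕ → Prop) (hM : ∀ a b c, M a → M b → M c → badB a b c = false)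
    (c : List ℕ) (t : BTree) : ∀ S A : List ℕ, (∀ s ∈ S, M s) → (∀ m, M m → m ∈ A) →
      checkT c t S A = true →
      (∃ A' : List ℕ, A'.length ≤ 24 ∧ ∀ m, M m → m ∈ A') ∨ (∀ m, M m → m ∈ c) := by
  induction t with
  | l =>
    intro S A hS hA h
    simp only [checkT, Bool.or_eq_true, List.all_eq_true, List.any_eq_true] at h
    rcases h with h | h
    · exact Or.inl ⟨A, Nat.le_of_ble_eq_true h, hA⟩
    · right
      intro m hm
      obtain ⟨x, hx, hx'⟩ := h m (hA m hm)
      rw [Nat.eq_of_beq_eq_true hx']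
      exact hx
  | n g t₁ t₂ ih₁ ih₂ =>
    intro S A hS hA h
    simp only [checkT, filtK_eq, Bool.and_eq_true, List.append_nil] at h
    by_cases hg : M g
    · refine ih₁ _ _ ?_ ?_ h.1
      · intro s hs
        rcases List.mem_cons.1 hs with rfl | hs
        · exact hg
        · exact hS s hs
      · intro m hm
        simp only [List.mem_reverse, List.mem_filter, okAll, List.all_eq_true]
        refine ⟨hA m hm, fun s hs => ?_⟩
        simp [hM s g m (hS s hs) hg hm]
    · refine ih₂ _ _ hS ?_ h.2
      intro m hm
      simp only [List.mem_reverse, List.mem_filter]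
      refine ⟨hA m hm, ?_⟩
      have : m ≠ g := fun h => hg (h ▸ hm)
      cases hb : Nat.beq m g
      · rfl
      · exact absurd (Nat.eq_of_beq_eq_true hb) this

def cometL : List ℕ :=
  [49, 81, 145, 273, 529, 1041, 2065, 97, 161, 289, 545, 1057, 2081, 193, 321, 577, 1089, 2113,
  385, 641, 1153, 2177, 769, 1281, 2305, 1537, 2561, 3073, 7, 11, 13, 14]

def startA : List ℕ := [49, 193, 14, 7]

def candA : List ℕ :=
  [7, 11, 13, 49, 81, 145, 273, 529, 1041, 2065, 97, 161, 289, 545, 1057, 2081, 193, 321, 577,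
  1089, 2113, 385, 641, 1153, 2177, 769, 1281, 2305, 1537, 2561, 3073, 14, 262, 518, 1030, 2054,
  56, 200, 776, 1288, 2312, 1544, 2568, 3080, 304, 560, 1072, 2096, 448, 704, 1216, 2240, 1792,
  2816, 3328, 3584]

def treeA : BTree :=
  (.n 776 (.n 3080 .l (.n 1072 .l (.n 2096 .l (.n 1216 .l (.n 2240 .l (.n 56 .l (.n 200 .l (.n
  1288 .l (.n 2312 .l (.n 1544 .l (.n 2568 .l (.n 1030 .l .l)))))))))))) (.n 1288 (.n 2568 .l (.n
  2096 .l (.n 2240 .l (.n 56 .l (.n 200 .l (.n 560 .l (.n 704 .l (.n 2312 .l (.n 1544 .l (.n 3080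
  .l (.n 518 .l .l))))))))))) (.n 2312 (.n 1544 .l (.n 56 .l (.n 200 .l (.n 560 .l (.n 1072 .l
  (.n 704 .l (.n 1216 .l (.n 2568 .l (.n 3080 .l (.n 518 .l .l)))))))))) (.n 1544 (.n 2096 .l (.n
  2240 .l (.n 56 .l (.n 200 .l (.n 304 .l (.n 448 .l (.n 2568 .l (.n 3080 .l (.n 262 .l
  .l))))))))) (.n 2568 (.n 56 .l (.n 200 .l (.n 1072 .l (.n 1216 .l (.n 304 .l (.n 448 .l (.n
  3080 .l (.n 262 .l .l)))))))) (.n 3080 (.n 56 .l (.n 200 .l (.n 304 .l (.n 560 .l (.n 448 .l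
  (.n 704 .l (.n 262 .l .l))))))) (.n 304 (.n 1792 .l (.n 2816 .l (.n 3328 .l (.n 200 .l (.n 448
  .l (.n 518 .l (.n 1030 .l (.n 2054 .l (.n 560 .l (.n 1072 .l (.n 2096 .l .l))))))))))) (.n 560
  (.n 1792 .l (.n 2816 .l (.n 3584 .l (.n 200 .l (.n 704 .l (.n 262 .l (.n 1030 .l (.n 2054 .l
  (.n 1072 .l (.n 2096 .l .l)))))))))) (.n 1072 (.n 1792 .l (.n 3328 .l (.n 3584 .l (.n 200 .l
  (.n 1216 .l (.n 262 .l (.n 518 .l (.n 2054 .l (.n 2096 .l .l))))))))) (.n 2096 (.n 2816 .l (.n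
  3328 .l (.n 3584 .l (.n 200 .l (.n 2240 .l (.n 262 .l (.n 518 .l (.n 1030 .l .l)))))))) (.n 448
  (.n 1792 .l (.n 2816 .l (.n 3328 .l (.n 56 .l (.n 518 .l (.n 1030 .l (.n 2054 .l .l))))))) (.n
  704 (.n 1792 .l (.n 2816 .l (.n 3584 .l (.n 56 .l (.n 262 .l (.n 1030 .l .l)))))) (.n 1216 (.n
  1792 .l (.n 3328 .l (.n 3584 .l (.n 56 .l (.n 262 .l .l))))) (.n 2240 (.n 2816 .l (.n 3328 .l
  (.n 3584 .l (.n 56 .l .l)))) (.n 1792 (.n 56 .l (.n 200 .l (.n 2054 .l .l))) (.n 2816 (.n 56 .l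
  (.n 200 .l .l)) (.n 3328 (.n 56 .l .l) (.n 3584 .l (.n 56 .l (.n 200 .l (.n 262 (.n 518 .l (.n
  1030 .l (.n 2054 .l .l))) (.n 518 (.n 1030 .l (.n 2054 .l .l)) (.n 1030 (.n 2054 .l .l) (.n
  2054 .l .l))))))))))))))))))))))))

def startB : List ℕ := [49, 193, 14, 50]

def candB : List ℕ :=
  [13, 49, 193, 321, 577, 1089, 2113, 385, 641, 1153, 2177, 769, 1281, 2305, 1537, 2561, 3073,
  14, 262, 518, 1030, 2054, 266, 522, 1034, 2058, 50, 194, 770, 1282, 2306, 1538, 2562, 3074,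
  268, 524, 1036, 2060, 52, 56, 112, 176, 304, 560, 1072, 2096, 448, 704, 1216, 2240, 1792, 2816,
  3328, 3584]

def treeB : BTree :=
  (.n 769 (.n 3074 .l (.n 3073 .l (.n 194 .l (.n 770 .l (.n 1216 .l (.n 2240 .l (.n 1792 .l (.n
  2816 .l (.n 13 .l (.n 1036 .l (.n 2060 .l (.n 1030 .l .l)))))))))))) (.n 1281 (.n 2562 .l (.n
  2561 .l (.n 194 .l (.n 2240 .l (.n 1792 .l (.n 1282 .l (.n 704 .l (.n 3328 .l (.n 13 .l (.n
  2060 .l (.n 2054 .l .l))))))))))) (.n 2305 (.n 1538 .l (.n 1537 .l (.n 194 .l (.n 704 .l (.n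
  1216 .l (.n 2816 .l (.n 3328 .l (.n 2306 .l (.n 13 .l (.n 524 .l .l)))))))))) (.n 1537 (.n 2306
  .l (.n 194 .l (.n 2240 .l (.n 1792 .l (.n 1538 .l (.n 448 .l (.n 3584 .l (.n 13 .l (.n 2060 .l
  .l))))))))) (.n 2561 (.n 1282 .l (.n 194 .l (.n 1216 .l (.n 2816 .l (.n 448 .l (.n 3584 .l (.n
  2562 .l (.n 13 .l .l)))))))) (.n 3073 (.n 770 .l (.n 194 .l (.n 448 .l (.n 704 .l (.n 3328 .l
  (.n 3584 .l (.n 13 .l .l))))))) (.n 1792 (.n 2113 .l (.n 2177 .l (.n 770 .l (.n 1282 .l (.n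
  1538 .l (.n 2054 .l (.n 2058 .l (.n 268 .l (.n 524 .l .l))))))))) (.n 2816 (.n 770 .l (.n 2060
  .l (.n 2240 .l (.n 1089 .l (.n 1153 .l (.n 268 .l (.n 524 .l (.n 13 .l .l)))))))) (.n 3328 (.n
  268 .l (.n 1036 .l (.n 2060 .l (.n 577 .l (.n 641 .l (.n 1282 .l (.n 2306 .l .l))))))) (.n 3584
  (.n 524 .l (.n 1036 .l (.n 2060 .l (.n 704 .l (.n 1216 .l (.n 2240 .l .l)))))) (.n 13 (.n 770
  .l (.n 1282 .l (.n 2306 .l (.n 1538 .l (.n 2562 .l (.n 3074 .l (.n 194 .l (.n 448 .l .l))))))))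
  (.n 194 (.n 268 .l (.n 524 .l (.n 1036 .l (.n 2060 .l (.n 304 .l (.n 560 .l (.n 1072 .l
  .l))))))) (.n 770 (.n 1036 .l (.n 2060 .l (.n 3074 .l (.n 1216 .l (.n 2240 .l (.n 1089 .l
  .l)))))) (.n 1282 (.n 2060 .l (.n 524 .l (.n 2562 .l (.n 2240 .l (.n 2113 .l .l))))) (.n 2306
  (.n 1538 .l (.n 524 .l (.n 1036 .l (.n 704 .l .l)))) (.n 1538 (.n 2060 .l (.n 268 .l (.n 2240
  .l .l))) (.n 2562 (.n 1036 .l (.n 268 .l .l)) (.n 3074 (.n 268 .l .l) (.n 268 (.n 448 .l (.n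
  524 .l (.n 1036 .l (.n 2060 .l .l)))) (.n 524 (.n 704 .l (.n 1036 .l (.n 2060 .l .l))) (.n 1036
  (.n 1216 .l (.n 2060 .l .l)) (.n 2060 (.n 2240 .l .l) (.n 448 .l (.n 704 .l (.n 1216 .l (.n
  2240 .l (.n 321 (.n 641 .l (.n 1153 .l .l)) (.n 577 (.n 385 .l .l) (.n 1089 .l (.n 2113 .l
  .l))))))))))))))))))))))))))))))

theorem checkA : checkT cometL treeA startA candA = true := by decide +kernel

theorem checkB : checkT [] treeB startB candB = true := by decide +kernel

/-- All masks of triples of labels. -/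
def allT : List ℕ :=
  (List.range 12).flatMap fun k => (List.range k).flatMap fun j =>
    (List.range j).map fun i => 2 ^ i + 2 ^ j + 2 ^ k

theorem allT_candA : ∀ m ∈ allT, m ∈ candA ∨ ∃ s ∈ startA, ∃ s' ∈ startA, badB s s' m = true := by
  decide +kernel

theorem allT_candB : ∀ m ∈ allT, m ∈ candB ∨ ∃ s ∈ startB, ∃ s' ∈ startB, badB s s' m = true := by
  decide +kernel

/-! ### Forbidden configurations in terms of intersections -/

theorem getD_injOn {l : List ℕ} (hl : l.Nodup) {i j : ℕ} (hi : i < l.length) (hj : j < l.length)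
    (h : l.getD i 0 = l.getD j 0) : i = j := by
  rw [List.getD_eq_getElem _ _ hi, List.getD_eq_getElem _ _ hj] at h
  exact (List.Nodup.getElem_inj_iff hl).1 h

theorem split_one {e : Finset ℕ} {p : ℕ} (he : e.card = 3) (hp : p ∈ e) :
    ∃ a b, a ≠ b ∧ a ≠ p ∧ b ≠ p ∧ e = {a, b, p} := by
  have h2 : (e.erase p).card = 2 := by rw [Finset.card_erase_of_mem hp, he]
  obtain ⟨a, b, hab, h⟩ := Finset.card_eq_two.1 h2
  have ha : a ∈ e.erase p := by rw [h]; simp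
  have hb : b ∈ e.erase p := by rw [h]; simp
  refine ⟨a, b, hab, (Finset.mem_erase.1 ha).1, (Finset.mem_erase.1 hb).1, ?_⟩
  rw [← Finset.insert_erase hp, h]
  ext x
  simp only [Finset.mem_insert, Finset.mem_singleton]
  tauto

theorem split_two {e : Finset ℕ} {p q : ℕ} (he : e.card = 3) (hp : p ∈ e) (hq : q ∈ e)
    (hpq : p ≠ q) : ∃ a, a ≠ p ∧ a ≠ q ∧ e = {p, a, q} := by
  obtain ⟨a, b, hab, hap, hbp, rfl⟩ := split_one he hp
  simp only [Finset.mem_insert, Finset.mem_singleton] at hq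
  rcases hq with rfl | rfl | rfl
  · refine ⟨b, hbp, hab.symm, ?_⟩
    ext x; simp only [Finset.mem_insert, Finset.mem_singleton]; tauto
  · refine ⟨a, hap, hab, ?_⟩
    ext x; simp only [Finset.mem_insert, Finset.mem_singleton]; tauto
  · exact absurd rfl hpq

theorem noP {H : ThreeGraph} (hval : H.IsValid) (hP : H.Free pathP) {e f g : Finset ℕ}
    (he : e ∈ H.edges) (hf : f ∈ H.edges) (hg : g ∈ H.edges) {p q : ℕ}
    (h1 : e ∩ f = {p}) (h2 : f ∩ g = {q}) (h3 : e ∩ g = ∅) : False := by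
  have k1 : ∀ x, x ∈ e → x ∈ f → x = p := fun x hx hy => by
    have : x ∈ e ∩ f := Finset.mem_inter.2 ⟨hx, hy⟩
    rw [h1] at this; simpa using this
  have k2 : ∀ x, x ∈ f → x ∈ g → x = q := fun x hx hy => by
    have : x ∈ f ∩ g := Finset.mem_inter.2 ⟨hx, hy⟩
    rw [h2] at this; simpa using this
  have k3 : ∀ x, x ∈ e → x ∈ g → False := fun x hx hy => by
    have : x ∈ e ∩ g := Finset.mem_inter.2 ⟨hx, hy⟩
    rw [h3] at this; simp at this
  have hp : p ∈ e ∩ f := by rw [h1]; simp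
  have hq : q ∈ f ∩ g := by rw [h2]; simp
  rw [Finset.mem_inter] at hp hq
  have hpq : p ≠ q := by rintro rfl; exact k3 _ hp.1 hq.2
  have ve := (hval e he).2
  have vf := (hval f hf).2
  have vg := (hval g hg).2
  obtain ⟨a, b, hab, hap, hbp, rfl⟩ := split_one (hval e he).1 hp.1
  obtain ⟨d, hdp, hdq, rfl⟩ := split_two (hval f hf).1 hp.2 hq.1 hpq
  obtain ⟨x, y, hxy, hxq, hyq, rfl⟩ := split_one (hval g hg).1 hq.2
  simp only [Finset.mem_insert, Finset.mem_singleton] at k1 k2 k3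
  have hnd : [a, b, p, d, q, x, y].Nodup := by
    simp only [List.nodup_cons, List.mem_cons, List.not_mem_nil, or_false, not_or,
      not_false_eq_true, List.nodup_nil, and_true]
    grind
  apply hP
  refine ⟨fun i => [a, b, p, d, q, x, y].getD i 0, ?_, ?_, ?_⟩
  · intro i hi j hj h
    refine getD_injOn hnd ?_ ?_ h
    · simp [pathP] at hi ⊢; omega
    · simp [pathP] at hj ⊢; omega
  · intro i hi
    simp only [pathP, Finset.mem_insert, Finset.mem_singleton] at hi
    rcases hi with rfl | rfl | rfl | rfl | rfl | rfl | rfl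
    · exact ve (by simp)
    · exact ve (by simp)
    · exact ve (by simp)
    · exact vf (by simp)
    · exact vf (by simp)
    · exact vg (by simp)
    · exact vg (by simp)
  · intro s hs
    simp only [pathP, Finset.mem_insert, Finset.mem_singleton] at hs
    rcases hs with rfl | rfl | rfl
    · simpa using he
    · simpa using hf
    · have : ({x, y, q} : Finset ℕ) = {q, x, y} := by
        ext z; simp only [Finset.mem_insert, Finset.mem_singleton]; tauto
      rw [this] at hg
      simpa using hg

theorem noC {H : ThreeGraph} (hval : H.IsValid) (hC : H.Free triangleC) {e f g : Finset ℕ}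
    (he : e ∈ H.edges) (hf : f ∈ H.edges) (hg : g ∈ H.edges) {p q r : ℕ}
    (h1 : e ∩ f = {p}) (h2 : f ∩ g = {q}) (h3 : e ∩ g = {r}) (h4 : e ∩ f ∩ g = ∅) : False := by
  have k1 : ∀ x, x ∈ e → x ∈ f → x = p := fun x hx hy => by
    have : x ∈ e ∩ f := Finset.mem_inter.2 ⟨hx, hy⟩
    rw [h1] at this; simpa using this
  have k2 : ∀ x, x ∈ f → x ∈ g → x = q := fun x hx hy => by
    have : x ∈ f ∩ g := Finset.mem_inter.2 ⟨hx, hy⟩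
    rw [h2] at this; simpa using this
  have k3 : ∀ x, x ∈ e → x ∈ g → x = r := fun x hx hy => by
    have : x ∈ e ∩ g := Finset.mem_inter.2 ⟨hx, hy⟩
    rw [h3] at this; simpa using this
  have k4 : ∀ x, x ∈ e → x ∈ f → x ∈ g → False := fun x hx hy hz => by
    have : x ∈ e ∩ f ∩ g := Finset.mem_inter.2 ⟨Finset.mem_inter.2 ⟨hx, hy⟩, hz⟩
    rw [h4] at this; simp at this
  have hp : p ∈ e ∩ f := by rw [h1]; simp
  have hq : q ∈ f ∩ g := by rw [h2]; simp
  have hr : r ∈ e ∩ g := by rw [h3]; simp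
  rw [Finset.mem_inter] at hp hq hr
  have hpq : p ≠ q := by rintro rfl; exact k4 _ hp.1 hp.2 hq.2
  have hrp : r ≠ p := by rintro rfl; exact k4 _ hp.1 hp.2 hr.2
  have hqr : q ≠ r := by rintro rfl; exact k4 _ hr.1 hq.1 hr.2
  have ve := (hval e he).2
  have vf := (hval f hf).2
  have vg := (hval g hg).2
  obtain ⟨a, har, hap, rfl⟩ := split_two (hval e he).1 hr.1 hp.1 hrp
  obtain ⟨b, hbp, hbq, rfl⟩ := split_two (hval f hf).1 hp.2 hq.1 hpq
  obtain ⟨c, hcq, hcr, rfl⟩ := split_two (hval g hg).1 hq.2 hr.2 hqr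
  simp only [Finset.mem_insert, Finset.mem_singleton] at k1 k2 k3
  have hnd : [r, a, p, b, q, c].Nodup := by
    simp only [List.nodup_cons, List.mem_cons, List.not_mem_nil, or_false, not_or,
      not_false_eq_true, List.nodup_nil, and_true]
    grind
  apply hC
  refine ⟨fun i => [r, a, p, b, q, c].getD i 0, ?_, ?_, ?_⟩
  · intro i hi j hj h
    refine getD_injOn hnd ?_ ?_ h
    · simp [triangleC] at hi ⊢; omega
    · simp [triangleC] at hj ⊢; omega
  · intro i hi
    simp only [triangleC, Finset.mem_insert, Finset.mem_singleton] at hi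
    rcases hi with rfl | rfl | rfl | rfl | rfl | rfl
    · exact ve (by simp)
    · exact ve (by simp)
    · exact ve (by simp)
    · exact vf (by simp)
    · exact vf (by simp)
    · exact vg (by simp)
  · intro s hs
    simp only [triangleC, Finset.mem_insert, Finset.mem_singleton] at hs
    rcases hs with rfl | rfl | rfl
    · simpa using he
    · simpa using hf
    · simpa using hg

/-! ### Decoding masks -/

def bits (m : ℕ) : Finset ℕ := (Finset.range 12).filter (fun i => m.testBit i = true)

def decode (v : ℕ → ℕ) (m : ℕ) : Finset ℕ := (bits m).image v

theorem bits_land (a b : ℕ) : bits (Nat.land a b) = bits a ∩ bits b := by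
  ext i
  have : (Nat.land a b).testBit i = (a.testBit i && b.testBit i) := Nat.testBit_and a b i
  simp only [bits, Finset.mem_filter, Finset.mem_inter, this, Bool.and_eq_true]
  tauto

theorem bits_zero : bits 0 = ∅ := by decide

theorem bits_one {x : ℕ} (h : oneB x = true) : ∃ i, bits x = {i} := by
  have h0 : 2048 % x = 0 := Nat.eq_of_beq_eq_true h
  have h1 : x ∣ 2 ^ 11 := Nat.dvd_of_mod_eq_zero h0
  obtain ⟨k, hk, rfl⟩ := (Nat.dvd_prime_pow Nat.prime_two).1 h1
  refine ⟨k, ?_⟩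
  ext i
  simp only [bits, Finset.mem_filter, Finset.mem_range, Nat.testBit_two_pow, Finset.mem_singleton,
    decide_eq_true_eq]
  omega

theorem bits_subset (m : ℕ) : bits m ⊆ Finset.range 12 := Finset.filter_subset _ _

theorem decode_inter {v : ℕ → ℕ} (hv : Set.InjOn v (Finset.range 12 : Finset ℕ)) (a b : ℕ) :
    decode v a ∩ decode v b = decode v (Nat.land a b) := by
  unfold decode
  rw [bits_land, Finset.image_inter_of_injOn]
  refine hv.mono ?_
  rw [← Finset.coe_union]
  exact_mod_cast Finset.union_subset (bits_subset a) (bits_subset b)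

theorem decode_one {v : ℕ → ℕ} {x : ℕ} (h : oneB x = true) : ∃ i, decode v x = {i} := by
  obtain ⟨i, hi⟩ := bits_one h
  exact ⟨v i, by simp [decode, hi]⟩

theorem decode_zero {v : ℕ → ℕ} {x : ℕ} (h : Nat.beq x 0 = true) : decode v x = ∅ := by
  rw [Nat.eq_of_beq_eq_true h]
  simp [decode, bits_zero]

theorem not_path {H : ThreeGraph} (hval : H.IsValid) (hP : H.Free pathP) {v : ℕ → ℕ}
    (hv : Set.InjOn v (Finset.range 12 : Finset ℕ)) {e f g : ℕ} (he : decode v e ∈ H.edges)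
    (hf : decode v f ∈ H.edges) (hg : decode v g ∈ H.edges) : pathB e f g = false := by
  by_contra hb
  simp only [pathB, Bool.not_eq_false, Bool.and_eq_true] at hb
  obtain ⟨h1, h2, h3⟩ := hb
  obtain ⟨p, hp⟩ := decode_one (v := v) h1
  obtain ⟨q, hq⟩ := decode_one (v := v) h2
  have hr := decode_zero (v := v) h3
  rw [← decode_inter hv] at hp hq hr
  exact noP hval hP he hf hg hp hq hr

theorem not_tri {H : ThreeGraph} (hval : H.IsValid) (hC : H.Free triangleC) {v : ℕ → ℕ}
    (hv : Set.InjOn v (Finset.range 12 : Finset ℕ)) {e f g : ℕ} (he : decode v e ∈ H.edges)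
    (hf : decode v f ∈ H.edges) (hg : decode v g ∈ H.edges) : triB e f g = false := by
  by_contra hb
  simp only [triB, Bool.not_eq_false, Bool.and_eq_true] at hb
  obtain ⟨h1, h2, h3, h4⟩ := hb
  obtain ⟨p, hp⟩ := decode_one (v := v) h1
  obtain ⟨q, hq⟩ := decode_one (v := v) h2
  obtain ⟨r, hr⟩ := decode_one (v := v) h3
  have hs := decode_zero (v := v) h4
  rw [← decode_inter hv] at hp hq hr hs
  rw [← decode_inter hv] at hs
  exact noC hval hC he hf hg hp hq hr hs

theorem not_bad {H : ThreeGraph} (hval : H.IsValid) (hP : H.Free pathP) (hC : H.Free triangleC)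
    {v : ℕ → ℕ} (hv : Set.InjOn v (Finset.range 12 : Finset ℕ)) {e f g : ℕ}
    (he : decode v e ∈ H.edges) (hf : decode v f ∈ H.edges) (hg : decode v g ∈ H.edges) :
    badB e f g = false := by
  simp only [badB, Bool.or_eq_false_iff]
  exact ⟨not_path hval hP hv he hf hg, not_path hval hP hv hf he hg,
    not_path hval hP hv he hg hf, not_tri hval hC hv he hf hg⟩

theorem bits_allT : ∀ k < 12, ∀ j < k, ∀ i < j,
    2 ^ i + 2 ^ j + 2 ^ k ∈ allT ∧ bits (2 ^ i + 2 ^ j + 2 ^ k) = {i, j, k} := by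
  decide +kernel

/-- Every 3-subset of `0..11` has a mask. -/
theorem exists_mask {s : Finset ℕ} (hs : s ⊆ Finset.range 12) (hc : s.card = 3) :
    ∃ m ∈ allT, bits m = s := by
  obtain ⟨a, b, c, hab, hac, hbc, rfl⟩ := Finset.card_eq_three.1 hc
  have ha : a < 12 := Finset.mem_range.1 (hs (by simp))
  have hb : b < 12 := Finset.mem_range.1 (hs (by simp))
  have hc' : c < 12 := Finset.mem_range.1 (hs (by simp))
  have key : ∀ k < 12, ∀ j < k, ∀ i < j, ({i, j, k} : Finset ℕ) = {a, b, c} →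
      ∃ m ∈ allT, bits m = {a, b, c} := fun k hk j hj i hi h =>
    ⟨_, (bits_allT k hk j hj i hi).1, h ▸ (bits_allT k hk j hj i hi).2⟩
  have perm : ∀ {i j k : ℕ}, (∀ x, (x = i ∨ x = j ∨ x = k) ↔ (x = a ∨ x = b ∨ x = c)) →
      ({i, j, k} : Finset ℕ) = {a, b, c} := fun h => by
    ext x; simpa only [Finset.mem_insert, Finset.mem_singleton] using h x
  rcases lt_or_gt_of_ne hab with h1 | h1 <;> rcases lt_or_gt_of_ne hac with h2 | h2 <;>
    rcases lt_or_gt_of_ne hbc with h3 | h3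
  · exact key c hc' b h3 a h1 (perm fun x => by tauto)
  · exact key b hb c h3 a h2 (perm fun x => by tauto)
  · omega
  · exact key b hb a h1 c h2 (perm fun x => by tauto)
  · exact key c hc' a h2 b h1 (perm fun x => by tauto)
  · omega
  · exact key a ha c h2 b h3 (perm fun x => by tauto)
  · exact key a ha b h1 c h3 (perm fun x => by tauto)

theorem edge_mask {H : ThreeGraph} (hval : H.IsValid) {v : ℕ → ℕ}
    (hv : Set.InjOn v (Finset.range 12 : Finset ℕ)) (hv' : (Finset.range 12).image v = H.verts)
    {e : Finset ℕ} (he : e ∈ H.edges) : ∃ m ∈ allT, decode v m = e := by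
  obtain ⟨hc, hs⟩ := hval e he
  rw [← hv'] at hs
  obtain ⟨s, hs1, rfl⟩ := Finset.subset_image_iff.1 hs
  have hs2 : s ⊆ Finset.range 12 := by exact_mod_cast hs1
  rw [Finset.card_image_of_injOn (hv.mono (by exact_mod_cast hs2))] at hc
  obtain ⟨m, hm, rfl⟩ := exists_mask hs2 hc
  exact ⟨m, hm, rfl⟩

theorem search_bound {H : ThreeGraph} (hval : H.IsValid) (hP : H.Free pathP)
    (hC : H.Free triangleC) {v : ℕ → ℕ}
    (hv : Set.InjOn v (Finset.range 12 : Finset ℕ)) (hv' : (Finset.range 12).image v = H.verts)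
    (c : List ℕ) (t : BTree) (S A : List ℕ) (hS : ∀ s ∈ S, decode v s ∈ H.edges)
    (hST : ∀ s ∈ S, s ∈ allT)
    (hA : ∀ m ∈ allT, m ∈ A ∨ ∃ s ∈ S, ∃ s' ∈ S, badB s s' m = true)
    (hck : checkT c t S A = true) :
    H.edges.card < 25 ∨ ∀ e ∈ H.edges, ∃ m ∈ c, decode v m = e := by
  rcases checkT_sound (fun m => m ∈ allT ∧ decode v m ∈ H.edges)
    (fun a b c ha hb hc => not_bad hval hP hC hv ha.2 hb.2 hc.2) c t
    S A (fun s hs => ⟨hST s hs, hS s hs⟩) (by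
      rintro m ⟨hm, hme⟩
      rcases hA m hm with h | ⟨s, hs, s', hs', hb⟩
      · exact h
      · rw [not_bad hval hP hC hv (hS s hs) (hS s' hs') hme] at hb
        exact absurd hb (by simp)) hck with ⟨A', hlen, hA'⟩ | h
  · left
    have hsub : H.edges ⊆ A'.toFinset.image (decode v) := by
      intro e he
      obtain ⟨m, hm, rfl⟩ := edge_mask hval hv hv' he
      exact Finset.mem_image_of_mem _ (List.mem_toFinset.2 (hA' m ⟨hm, he⟩))
    have h1 := Finset.card_le_card hsub
    have h2 := Finset.card_image_le (s := A'.toFinset) (f := decode v)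
    have h3 := List.toFinset_card_le A'
    omega
  · right
    intro e he
    obtain ⟨m, hm, rfl⟩ := edge_mask hval hv hv' he
    exact ⟨m, h m ⟨hm, he⟩, rfl⟩

theorem cometL_edges : ∀ m ∈ cometL, bits m ∈ (comet 12).edges := by
  decide +kernel

theorem bits_start : bits 49 = {0, 4, 5} ∧ bits 193 = {0, 6, 7} ∧ bits 14 = {1, 2, 3} ∧
    bits 7 = {0, 1, 2} ∧ bits 50 = {1, 4, 5} ∧ bits 11 = {0, 1, 3} ∧ bits 194 = {1, 6, 7} := by
  decide +kernel

theorem startA_mem : ∀ s ∈ startA, s ∈ allT := by decide +kernel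

theorem startB_mem : ∀ s ∈ startB, s ∈ allT := by decide +kernel

theorem core {H : ThreeGraph} (hval : H.IsValid) (hP : H.Free pathP) (hC : H.Free triangleC)
    (hCo : ¬ (comet 12).ContainsCopy H) {v : ℕ → ℕ}
    (hv : Set.InjOn v (Finset.range 12 : Finset ℕ)) (hv' : (Finset.range 12).image v = H.verts)
    (h1 : ({v 0, v 4, v 5} : Finset ℕ) ∈ H.edges) (h2 : ({v 0, v 6, v 7} : Finset ℕ) ∈ H.edges)
    (h3 : ({v 1, v 2, v 3} : Finset ℕ) ∈ H.edges)
    (h4 : ({v 0, v 1, v 2} : Finset ℕ) ∈ H.edges ∨ ({v 1, v 4, v 5} : Finset ℕ) ∈ H.edges) :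
    H.edges.card < 25 := by
  obtain ⟨b1, b2, b3, b4, b5, -, -⟩ := bits_start
  rcases h4 with h4 | h4
  · rcases search_bound hval hP hC hv hv' cometL treeA startA candA
      (by simpa [startA, decode, b1, b2, b3, b4] using ⟨h1, h2, h3, h4⟩)
      startA_mem allT_candA checkA with h | h
    · exact h
    · exfalso
      apply hCo
      have hinv : ∀ i ∈ Finset.range 12, Function.invFunOn v (Finset.range 12 : Finset ℕ) (v i) = i :=
        fun i hi => hv.leftInvOn_invFunOn (by exact_mod_cast hi)
      refine ⟨Function.invFunOn v (Finset.range 12 : Finset ℕ), ?_, ?_, ?_⟩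
      · intro x hx y hy hxy
        rw [← hv'] at hx hy
        obtain ⟨i, hi, rfl⟩ := Finset.mem_image.1 (Finset.mem_coe.1 hx)
        obtain ⟨j, hj, rfl⟩ := Finset.mem_image.1 (Finset.mem_coe.1 hy)
        rw [hinv i hi, hinv j hj] at hxy
        rw [hxy]
      · intro x hx
        rw [← hv'] at hx
        obtain ⟨i, hi, rfl⟩ := Finset.mem_image.1 hx
        rw [hinv i hi]
        exact hi
      · intro e he
        obtain ⟨m, hm, rfl⟩ := h e he
        have : (decode v m).image (Function.invFunOn v (Finset.range 12 : Finset ℕ)) = bits m := by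
          unfold decode
          rw [Finset.image_image]
          conv_rhs => rw [← Finset.image_id (s := bits m)]
          exact Finset.image_congr fun i hi => hinv i (bits_subset m hi)
        rw [this]
        exact cometL_edges m hm
  · rcases search_bound hval hP hC hv hv' [] treeB startB candB
      (by simpa [startB, decode, b1, b2, b3, b5] using ⟨h1, h2, h3, h4⟩)
      startB_mem allT_candB checkB with h | h
    · exact h
    · obtain ⟨m, hm, -⟩ := h _ h1
      simp at hm

theorem pre_masks : ∀ m ∈ allT, m.testBit 1 = true →
    (m.testBit 0 = true ∨ m.testBit 4 = true ∨ m.testBit 5 = true ∨ m.testBit 6 = true ∨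
      m.testBit 7 = true) →
    (m = 7 ∨ m = 11 ∨ m = 50 ∨ m = 194) ∨
      ∃ s ∈ [49, 193, 14], ∃ s' ∈ [49, 193, 14], badB s s' m = true := by
  decide +kernel

theorem perm_range {v : ℕ → ℕ} (σ : Equiv.Perm ℕ)
    (hσ : ∀ i ∈ Finset.range 12, σ i ∈ Finset.range 12)
    (hv : Set.InjOn v (Finset.range 12 : Finset ℕ)) :
    Set.InjOn (v ∘ σ) (Finset.range 12 : Finset ℕ) ∧
      (Finset.range 12).image (v ∘ σ) = (Finset.range 12).image v := by
  constructor
  · intro i hi j hj h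
    exact σ.injective (hv (by exact_mod_cast hσ i (by exact_mod_cast hi))
      (by exact_mod_cast hσ j (by exact_mod_cast hj)) h)
  · have himg : (Finset.range 12).image σ = Finset.range 12 := by
      refine Finset.eq_of_subset_of_card_le ?_ ?_
      · intro x hx
        obtain ⟨i, hi, rfl⟩ := Finset.mem_image.1 hx
        exact hσ i hi
      · rw [Finset.card_image_of_injective _ σ.injective]
    rw [← Finset.image_image, himg]

theorem core2 {H : ThreeGraph} (hval : H.IsValid) (hP : H.Free pathP) (hC : H.Free triangleC)
    (hCo : ¬ (comet 12).ContainsCopy H) {v : ℕ → ℕ}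
    (hv : Set.InjOn v (Finset.range 12 : Finset ℕ)) (hv' : (Finset.range 12).image v = H.verts)
    (h1 : ({v 0, v 4, v 5} : Finset ℕ) ∈ H.edges) (h2 : ({v 0, v 6, v 7} : Finset ℕ) ∈ H.edges)
    (h3 : ({v 1, v 2, v 3} : Finset ℕ) ∈ H.edges) {e : Finset ℕ} (he : e ∈ H.edges)
    (he1 : v 1 ∈ e) (he2 : v 0 ∈ e ∨ v 4 ∈ e ∨ v 5 ∈ e ∨ v 6 ∈ e ∨ v 7 ∈ e) :
    H.edges.card < 25 := by
  obtain ⟨b1, b2, b3, b4, b5, b6, b7⟩ := bits_start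
  obtain ⟨m, hm, rfl⟩ := edge_mask hval hv hv' he
  have hmem : ∀ i < 12, v i ∈ decode v m → m.testBit i = true := by
    intro i hi h
    obtain ⟨j, hj, hji⟩ := Finset.mem_image.1 h
    have : j = i := hv (by exact_mod_cast bits_subset m hj) (by simpa using hi) hji
    subst this
    exact (Finset.mem_filter.1 hj).2
  have hS : ∀ s ∈ [49, 193, 14], decode v s ∈ H.edges := by
    simpa [decode, b1, b2, b3] using ⟨h1, h2, h3⟩
  have hd : m = 7 ∨ m = 11 ∨ m = 50 ∨ m = 194 := by
    rcases pre_masks m hm (hmem 1 (by norm_num) he1)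
      (he2.imp (hmem 0 (by norm_num)) (Or.imp (hmem 4 (by norm_num)) (Or.imp (hmem 5 (by norm_num))
        (Or.imp (hmem 6 (by norm_num)) (hmem 7 (by norm_num)))))) with h | ⟨s, hs, s', hs', hb⟩
    · exact h
    · rw [not_bad hval hP hC hv (hS s hs) (hS s' hs') he] at hb
      exact absurd hb (by simp)
  rcases hd with rfl | rfl | rfl | rfl
  · exact core hval hP hC hCo hv hv' h1 h2 h3 (Or.inl (by simpa [decode, b4] using he))
  · obtain ⟨q1, q2⟩ := perm_range (v := v) (Equiv.swap 2 3) (by decide +kernel) hv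
    refine core hval hP hC hCo q1 (q2.trans hv') ?_ ?_ ?_ (Or.inl ?_)
    · simpa [Equiv.swap_apply_def] using h1
    · simpa [Equiv.swap_apply_def] using h2
    · simpa [Equiv.swap_apply_def, Finset.pair_comm] using h3
    · simpa [Equiv.swap_apply_def, decode, b6] using he
  · exact core hval hP hC hCo hv hv' h1 h2 h3 (Or.inr (by simpa [decode, b5] using he))
  · obtain ⟨q1, q2⟩ := perm_range (v := v) (Equiv.swap 4 6 * Equiv.swap 5 7)
      (by decide +kernel) hv
    refine core hval hP hC hCo q1 (q2.trans hv') ?_ ?_ ?_ (Or.inr ?_)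
    · simpa [Equiv.swap_apply_def] using h2
    · simpa [Equiv.swap_apply_def] using h1
    · simpa [Equiv.swap_apply_def] using h3
    · simpa [Equiv.swap_apply_def, decode, b7] using he

/-- Fact for `n = 12`: in the Setup, if `H₁ ≠ ∅` and `H` is not contained in the
comet `Co(12)`, then `|H| < 25`. -/
theorem fact_n_twelve (n : ℕ) (hn : n = 12) (H : ThreeGraph)
    (u0 u1 u2 u3 u4 : ℕ) (t : Finset ℕ)
    (hval : H.IsValid) (hcard : H.verts.card = n) (hconn : H.Connected)
    (hP : H.Free pathP) (hC : H.Free triangleC)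
    (hdist : List.Pairwise (· ≠ ·) [u0, u1, u2, u3, u4])
    (he1 : ({u0, u1, u2} : Finset ℕ) ∈ H.edges)
    (he2 : ({u2, u3, u4} : Finset ℕ) ∈ H.edges)
    (ht : t ∈ H.edges) (htdisj : Disjoint t ({u0, u1, u2, u3, u4} : Finset ℕ))
    (hH1 : (H1set H {u0, u1, u2, u3, u4}).Nonempty)
    (hCo : ¬ (comet 12).ContainsCopy H) :
    H.edges.card < 25 := by
  subst hn
  obtain ⟨e, he⟩ := hH1
  simp only [H1set, Finset.mem_filter] at he
  obtain ⟨heE, ⟨u, hu⟩, ⟨w, hw⟩⟩ := he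
  rw [Finset.mem_inter] at hu hw
  have hw1 := hw.2
  simp only [W1set, W0set, Finset.mem_sdiff, Finset.mem_filter, not_and, not_forall] at hw1
  obtain ⟨hwW, hw2⟩ := hw1
  obtain ⟨f, hfE, hfW, hwf⟩ := hw2 hwW
  rw [not_not] at hwf
  have vf := hval f hfE
  obtain ⟨a, b, hab, haw, hbw, rfl⟩ := split_one vf.1 hwf
  have hW : ∀ x ∈ ({a, b, w} : Finset ℕ), x ∈ H.verts ∧
      x ∉ ({u0, u1, u2, u3, u4} : Finset ℕ) := fun x hx => Finset.mem_sdiff.1 (hfW hx)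
  have ha := hW a (by simp)
  have hb := hW b (by simp)
  have hww := hW w (by simp)
  have v1 := (hval _ he1).2
  have v2 := (hval _ he2).2
  have hnd : [u2, w, a, b, u0, u1, u3, u4].Nodup := by
    simp only [List.pairwise_cons, List.mem_cons, List.not_mem_nil, or_false] at hdist
    simp only [Finset.mem_insert, Finset.mem_singleton] at ha hb hww
    simp only [List.nodup_cons, List.mem_cons, List.not_mem_nil, or_false, not_or,
      not_false_eq_true, List.nodup_nil, and_true]
    grind
  have hsub : [u2, w, a, b, u0, u1, u3, u4].toFinset ⊆ H.verts := by
    intro x hx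
    simp only [List.mem_toFinset, List.mem_cons, List.not_mem_nil, or_false] at hx
    rcases hx with rfl | rfl | rfl | rfl | rfl | rfl | rfl | rfl
    · exact v1 (by simp)
    · exact hww.1
    · exact ha.1
    · exact hb.1
    · exact v1 (by simp)
    · exact v1 (by simp)
    · exact v2 (by simp)
    · exact v2 (by simp)
  set R := (H.verts \ [u2, w, a, b, u0, u1, u3, u4].toFinset).toList with hR
  have hRlen : R.length = 4 := by
    rw [hR, Finset.length_toList, Finset.card_sdiff_of_subset hsub, hcard,
      List.toFinset_card_of_nodup hnd]
    rfl
  set l := [u2, w, a, b, u0, u1, u3, u4] ++ R with hl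
  have hlnd : l.Nodup := by
    rw [hl, List.nodup_append]
    refine ⟨hnd, Finset.nodup_toList _, ?_⟩
    intro x hx y hy hxy
    subst hxy
    rw [hR, Finset.mem_toList, Finset.mem_sdiff, List.mem_toFinset] at hy
    exact hy.2 hx
  have hllen : l.length = 12 := by
    rw [hl, List.length_append, hRlen]
    rfl
  have hv : Set.InjOn (fun i => l.getD i 0) (Finset.range 12 : Finset ℕ) := by
    intro i hi j hj h
    refine getD_injOn hlnd ?_ ?_ h
    · rw [hllen]; simpa using hi
    · rw [hllen]; simpa using hj
  have hv' : (Finset.range 12).image (fun i => l.getD i 0) = H.verts := by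
    refine Finset.eq_of_subset_of_card_le ?_ ?_
    · intro x hx
      obtain ⟨i, hi, rfl⟩ := Finset.mem_image.1 hx
      have hi' : i < l.length := by rw [hllen]; simpa using hi
      have hmem : l.getD i 0 ∈ l := by
        rw [List.getD_eq_getElem _ _ hi']
        exact List.getElem_mem hi'
      rw [hl, List.mem_append] at hmem
      rcases hmem with h | h
      · exact hsub (List.mem_toFinset.2 h)
      · rw [hR, Finset.mem_toList, Finset.mem_sdiff] at h
        exact h.1
    · rw [Finset.card_image_of_injOn hv, hcard]
      simp
  refine core2 hval hP hC hCo hv hv' ?_ ?_ ?_ heE ?_ ?_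
  · have : ({u0, u1, u2} : Finset ℕ) = {u2, u0, u1} := by
      ext z; simp only [Finset.mem_insert, Finset.mem_singleton]; tauto
    rw [this] at he1
    simpa [hl] using he1
  · simpa [hl] using he2
  · have : ({a, b, w} : Finset ℕ) = {w, a, b} := by
      ext z; simp only [Finset.mem_insert, Finset.mem_singleton]; tauto
    rw [this] at hfE
    simpa [hl] using hfE
  · simpa [hl] using hw.1
  · have hu2 := hu.2
    have hu1 := hu.1
    simp only [Finset.mem_insert, Finset.mem_singleton] at hu2
    rcases hu2 with rfl | rfl | rfl | rfl | rfl <;> simp [hl, hu1]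
end

section
/- Let n ≥ 12 and let H be as in the Setup (a connected {P,C}-free 3-graph on n vertices containing a copy of P_2 ∪ K_3, with U, W_0, W_1 and H_1 defined from a fixed such copy). If |W_1| ≥ 5 and H_1 ≠ ∅, then |H| < binom(n−6, 2) + 10. -/
theorem ch_add (p q : ℕ) : (p + q).choose 2 = p.choose 2 + q.choose 2 + p * q := by
  induction q with
  | zero => simp
  | succ q ih =>
    have h1 := Nat.choose_succ_succ (p + q) 1
    have h2 := Nat.choose_succ_succ q 1
    simp only [Nat.choose_one_right, Nat.succ_eq_add_one] at h1 h2
    norm_num at h1 h2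
    rw [← add_assoc, h1, h2, ih]
    ring

/-- no triangle -/
def NoC (E : Finset (Finset ℕ)) : Prop :=
  ∀ a b c a' b' c' : ℕ, a ≠ b → b ≠ c → a ≠ c → a' ≠ b' → b' ≠ c' → a' ≠ c' →
    a' ∉ ({a, b, c} : Finset ℕ) → b' ∉ ({a, b, c} : Finset ℕ) → c' ∉ ({a, b, c} : Finset ℕ) →
    ({b, c, a'} : Finset ℕ) ∈ E → ({a, c, b'} : Finset ℕ) ∈ E → ({a, b, c'} : Finset ℕ) ∈ E → False

/-- no loose path -/
def NoP (E : Finset (Finset ℕ)) : Prop :=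
  ∀ e ∈ E, ∀ f ∈ E, ∀ g ∈ E, (e ∩ f).card = 1 → (f ∩ g).card = 1 → Disjoint e g → False

theorem no_sdr (A B C : Finset ℕ) (h : ∀ a ∈ A, ∀ b ∈ B, ∀ c ∈ C, a ≠ b → b ≠ c → a ≠ c → False)
    (hA : 3 ≤ A.card) (hB : B.Nonempty) (hC : C.Nonempty) : B.card = 1 ∧ C.card = 1 := by
  have key : ∀ b ∈ B, ∀ c ∈ C, b ≠ c → False := by
    intro b hb c hc hbc
    have : 0 < (A \ {b, c}).card := by
      have h1 := Finset.le_card_sdiff {b, c} A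
      have h2 : ({b, c} : Finset ℕ).card ≤ 2 := Finset.card_le_two
      omega
    obtain ⟨a, ha⟩ := Finset.card_pos.1 this
    simp at ha
    exact h a ha.1 b hb c hc ha.2.1 hbc ha.2.2
  obtain ⟨b, hb⟩ := hB
  obtain ⟨c, hc⟩ := hC
  constructor
  · rw [Finset.card_eq_one]
    refine ⟨c, ?_⟩
    ext y
    have := key y
    grind
  · rw [Finset.card_eq_one]
    refine ⟨b, ?_⟩
    ext y
    have := key
    grind

theorem weight3 (A B C : Finset ℕ)
    (h : ∀ a ∈ A, ∀ b ∈ B, ∀ c ∈ C, a ≠ b → b ≠ c → a ≠ c → False) :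
    (1 : ℚ) ≤ 1 / (A.card + 1) + 1 / (B.card + 1) + 1 / (C.card + 1) := by
  have pA : (0 : ℚ) ≤ 1 / (A.card + 1) := by positivity
  have pB : (0 : ℚ) ≤ 1 / (B.card + 1) := by positivity
  have pC : (0 : ℚ) ≤ 1 / (C.card + 1) := by positivity
  rcases A.eq_empty_or_nonempty with rfl | hA
  · have e0 : (1 : ℚ) / (((∅ : Finset ℕ).card : ℚ) + 1) = 1 := by simp
    linarith
  rcases B.eq_empty_or_nonempty with rfl | hB
  · have e0 : (1 : ℚ) / (((∅ : Finset ℕ).card : ℚ) + 1) = 1 := by simp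
    linarith
  rcases C.eq_empty_or_nonempty with rfl | hC
  · have e0 : (1 : ℚ) / (((∅ : Finset ℕ).card : ℚ) + 1) = 1 := by simp
    linarith
  by_cases h1 : 3 ≤ A.card
  · obtain ⟨h2, h3⟩ := no_sdr A B C h h1 hB hC
    have e0 : (1 : ℚ) / ((B.card : ℚ) + 1) = 1 / 2 := by rw [h2]; norm_num
    have e1 : (1 : ℚ) / ((C.card : ℚ) + 1) = 1 / 2 := by rw [h3]; norm_num
    linarith
  by_cases h2 : 3 ≤ B.card
  · obtain ⟨h2, h3⟩ := no_sdr B A C (fun a ha b hb c hc x y z => h b hb a ha c hc x.symm z y) h2 hA hC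
    have e0 : (1 : ℚ) / ((A.card : ℚ) + 1) = 1 / 2 := by rw [h2]; norm_num
    have e1 : (1 : ℚ) / ((C.card : ℚ) + 1) = 1 / 2 := by rw [h3]; norm_num
    linarith
  by_cases h3 : 3 ≤ C.card
  · obtain ⟨h2, h3⟩ := no_sdr C A B
      (fun a ha b hb c hc x y z => h b hb c hc a ha y z.symm x.symm) h3 hA hB
    have e0 : (1 : ℚ) / ((A.card : ℚ) + 1) = 1 / 2 := by rw [h2]; norm_num
    have e1 : (1 : ℚ) / ((B.card : ℚ) + 1) = 1 / 2 := by rw [h3]; norm_num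
    linarith
  have t : ∀ D : Finset ℕ, ¬ 3 ≤ D.card → (1 : ℚ) / 3 ≤ 1 / (D.card + 1) := by
    intro D hD
    apply one_div_le_one_div_of_le (by positivity)
    have : D.card ≤ 2 := by omega
    have : (D.card : ℚ) ≤ 2 := by exact_mod_cast this
    linarith
  have := t A h1
  have := t B h2
  have := t C h3
  linarith

theorem codeg (G : Finset (Finset ℕ)) (hG : ∀ e ∈ G, e.card = 3) (a b c : ℕ)
    (hab : a ≠ b) (hbc : b ≠ c) (hac : a ≠ c) (he : ({a, b, c} : Finset ℕ) ∈ G) :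
    (G.filter (fun e => {a, b} ⊆ e)).card
      = (((G.biUnion id) \ {a, b, c}).filter (fun v => ({a, b, v} : Finset ℕ) ∈ G)).card + 1 := by
  have h1 : G.filter (fun e => {a, b} ⊆ e) = insert {a, b, c}
      ((((G.biUnion id) \ {a, b, c}).filter (fun v => ({a, b, v} : Finset ℕ) ∈ G)).image
        (fun v => {a, b, v})) := by
    ext e
    simp only [Finset.mem_filter, Finset.mem_insert, Finset.mem_image, Finset.mem_sdiff,
      Finset.mem_biUnion, id]
    constructor
    · rintro ⟨h, h2⟩
      have h3 := hG e h
      have h4 : (e \ {a, b}).card = 1 := by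
        rw [Finset.card_sdiff_of_subset h2, Finset.card_pair hab, h3]
      obtain ⟨v, hv⟩ := Finset.card_eq_one.1 h4
      have h5 : e = {a, b, v} := by
        rw [← Finset.union_sdiff_of_subset h2, hv]
        ext; simp; 
      by_cases hvc : v = c
      · left; rw [h5, hvc]
      · right
        have : v ∈ e \ {a, b} := by rw [hv]; simp
        refine ⟨v, ⟨⟨⟨e, h, ?_⟩, ?_⟩, ?_⟩, h5.symm⟩
        · grind
        · grind
        · rw [← h5]; exact h
    · rintro (rfl | ⟨v, ⟨⟨-, hv⟩, hm⟩, rfl⟩)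
      · refine ⟨he, ?_⟩; grind
      · refine ⟨hm, ?_⟩; grind
  rw [h1, Finset.card_insert_of_notMem, Finset.card_image_of_injOn]
  · intro v hv v' hv' hvv
    simp at hv hv' hvv
    have : v ∈ ({a, b, v'} : Finset ℕ) := by rw [← hvv]; simp
    simp at this
    grind
  · simp only [Finset.mem_image, Finset.mem_filter, Finset.mem_sdiff, not_exists, not_and]
    intro v hv hvv
    have : v ∈ ({a, b, c} : Finset ℕ) := by rw [← hvv]; simp
    exact hv.1.2 this

theorem lemF (G : Finset (Finset ℕ)) (B : Finset ℕ) (hG : ∀ e ∈ G, e.card = 3) (hB : ∀ e ∈ G, e ⊆ B)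
    (hC : NoC G) : G.card ≤ B.card.choose 2 := by
  have key : ∀ e ∈ G, (1 : ℚ) ≤ ∑ p ∈ (B.powersetCard 2).filter (fun p => p ⊆ e),
      1 / ((G.filter (fun e => p ⊆ e)).card : ℚ) := by
    intro e he
    obtain ⟨a, b, c, hab, hac, hbc, rfl⟩ := Finset.card_eq_three.1 (hG e he)
    have hsub : ({{a, b}, {a, c}, {b, c}} : Finset (Finset ℕ)) ⊆
        (B.powersetCard 2).filter (fun p => p ⊆ {a, b, c}) := by
      have := hB _ he
      intro p hp
      simp only [Finset.mem_insert, Finset.mem_singleton] at hp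
      simp only [Finset.mem_filter, Finset.mem_powersetCard]
      rcases hp with rfl | rfl | rfl
      · exact ⟨⟨by grind, Finset.card_pair hab⟩, by grind⟩
      · exact ⟨⟨by grind, Finset.card_pair hac⟩, by grind⟩
      · exact ⟨⟨by grind, Finset.card_pair hbc⟩, by grind⟩
    refine le_trans ?_ (Finset.sum_le_sum_of_subset_of_nonneg hsub (fun _ _ _ => by positivity))
    rw [Finset.sum_insert, Finset.sum_insert, Finset.sum_singleton]
    · rw [codeg G hG a b c hab hbc hac he, codeg G hG a c b hac hbc.symm hab (by
        rwa [show ({a, c, b} : Finset ℕ) = {a, b, c} by grind]),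
        codeg G hG b c a hbc hac.symm hab.symm (by
        rwa [show ({b, c, a} : Finset ℕ) = {a, b, c} by grind])]
      push_cast
      rw [← add_assoc]
      apply weight3
      intro c' hc' b' hb' a' ha' h1 h2 h3
      simp only [Finset.mem_filter, Finset.mem_sdiff] at ha' hb' hc'
      refine hC a b c a' b' c' hab hbc hac h2.symm h1.symm h3.symm ?_ ?_ ?_ ha'.2 hb'.2 hc'.2
      · grind
      · grind
      · grind
    · intro h
      have : a ∈ ({b, c} : Finset ℕ) := by rw [← Finset.mem_singleton.1 h]; simp
      grind
    · intro h
      simp only [Finset.mem_insert, Finset.mem_singleton] at h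
      rcases h with h | h
      · have : b ∈ ({a, c} : Finset ℕ) := by rw [← h]; simp
        grind
      · have : a ∈ ({b, c} : Finset ℕ) := by rw [← h]; simp
        grind
  have h2 : (G.card : ℚ) ≤ ∑ e ∈ G, ∑ p ∈ (B.powersetCard 2).filter (fun p => p ⊆ e),
      1 / ((G.filter (fun e => p ⊆ e)).card : ℚ) := by
    have := Finset.sum_le_sum key
    simpa using this
  rw [Finset.sum_comm' (t' := B.powersetCard 2) (s' := fun p => G.filter (fun e => p ⊆ e))] at h2
  · have h3 : ∑ p ∈ B.powersetCard 2, ∑ e ∈ G.filter (fun e => p ⊆ e),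
        1 / ((G.filter (fun e => p ⊆ e)).card : ℚ) ≤ ∑ p ∈ B.powersetCard 2, (1 : ℚ) := by
      apply Finset.sum_le_sum
      intro p _
      rw [Finset.sum_const, nsmul_eq_mul, mul_one_div]
      exact div_self_le_one _
    have h4 := h2.trans h3
    simp only [Finset.sum_const, Finset.card_powersetCard, nsmul_eq_mul, mul_one] at h4
    exact_mod_cast h4
  · intro e p
    simp only [Finset.mem_filter]
    tauto


/-- Edges of `G` inside `B`. -/
def GB (G : Finset (Finset ℕ)) (B : Finset ℕ) : Finset (Finset ℕ) := G.filter (fun e => e ⊆ B)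

theorem mem_GB {G : Finset (Finset ℕ)} {B e : Finset ℕ} : e ∈ GB G B ↔ e ∈ G ∧ e ⊆ B := by
  simp [GB]

/-- Edges plus costs. -/
def ZZ (G : Finset (Finset ℕ)) (S0 S1 B : Finset ℕ) : ℕ :=
  (GB G B).card + (S0 ∩ B).card + (S1 ∩ B).card

theorem ZZ_split (G : Finset (Finset ℕ)) (S0 S1 B R : Finset ℕ) (hR : R ⊆ B) :
    ZZ G S0 S1 B = ZZ G S0 S1 (B \ R) + ((GB G B).filter (fun e => ¬ Disjoint e R)).card
      + ((S0 ∩ R).card + (S1 ∩ R).card) := by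
  have h1 : (GB G B).card = (GB G (B \ R)).card
      + ((GB G B).filter (fun e => ¬ Disjoint e R)).card := by
    rw [← Finset.card_filter_add_card_filter_not (s := GB G B) (fun e => Disjoint e R)]
    congr 2
    ext e
    simp only [Finset.mem_filter, mem_GB, Finset.subset_sdiff]
    tauto
  have h2 : ∀ S : Finset ℕ, (S ∩ B).card = (S ∩ (B \ R)).card + (S ∩ R).card := by
    intro S
    rw [← Finset.card_union_of_disjoint]
    · congr 1; ext v; have := @hR v; simp; tauto
    · rw [Finset.disjoint_left]; intro v; simp; tauto
  unfold ZZ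
  rw [h1, h2 S0, h2 S1]
  ring

theorem ZZ_small (G : Finset (Finset ℕ)) (S0 S1 B : Finset ℕ) (hG : ∀ e ∈ G, e.card = 3)
    (hB : B.card ≤ 2) : ZZ G S0 S1 B ≤ 2 * B.card := by
  have h1 : (GB G B).card = 0 := by
    rw [Finset.card_eq_zero, Finset.eq_empty_iff_forall_notMem]
    intro e he
    rw [mem_GB] at he
    have := Finset.card_le_card he.2
    have := hG e he.1
    omega
  have h2 : (S0 ∩ B).card ≤ B.card := Finset.card_le_card Finset.inter_subset_right
  have h3 : (S1 ∩ B).card ≤ B.card := Finset.card_le_card Finset.inter_subset_right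
  unfold ZZ
  omega

theorem cost_le (S0 S1 R : Finset ℕ) (h : ∀ y ∈ R, y ∈ S0 → y ∈ S1 → False) :
    (S0 ∩ R).card + (S1 ∩ R).card ≤ R.card := by
  rw [← Finset.card_union_of_disjoint]
  · apply Finset.card_le_card; intro v; simp; tauto
  · rw [Finset.disjoint_left]; intro v; have := h v; simp; tauto

theorem cost_zero (S0 S1 R : Finset ℕ) (h : ∀ y ∈ R, y ∉ S0 ∧ y ∉ S1) :
    (S0 ∩ R).card + (S1 ∩ R).card = 0 := by
  have h1 : S0 ∩ R = ∅ := by ext v; have := h v; simp; tauto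
  have h2 : S1 ∩ R = ∅ := by ext v; have := h v; simp; tauto
  simp [h1, h2]

theorem inter_two (e f : Finset ℕ) (h : ¬ Disjoint e f) (h1 : (e ∩ f).card ≠ 1) :
    2 ≤ (e ∩ f).card := by
  have : (e ∩ f).card ≠ 0 := by
    rwa [Ne, Finset.card_eq_zero, ← Finset.disjoint_iff_inter_eq_empty]
  omega

/-- edges containing a fixed pair -/
theorem card_pair_edges (E : Finset (Finset ℕ)) (B : Finset ℕ) (y z : ℕ) (hyz : y ≠ z)
    (hy : y ∈ B) (hz : z ∈ B)
    (hE : ∀ e ∈ E, e.card = 3 ∧ e ⊆ B ∧ y ∈ e ∧ z ∈ e) : E.card + 2 ≤ B.card := by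
  have h1 : E ⊆ (B \ {y, z}).image (fun v => {y, z, v}) := by
    intro e he
    obtain ⟨h3, h4, h5, h6⟩ := hE e he
    have h2 : ({y, z} : Finset ℕ) ⊆ e := by grind
    have h7 : (e \ {y, z}).card = 1 := by
      rw [Finset.card_sdiff_of_subset h2, Finset.card_pair hyz, h3]
    obtain ⟨v, hv⟩ := Finset.card_eq_one.1 h7
    have h8 : e = {y, z, v} := by
      rw [← Finset.union_sdiff_of_subset h2, hv]
      ext; simp
    have : v ∈ e \ {y, z} := by rw [hv]; simp
    rw [Finset.mem_image]
    refine ⟨v, ?_, h8.symm⟩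
    grind
  have h2 := (Finset.card_le_card h1).trans Finset.card_image_le
  have h3 : ({y, z} : Finset ℕ) ⊆ B := by grind
  have h4 := Finset.card_le_card h3
  rw [Finset.card_sdiff_of_subset h3] at h2
  rw [Finset.card_pair hyz] at h2 h4
  omega

theorem eq3 {f : Finset ℕ} {a b c : ℕ} (hf : f.card = 3) (ha : a ∈ f) (hb : b ∈ f) (hc : c ∈ f)
    (hab : a ≠ b) (hac : a ≠ c) (hbc : b ≠ c) : f = {a, b, c} := by
  symm
  apply Finset.eq_of_subset_of_card_le
  · simp [Finset.insert_subset_iff, *]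
  · rw [hf, Finset.card_eq_three.2 ⟨a, b, c, hab, hac, hbc, rfl⟩]

theorem third {f : Finset ℕ} {a b : ℕ} (hf : f.card = 3) (ha : a ∈ f) (hb : b ∈ f)
    (hab : a ≠ b) : ∃ v ∈ f, v ≠ a ∧ v ≠ b ∧ f = {a, b, v} := by
  have h2 : ({a, b} : Finset ℕ) ⊆ f := by simp [Finset.insert_subset_iff, *]
  have h7 : (f \ {a, b}).card = 1 := by
    rw [Finset.card_sdiff_of_subset h2, Finset.card_pair hab, hf]
  obtain ⟨v, hv⟩ := Finset.card_eq_one.1 h7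
  have : v ∈ f \ {a, b} := by rw [hv]; simp
  simp only [Finset.mem_sdiff, Finset.mem_insert, Finset.mem_singleton, not_or] at this
  exact ⟨v, this.1, this.2.1, this.2.2, eq3 hf ha hb this.1 hab (Ne.symm this.2.1)
    (Ne.symm this.2.2)⟩

theorem off2 {f : Finset ℕ} {w y z : ℕ} (h : 2 ≤ (({w, y, z} : Finset ℕ) ∩ f).card) (hw : w ∉ f) :
    y ∈ f ∧ z ∈ f := by
  have h1 : ({w, y, z} : Finset ℕ) ∩ f ⊆ {y, z} := by
    intro v; simp only [Finset.mem_inter, Finset.mem_insert, Finset.mem_singleton]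
    rintro ⟨rfl | h | h, hv⟩ <;> tauto
  have h2 : ({w, y, z} : Finset ℕ) ∩ f = {y, z} :=
    Finset.eq_of_subset_of_card_le h1 (Finset.card_le_two.trans h)
  have hy : y ∈ ({w, y, z} : Finset ℕ) ∩ f := by rw [h2]; simp
  have hz : z ∈ ({w, y, z} : Finset ℕ) ∩ f := by rw [h2]; simp
  exact ⟨(Finset.mem_inter.1 hy).2, (Finset.mem_inter.1 hz).2⟩

theorem pair_sub {B : Finset ℕ} {y z : ℕ} (hy : y ∈ B) (hz : z ∈ B) : ({y, z} : Finset ℕ) ⊆ B := by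
  simp [Finset.insert_subset_iff, *]

section phi
variable (G : Finset (Finset ℕ)) (S0 S1 : Finset ℕ)

/-- arithmetic of `choose` -/
theorem ch2 (m : ℕ) : (m + 1).choose 2 = m.choose 2 + m := by
  rw [ch_add]; simp

theorem phi_star (D : Finset ℕ) (w : ℕ) (hw : w ∉ D) (E : Finset (Finset ℕ))
    (hE : ∀ e ∈ E, e.card = 3 ∧ w ∈ e ∧ e ⊆ insert w D) : E.card ≤ D.card.choose 2 := by
  rw [← Finset.card_powersetCard]
  apply Finset.card_le_card_of_injOn (fun e => e.erase w)
  · intro e he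
    obtain ⟨h1, h2, h3⟩ := hE e he
    simp only [Finset.mem_coe, Finset.mem_powersetCard]
    constructor
    · intro v hv
      have := @h3 v
      grind
    · rw [Finset.card_erase_of_mem h2, h1]
  · intro e he e' he' hee
    obtain ⟨h1, h2, h3⟩ := hE e he
    obtain ⟨h1', h2', h3'⟩ := hE e' he'
    rw [← Finset.insert_erase h2, ← Finset.insert_erase h2']
    simp only at hee
    rw [hee]

set_option maxHeartbeats 4000000 in
theorem phi0 (hG : ∀ e ∈ G, e.card = 3) (hC : NoC G)
    (hS : ∀ w, (w ∈ S0 ∨ w ∈ S1) → ∀ e ∈ G, ∀ e' ∈ G, w ∈ e → w ∉ e' → (e ∩ e').card ≠ 1)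
    (hS01 : ∀ w ∈ S0, ∀ w' ∈ S1, ∀ e ∈ G, w ∈ e → w' ∈ e → w = w') :
    ∀ (N : ℕ) (B : Finset ℕ), B.card = N → (∃ w ∈ B, w ∈ S0 ∨ w ∈ S1) →
      ZZ G S0 S1 B ≤ (B.card - 1).choose 2 + 5 := by
  intro N
  induction N using Nat.strong_induction_on with
  | _ N ih =>
  rintro B hBN ⟨w, hwB, hw⟩
  have IH : ∀ B' : Finset ℕ, B'.card < B.card → (∃ w ∈ B', w ∈ S0 ∨ w ∈ S1) →
      ZZ G S0 S1 B' ≤ (B'.card - 1).choose 2 + 5 := fun B' h1 h2 => ih B'.card (hBN ▸ h1) B' rfl h2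
  clear ih
  have hS1 : ∀ e ∈ G, ∀ e' ∈ G, w ∈ e → w ∉ e' → ¬ Disjoint e e' → 2 ≤ (e ∩ e').card :=
    fun e he e' he' h1 h2 h3 => inter_two _ _ h3 (hS w hw e he e' he' h1 h2)
  have hcost : ∀ e ∈ G, w ∈ e → ∀ y ∈ e, y ≠ w → y ∈ S0 → y ∈ S1 → False := by
    intro e he hwe y hy hyw h0 h1
    rcases hw with h | h
    · exact hyw (hS01 w h y h1 e he hwe hy).symm
    · exact hyw (hS01 y h0 w h e he hy hwe)
  have hcost2 : w ∈ S0 → w ∈ S1 → ∀ e ∈ G, w ∈ e → ∀ y ∈ e, y ≠ w → y ∉ S0 ∧ y ∉ S1 := by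
    intro h0 h1 e he hwe y hy hyw
    exact ⟨fun h => hyw (hS01 y h w h1 e he hy hwe), fun h => hyw (hS01 w h0 y h e he hwe hy).symm⟩
  have hpos : 0 < B.card := Finset.card_pos.2 ⟨w, hwB⟩
  by_cases h0 : ∀ e ∈ GB G B, w ∉ e
  · -- isolated vertex
    have hsp := ZZ_split G S0 S1 B {w} (by simpa using hwB)
    have h1 : (GB G B).filter (fun e => ¬ Disjoint e {w}) = ∅ := by
      rw [Finset.filter_eq_empty_iff]
      intro e he
      simpa using h0 e he
    have h2 : (S0 ∩ {w}).card ≤ 1 := by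
      have := Finset.card_le_card (Finset.inter_subset_right : S0 ∩ {w} ⊆ {w}); simpa using this
    have h3 : (S1 ∩ {w}).card ≤ 1 := by
      have := Finset.card_le_card (Finset.inter_subset_right : S1 ∩ {w} ⊆ {w}); simpa using this
    rw [h1] at hsp
    have hc : (B \ {w}).card = B.card - 1 := by
      rw [Finset.card_sdiff_of_subset (by simpa using hwB)]; simp
    simp only [Finset.card_empty] at hsp
    by_cases h4 : ∃ w' ∈ B \ {w}, w' ∈ S0 ∨ w' ∈ S1
    · by_cases h5 : B.card ≤ 3
      · have h6 := ZZ_small G S0 S1 (B \ {w}) hG (by omega)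
        rw [hc] at h6
        have h7 : B.card = 1 ∨ B.card = 2 ∨ B.card = 3 := by omega
        rcases h7 with h7 | h7 | h7 <;> rw [h7] at h6 ⊢ <;> norm_num [Nat.choose] at h6 ⊢ <;> omega
      · have h6 := IH (B \ {w}) (by omega) h4
        rw [hc] at h6
        obtain ⟨k, hk⟩ : ∃ k, B.card = k + 4 := ⟨B.card - 4, by omega⟩
        rw [hk] at h6 ⊢
        have := ch2 (k + 2)
        have e1 : k + 4 - 1 - 1 = k + 2 := by omega
        have e2 : k + 4 - 1 = k + 2 + 1 := by omega
        rw [e1] at h6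
        rw [e2]
        omega
    · have h6 : ZZ G S0 S1 (B \ {w}) = (GB G (B \ {w})).card := by
        have := cost_zero S0 S1 (B \ {w}) (fun y hy => by
          constructor <;> intro h <;> exact h4 ⟨y, hy, by tauto⟩)
        unfold ZZ
        omega
      have h7 := lemF (GB G (B \ {w})) (B \ {w}) (fun e he => hG e (mem_GB.1 he).1)
        (fun e he => (mem_GB.1 he).2) (by
          intro a b c a' b' c' q1 q2 q3 q4 q5 q6 q7 q8 q9 x1 x2 x3
          exact hC a b c a' b' c' q1 q2 q3 q4 q5 q6 q7 q8 q9 (mem_GB.1 x1).1 (mem_GB.1 x2).1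
            (mem_GB.1 x3).1)
      rw [hc] at h7
      omega
  push Not at h0
  obtain ⟨e0, he0, hwe0⟩ := h0
  by_cases hx : ∃ e ∈ GB G B, w ∉ e ∧ ∃ e' ∈ GB G B, w ∈ e' ∧ ¬ Disjoint e' e
  · obtain ⟨e, he, hwe, e', he', hwe', hnd⟩ := hx
    have hint := hS1 e' (mem_GB.1 he').1 e (mem_GB.1 he).1 hwe' hwe hnd
    obtain ⟨heG, heB⟩ := mem_GB.1 he
    obtain ⟨heG', heB'⟩ := mem_GB.1 he'
    have he3 := hG e heG
    have he3' := hG e' heG'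
    obtain ⟨y, hy, z, hz, hyz⟩ := Finset.one_lt_card.1 hint
    simp only [Finset.mem_inter] at hy hz
    have hyw : y ≠ w := by rintro rfl; exact hwe hy.2
    have hzw : z ≠ w := by rintro rfl; exact hwe hz.2
    have e'eq : e' = {w, y, z} := eq3 he3' hwe' hy.1 hz.1 hyw.symm hzw.symm hyz
    obtain ⟨t, hte, hty, htz, eeq⟩ := third he3 hy.2 hz.2 hyz
    have htw : t ≠ w := by rintro rfl; apply hwe; rw [eeq]; simp
    -- edges off w meeting {y,z}
    have hoff : ∀ f ∈ G, w ∉ f → (y ∈ f ∨ z ∈ f) → y ∈ f ∧ z ∈ f := by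
      intro f hf hwf hyzf
      have h2 := hS1 e' heG' f hf hwe' hwf (by
        rw [Finset.not_disjoint_iff]
        rcases hyzf with h | h
        · exact ⟨y, hy.1, h⟩
        · exact ⟨z, hz.1, h⟩)
      rw [e'eq] at h2
      exact off2 h2 hwf
    have hon : ∀ f ∈ G, w ∈ f → ¬ Disjoint f e → ∃ p ∈ e, ∃ q ∈ e, p ≠ q ∧ f = {w, p, q} := by
      intro f hf hwf hd
      have h2 := hS1 f hf e heG hwf hwe hd
      obtain ⟨p, hp, q, hq, hpq⟩ := Finset.one_lt_card.1 h2
      simp only [Finset.mem_inter] at hp hq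
      exact ⟨p, hp.2, q, hq.2, hpq, eq3 (hG f hf) hwf hp.1 hq.1
        (fun h => hwe (h ▸ hp.2)) (fun h => hwe (h ▸ hq.2)) hpq⟩
    by_cases ht : ∃ e'' ∈ GB G B, w ∈ e'' ∧ t ∈ e''
    · -- K_3 component
      obtain ⟨e'', he'', hwe'', hte''⟩ := ht
      obtain ⟨heG'', heB''⟩ := mem_GB.1 he''
      obtain ⟨p, hp, q, hq, hpq, e''eq⟩ := hon e'' heG'' hwe''
        (Finset.not_disjoint_iff.2 ⟨t, hte'', hte⟩)
      have hcl : ∀ f ∈ G, ¬ Disjoint f e → f ⊆ insert w e := by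
        intro f hf hd
        by_cases hwf : w ∈ f
        · obtain ⟨p, hp, q, hq, hpq, rfl⟩ := hon f hf hwf hd
          simp [Finset.insert_subset_iff, hp, hq]
        · have a1 := hoff f hf hwf
          have b1 : ¬ Disjoint e'' f → p ∈ f ∧ q ∈ f := by
            intro h
            have h2 := hS1 e'' heG'' f hf hwe'' hwf h
            rw [e''eq] at h2
            exact off2 h2 hwf
          have pe : p ∈ e'' := by rw [e''eq]; simp
          have qe : q ∈ e'' := by rw [e''eq]; simp
          have tpq : t = p ∨ t = q := by
            rw [e''eq] at hte''
            simpa [htw] using hte''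
          have pyz : p = y ∨ p = z ∨ p = t := by rw [eeq] at hp; simpa using hp
          have qyz : q = y ∨ q = z ∨ q = t := by rw [eeq] at hq; simpa using hq
          have b2 : t ∈ f → p ∈ f ∧ q ∈ f := fun h =>
            b1 (Finset.not_disjoint_iff.2 ⟨t, hte'', h⟩)
          have b3 : p ∈ f → p ∈ f ∧ q ∈ f := fun h =>
            b1 (Finset.not_disjoint_iff.2 ⟨p, pe, h⟩)
          have b4 : q ∈ f → p ∈ f ∧ q ∈ f := fun h =>
            b1 (Finset.not_disjoint_iff.2 ⟨q, qe, h⟩)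
          have b5 : y ∈ f ∨ z ∈ f ∨ t ∈ f := by
            obtain ⟨v, hv, hv2⟩ := Finset.not_disjoint_iff.1 hd
            rw [eeq] at hv2
            simp only [Finset.mem_insert, Finset.mem_singleton] at hv2
            rcases hv2 with rfl | rfl | rfl
            · exact Or.inl hv
            · exact Or.inr (Or.inl hv)
            · exact Or.inr (Or.inr hv)
          obtain ⟨a3, a4⟩ : (y ∈ f ∧ z ∈ f) ∧ t ∈ f := by
            clear * - a1 b2 b3 b4 b5 pyz qyz tpq hpq
            grind
          have a5 : e = f := by
            apply Finset.eq_of_subset_of_card_le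
            · rw [eeq]; simp [Finset.insert_subset_iff, a3.1, a3.2, a4]
            · rw [he3, hG f hf]
          rw [← a5]; exact Finset.subset_insert _ _
      have hsp := ZZ_split G S0 S1 B e heB
      have hE : ((GB G B).filter (fun f => ¬ Disjoint f e)).card ≤ 4 := by
        have : (GB G B).filter (fun f => ¬ Disjoint f e) ⊆ (insert w e).powersetCard 3 := by
          intro f hf
          rw [Finset.mem_filter] at hf
          rw [Finset.mem_powersetCard]
          exact ⟨hcl f (mem_GB.1 hf.1).1 hf.2, hG f (mem_GB.1 hf.1).1⟩
        have := Finset.card_le_card this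
        rw [Finset.card_powersetCard, Finset.card_insert_of_notMem hwe, he3] at this
        simpa [Nat.choose] using this
      have hcov : ∀ v ∈ e, v ≠ w ∧ ∃ g ∈ G, w ∈ g ∧ v ∈ g := by
        intro v hv
        refine ⟨by rintro rfl; exact hwe hv, ?_⟩
        rw [eeq] at hv
        simp only [Finset.mem_insert, Finset.mem_singleton] at hv
        rcases hv with rfl | rfl | rfl
        · exact ⟨e', heG', hwe', hy.1⟩
        · exact ⟨e', heG', hwe', hz.1⟩
        · exact ⟨e'', heG'', hwe'', hte''⟩
      have hcK : (S0 ∩ e).card + (S1 ∩ e).card ≤ 3 := by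
        rw [← he3]
        apply cost_le
        intro v hv
        obtain ⟨h1, g, h2, h3, h4⟩ := hcov v hv
        exact hcost g h2 h3 v h4 h1
      have hcw : (w ∈ S0 → w ∈ S1 → (S0 ∩ e).card + (S1 ∩ e).card = 0) := by
        intro h0 h1
        apply cost_zero
        intro v hv
        obtain ⟨h1', g, h2, h3, h4⟩ := hcov v hv
        exact hcost2 h0 h1 g h2 h3 v h4 h1'
      have hcB : (B \ e).card = B.card - 3 := by rw [Finset.card_sdiff_of_subset heB, he3]
      have hwBe : w ∈ B \ e := by simp [hwB, hwe]
      have hge : 4 ≤ B.card := by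
        have := Finset.card_pos.2 ⟨w, hwBe⟩
        omega
      by_cases h6 : 6 ≤ B.card
      · have h7 := IH (B \ e) (by omega) ⟨w, hwBe, hw⟩
        rw [hcB] at h7
        obtain ⟨k, hk⟩ : ∃ k, B.card = k + 6 := ⟨B.card - 6, by omega⟩
        rw [hk] at h7 ⊢
        have e1 : k + 6 - 3 - 1 = k + 2 := by omega
        have e2 : k + 6 - 1 = (k + 2) + 3 := by omega
        rw [e1] at h7
        rw [e2, ch_add]
        have c32 : Nat.choose 3 2 = 3 := rfl
        have c22 : Nat.choose 2 2 = 1 := rfl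
        have c42 : Nat.choose 4 2 = 6 := rfl
        omega
      · have h7 := ZZ_small G S0 S1 (B \ e) hG (by omega)
        rw [hcB] at h7
        have h9 : (4 - 1).choose 2 = 3 := by decide
        have h10 : (5 - 1).choose 2 = 6 := by decide
        by_cases hw2 : w ∈ S0 ∧ w ∈ S1
        · have := hcw hw2.1 hw2.2
          have h8 : B.card = 4 ∨ B.card = 5 := by omega
          rcases h8 with h8 | h8 <;> rw [h8] at h7 ⊢ <;> omega
        · -- refine the small bound
          have hsp2 := ZZ_split G S0 S1 (B \ e) {w} (by simpa using hwBe)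
          have hc3 : ((B \ e) \ {w}).card = B.card - 4 := by
            rw [Finset.card_sdiff_of_subset (by simpa using hwBe), hcB]; simp; omega
          have h11 := ZZ_small G S0 S1 ((B \ e) \ {w}) hG (by omega)
          rw [hc3] at h11
          have h12 := cost_le S0 S1 {w} (by
            intro y hy; rw [Finset.mem_singleton] at hy; subst hy; exact fun q r => hw2 ⟨q, r⟩)
          have h13 : ((GB G (B \ e)).filter (fun f => ¬ Disjoint f {w})).card = 0 := by
            rw [Finset.card_eq_zero, Finset.eq_empty_iff_forall_notMem]
            intro f hf
            rw [Finset.mem_filter, mem_GB] at hf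
            have := Finset.card_le_card hf.1.2
            have := hG f hf.1.1
            omega
          simp only [Finset.card_singleton] at h12
          have h8 : B.card = 4 ∨ B.card = 5 := by omega
          rcases h8 with h8 | h8 <;> rw [h8] at h11 ⊢ <;> omega
    · -- twin pair
      have hcl : ∀ f ∈ GB G B, ¬ Disjoint f {y, z} → y ∈ f ∧ z ∈ f := by
        intro f hf hd
        have hyzf : y ∈ f ∨ z ∈ f := by
          obtain ⟨v, hv, hv2⟩ := Finset.not_disjoint_iff.1 hd
          simp only [Finset.mem_insert, Finset.mem_singleton] at hv2
          rcases hv2 with rfl | rfl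
          · exact Or.inl hv
          · exact Or.inr hv
        by_cases hwf : w ∈ f
        · obtain ⟨p, hp, q, hq, hpq, hfe⟩ := hon f (mem_GB.1 hf).1 hwf (by
            rw [Finset.not_disjoint_iff]
            rcases hyzf with h | h
            · exact ⟨y, h, hy.2⟩
            · exact ⟨z, h, hz.2⟩)
          have htf : t ∉ f := fun h => ht ⟨f, hf, hwf, h⟩
          rw [eeq] at hp hq
          rw [hfe] at htf ⊢
          clear * - hp hq htf hpq
          grind
        · exact hoff f (mem_GB.1 hf).1 hwf hyzf
      have hR : ({y, z} : Finset ℕ) ⊆ B := pair_sub (heB hy.2) (heB hz.2)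
      have hsp := ZZ_split G S0 S1 B {y, z} hR
      have hE := card_pair_edges ((GB G B).filter (fun f => ¬ Disjoint f {y, z})) B y z hyz
        (heB hy.2) (heB hz.2) (by
          intro f hf
          rw [Finset.mem_filter] at hf
          exact ⟨hG f (mem_GB.1 hf.1).1, (mem_GB.1 hf.1).2, hcl f hf.1 hf.2⟩)
      have hcK : (S0 ∩ {y, z}).card + (S1 ∩ {y, z}).card ≤ 2 := by
        rw [← Finset.card_pair hyz]
        apply cost_le
        intro v hv
        have : v = y ∨ v = z := by simpa using hv
        rcases this with rfl | rfl
        · exact hcost e' heG' hwe' v hy.1 hyw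
        · exact hcost e' heG' hwe' v hz.1 hzw
      have hcB : (B \ {y, z}).card = B.card - 2 := by
        rw [Finset.card_sdiff_of_subset hR, Finset.card_pair hyz]
      have hwBe : w ∈ B \ {y, z} := by simp [hwB, hyw.symm, hzw.symm]
      have hge : 3 ≤ B.card := by
        have := Finset.card_pos.2 ⟨w, hwBe⟩
        omega
      by_cases h6 : 5 ≤ B.card
      · have h7 := IH (B \ {y, z}) (by omega) ⟨w, hwBe, hw⟩
        rw [hcB] at h7
        obtain ⟨k, hk⟩ : ∃ k, B.card = k + 5 := ⟨B.card - 5, by omega⟩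
        rw [hk] at h7 hE ⊢
        have e1 : k + 5 - 2 - 1 = k + 2 := by omega
        have e2 : k + 5 - 1 = (k + 2) + 2 := by omega
        rw [e1] at h7
        rw [e2, ch_add]
        have c32 : Nat.choose 3 2 = 3 := rfl
        have c22 : Nat.choose 2 2 = 1 := rfl
        have c42 : Nat.choose 4 2 = 6 := rfl
        omega
      · have h7 := ZZ_small G S0 S1 (B \ {y, z}) hG (by omega)
        rw [hcB] at h7
        have h9 : (3 - 1).choose 2 = 1 := by decide
        have h10 : (4 - 1).choose 2 = 3 := by decide
        have h8 : B.card = 3 ∨ B.card = 4 := by omega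
        rcases h8 with h8 | h8 <;> rw [h8] at h7 hE ⊢ <;> omega
  · -- closed star
    push Not at hx
    set D := (((GB G B).filter (fun f => w ∈ f)).biUnion id) \ {w} with hD
    have memD : ∀ v, v ∈ D ↔ (∃ f ∈ GB G B, w ∈ f ∧ v ∈ f) ∧ v ≠ w := by
      intro v
      simp only [hD, Finset.mem_sdiff, Finset.mem_biUnion, Finset.mem_filter, id,
        Finset.mem_singleton, and_assoc]
    have hwD : w ∉ D := by rw [memD]; simp
    have hDB : D ⊆ B := by
      intro v hv
      obtain ⟨⟨f, hf, -, hvf⟩, -⟩ := (memD v).1 hv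
      exact (mem_GB.1 hf).2 hvf
    have hsp := ZZ_split G S0 S1 B D hDB
    have hst : ∀ f ∈ (GB G B).filter (fun f => ¬ Disjoint f D),
        f.card = 3 ∧ w ∈ f ∧ f ⊆ insert w D := by
      intro f hf
      rw [Finset.mem_filter] at hf
      have hwf : w ∈ f := by
        by_contra hwf
        obtain ⟨v, hv, hv2⟩ := Finset.not_disjoint_iff.1 hf.2
        obtain ⟨⟨g, hg, hwg, hvg⟩, -⟩ := (memD v).1 hv2
        exact Finset.not_disjoint_iff.2 ⟨v, hvg, hv⟩ (hx f hf.1 hwf g hg hwg)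
      refine ⟨hG f (mem_GB.1 hf.1).1, hwf, ?_⟩
      intro v hv
      by_cases hvw : v = w
      · rw [hvw]; simp
      · exact Finset.mem_insert_of_mem ((memD v).2 ⟨⟨f, hf.1, hwf, hv⟩, hvw⟩)
    have hd2 : 2 ≤ D.card := by
      have : e0.erase w ⊆ D := by
        intro v hv
        rw [Finset.mem_erase] at hv
        exact (memD v).2 ⟨⟨e0, he0, hwe0, hv.2⟩, hv.1⟩
      have := Finset.card_le_card this
      rw [Finset.card_erase_of_mem hwe0, hG e0 (mem_GB.1 he0).1] at this
      exact this
    have hcD : (S0 ∩ D).card + (S1 ∩ D).card ≤ D.card := by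
      apply cost_le
      intro v hv
      obtain ⟨⟨f, hf, hwf, hvf⟩, hvw⟩ := (memD v).1 hv
      exact hcost f (mem_GB.1 hf).1 hwf v hvf hvw
    have hstar := phi_star D w hwD _ hst
    have hmain : ((GB G B).filter (fun f => ¬ Disjoint f D)).card +
        ((S0 ∩ D).card + (S1 ∩ D).card) ≤ D.card.choose 2 + 3 := by
      by_cases h3 : D.card ≤ 3
      · omega
      by_cases hSD : ∀ y ∈ D, y ∉ S0 ∧ y ∉ S1
      · have := cost_zero S0 S1 D hSD
        omega
      · push Not at hSD
        obtain ⟨y, hyD, hy⟩ := hSD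
        have hyS : y ∈ S0 ∨ y ∈ S1 := by clear * - hy; tauto
        obtain ⟨⟨f, hf, hwf, hyf⟩, hyw⟩ := (memD y).1 hyD
        obtain ⟨z, hzf, hzw, hzy, feq⟩ := third (hG f (mem_GB.1 hf).1) hwf hyf hyw.symm
        have hzD : z ∈ D := (memD z).2 ⟨⟨f, hf, hwf, hzf⟩, hzw⟩
        have hmeet : ∀ g ∈ (GB G B).filter (fun f => ¬ Disjoint f D), y ∈ g ∨ z ∈ g := by
          intro g hg
          obtain ⟨g1, g2, g3⟩ := hst g hg
          rw [Finset.mem_filter, mem_GB] at hg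
          by_contra hcon
          push Not at hcon
          apply hS y hyS f (mem_GB.1 hf).1 g hg.1.1 hyf hcon.1
          rw [Finset.card_eq_one]
          refine ⟨w, ?_⟩
          rw [feq]
          clear * - hcon g2
          grind
        have c1 := card_pair_edges (((GB G B).filter (fun f => ¬ Disjoint f D)).filter
          (fun g => y ∈ g)) (insert w D) w y hyw.symm (by simp) (by simp [hyD]) (by
            intro g hg
            rw [Finset.mem_filter] at hg
            obtain ⟨g1, g2, g3⟩ := hst g hg.1
            exact ⟨g1, g3, g2, hg.2⟩)
        have c2 := card_pair_edges (((GB G B).filter (fun f => ¬ Disjoint f D)).filter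
          (fun g => ¬ y ∈ g)) (insert w (D.erase y)) w z hzw.symm (by simp)
            (by simp [hzD, hzy]) (by
            intro g hg
            rw [Finset.mem_filter] at hg
            obtain ⟨g1, g2, g3⟩ := hst g hg.1
            refine ⟨g1, ?_, g2, (hmeet g hg.1).resolve_left hg.2⟩
            intro v hv
            have := g3 hv
            have hyg := hg.2
            clear * - this hyg hv
            grind)
        rw [Finset.card_insert_of_notMem hwD] at c1
        rw [Finset.card_insert_of_notMem (by simp [hwD]), Finset.card_erase_of_mem hyD] at c2
        have c3 := Finset.card_filter_add_card_filter_not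
          (s := (GB G B).filter (fun f => ¬ Disjoint f D)) (fun g => y ∈ g)
        obtain ⟨k, hk⟩ : ∃ k, D.card = k + 4 := ⟨D.card - 4, by omega⟩
        rw [hk] at c1 c2 hcD ⊢
        rw [ch_add]
        have c32 : Nat.choose 3 2 = 3 := rfl
        have c22 : Nat.choose 2 2 = 1 := rfl
        have c42 : Nat.choose 4 2 = 6 := rfl
        omega
    have hwBD : w ∈ B \ D := by simp [hwB, hwD]
    have hcB : (B \ D).card = B.card - D.card := Finset.card_sdiff_of_subset hDB
    have hBD := Finset.card_pos.2 ⟨w, hwBD⟩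
    obtain ⟨i, hi⟩ : ∃ i, B.card = D.card + i + 1 := ⟨B.card - D.card - 1, by omega⟩
    have e1 : (B \ D).card = i + 1 := by omega
    have e2 : B.card - 1 = D.card + i := by omega
    rw [e2, ch_add]
    by_cases hi2 : i ≤ 1
    · have h7 := ZZ_small G S0 S1 (B \ D) hG (by omega)
      rw [e1] at h7
      have : i = 0 ∨ i = 1 := by omega
      rcases this with rfl | rfl
      · omega
      · omega
    · have h7 := IH (B \ D) (by omega) ⟨w, hwBD, hw⟩
      rw [e1] at h7
      simp only [Nat.add_sub_cancel] at h7
      have : 4 ≤ D.card * i := by nlinarith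
      omega

end phi


/-- Pairs of `T` inside `B`. -/
def Cov (G T : Finset (Finset ℕ)) (B : Finset ℕ) : Prop :=
  ∀ p ∈ T, p ⊆ B → ∃ e ∈ G, e ⊆ B ∧ p ⊆ e

/-- Edges plus costs plus pairs. -/
def YY (G T : Finset (Finset ℕ)) (S0 S1 B : Finset ℕ) : ℕ := ZZ G S0 S1 B + (GB T B).card

theorem inter_le_two {e f : Finset ℕ} (he : e.card = 3) (hf : f.card = 3) (hne : e ≠ f) :
    (e ∩ f).card ≤ 2 := by
  by_contra h
  have h1 : (e ∩ f).card ≤ e.card := Finset.card_le_card Finset.inter_subset_left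
  have h2 : e ∩ f = e := Finset.eq_of_subset_of_card_le Finset.inter_subset_left (by omega)
  have h3 : e ∩ f = f := Finset.eq_of_subset_of_card_le Finset.inter_subset_right (by omega)
  exact hne (h2.symm.trans h3)

theorem twin_rem (G T : Finset (Finset ℕ)) (B p : Finset ℕ) (hG : ∀ e ∈ G, e.card = 3)
    (hT2 : ∀ q ∈ T, q.card = 2) (hT : ∀ q ∈ T, ∀ e ∈ G, ¬ Disjoint e q → q ⊆ e)
    (hp : p ∈ T) (hpB : p ⊆ B) (hcov : Cov G T B) :
    ((GB G B).filter (fun e => ¬ Disjoint e p)).card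
      + ((GB T B).filter (fun e => ¬ Disjoint e p)).card ≤ max (B.card - 1) 4 := by
  obtain ⟨y, z, hyz, rfl⟩ := Finset.card_eq_two.1 (hT2 p hp)
  have hy : y ∈ B := hpB (by simp)
  have hz : z ∈ B := hpB (by simp)
  have hE := card_pair_edges ((GB G B).filter (fun e => ¬ Disjoint e {y, z})) B y z hyz hy hz (by
    intro e he
    rw [Finset.mem_filter, mem_GB] at he
    have := hT _ hp e he.1.1 he.2
    exact ⟨hG e he.1.1, he.1.2, this (by simp), this (by simp)⟩)
  obtain ⟨e0, he0, he0B, hpe0⟩ := hcov _ hp hpB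
  have htouch : ∀ q ∈ (GB T B).filter (fun e => ¬ Disjoint e {y, z}), ∀ e ∈ G,
      {y, z} ⊆ e → q ⊆ e := by
    intro q hq e he hpe
    rw [Finset.mem_filter, mem_GB] at hq
    apply hT q hq.1.1 e he
    intro hd
    exact hq.2 ((hd.mono_left hpe).symm)
  by_cases h1 : ∀ e ∈ (GB G B).filter (fun e => ¬ Disjoint e {y, z}), e = e0
  · have c1 : ((GB G B).filter (fun e => ¬ Disjoint e {y, z})).card ≤ 1 :=
      Finset.card_le_one.2 (fun a ha b hb => (h1 a ha).trans (h1 b hb).symm)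
    have c2 : (GB T B).filter (fun e => ¬ Disjoint e {y, z}) ⊆ e0.powersetCard 2 := by
      intro q hq
      rw [Finset.mem_powersetCard]
      refine ⟨htouch q hq e0 he0 hpe0, ?_⟩
      rw [Finset.mem_filter, mem_GB] at hq
      exact hT2 q hq.1.1
    have c3 := Finset.card_le_card c2
    rw [Finset.card_powersetCard, hG e0 he0] at c3
    have c4 : Nat.choose 3 2 = 3 := rfl
    omega
  · push Not at h1
    obtain ⟨e1, he1, hne⟩ := h1
    rw [Finset.mem_filter, mem_GB] at he1
    have hpe1 := hT _ hp e1 he1.1.1 he1.2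
    have hle := inter_le_two (hG e0 he0) (hG e1 he1.1.1) hne.symm
    have c1 : ((GB T B).filter (fun e => ¬ Disjoint e {y, z})).card ≤ 1 := by
      rw [Finset.card_le_one]
      have key : ∀ q ∈ (GB T B).filter (fun e => ¬ Disjoint e {y, z}), q = e0 ∩ e1 := by
        intro q hq
        apply Finset.eq_of_subset_of_card_le
        · exact Finset.subset_inter (htouch q hq e0 he0 hpe0) (htouch q hq e1 he1.1.1 hpe1)
        · rw [Finset.mem_filter, mem_GB] at hq
          rw [hT2 q hq.1.1]; exact hle
      intro a ha b hb
      rw [key a ha, key b hb]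
    omega

theorem GB_split (G : Finset (Finset ℕ)) (B R : Finset ℕ) : (GB G B).card = (GB G (B \ R)).card
      + ((GB G B).filter (fun e => ¬ Disjoint e R)).card := by
  rw [← Finset.card_filter_add_card_filter_not (s := GB G B) (fun e => Disjoint e R)]
  congr 2
  ext e
  simp only [Finset.mem_filter, mem_GB, Finset.subset_sdiff]
  tauto

theorem step (G T : Finset (Finset ℕ)) (S0 S1 B p : Finset ℕ) (hG : ∀ e ∈ G, e.card = 3)
    (hT2 : ∀ q ∈ T, q.card = 2) (hT : ∀ q ∈ T, ∀ e ∈ G, ¬ Disjoint e q → q ⊆ e)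
    (hST : ∀ q ∈ T, ∀ w ∈ q, w ∉ S0 ∧ w ∉ S1)
    (hp : p ∈ T) (hpB : p ⊆ B) (hcov : Cov G T B) :
    YY G T S0 S1 B ≤ YY G T S0 S1 (B \ p) + max (B.card - 1) 4 ∧ Cov G T (B \ p) ∧
      (B \ p).card = B.card - 2 ∧ 3 ≤ B.card := by
  refine ⟨?_, ?_, ?_, ?_⟩
  · have h1 := twin_rem G T B p hG hT2 hT hp hpB hcov
    have h2 := ZZ_split G S0 S1 B p hpB
    have h3 := GB_split T B p
    have h4 := cost_zero S0 S1 p (hST p hp)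
    unfold YY
    omega
  · intro q hq hqB
    rw [Finset.subset_sdiff] at hqB
    obtain ⟨e, he, heB, hqe⟩ := hcov q hq hqB.1
    refine ⟨e, he, ?_, hqe⟩
    rw [Finset.subset_sdiff]
    refine ⟨heB, ?_⟩
    by_contra hd
    have hpe := hT p hp e he hd
    have h1 := Finset.card_le_card (Finset.union_subset hqe hpe)
    rw [Finset.card_union_of_disjoint hqB.2, hT2 q hq, hT2 p hp, hG e he] at h1
    omega
  · rw [Finset.card_sdiff_of_subset hpB, hT2 p hp]
  · obtain ⟨e0, he0, he0B, hpe0⟩ := hcov _ hp hpB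
    rw [← hG e0 he0]
    exact Finset.card_le_card he0B

theorem GB_T_small (G T : Finset (Finset ℕ)) (B : Finset ℕ) (hG : ∀ e ∈ G, e.card = 3)
    (hcov : Cov G T B) (hB : B.card ≤ 2) : (GB T B).card = 0 := by
  rw [Finset.card_eq_zero, Finset.eq_empty_iff_forall_notMem]
  intro q hq
  rw [mem_GB] at hq
  obtain ⟨e0, he0, he0B, hpe0⟩ := hcov _ hq.1 hq.2
  have := Finset.card_le_card he0B
  rw [hG e0 he0] at this
  omega

theorem psiS (G T : Finset (Finset ℕ)) (S0 S1 : Finset ℕ) (hG : ∀ e ∈ G, e.card = 3) (hC : NoC G)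
    (hS : ∀ w, (w ∈ S0 ∨ w ∈ S1) → ∀ e ∈ G, ∀ e' ∈ G, w ∈ e → w ∉ e' → (e ∩ e').card ≠ 1)
    (hS01 : ∀ w ∈ S0, ∀ w' ∈ S1, ∀ e ∈ G, w ∈ e → w' ∈ e → w = w')
    (hT2 : ∀ q ∈ T, q.card = 2) (hT : ∀ q ∈ T, ∀ e ∈ G, ¬ Disjoint e q → q ⊆ e)
    (hST : ∀ q ∈ T, ∀ w ∈ q, w ∉ S0 ∧ w ∉ S1) :
    ∀ (N : ℕ) (B : Finset ℕ), B.card = N → Cov G T B → (∃ w ∈ B, w ∈ S0 ∨ w ∈ S1) →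
      YY G T S0 S1 B ≤ (B.card - 1).choose 2 + 5 := by
  intro N
  induction N using Nat.strong_induction_on with
  | _ N ih =>
  rintro B hBN hcov ⟨w, hwB, hw⟩
  by_cases hp : ∃ p ∈ T, p ⊆ B
  · obtain ⟨p, hp, hpB⟩ := hp
    obtain ⟨h1, h2, h3, h4⟩ := step G T S0 S1 B p hG hT2 hT hST hp hpB hcov
    have hwp : w ∈ B \ p := by
      rw [Finset.mem_sdiff]
      refine ⟨hwB, fun h => ?_⟩
      have := hST p hp w h
      tauto
    by_cases h5 : 5 ≤ B.card
    · have h6 := ih (B \ p).card (by omega) (B \ p) rfl h2 ⟨w, hwp, hw⟩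
      rw [h3] at h6
      obtain ⟨k, hk⟩ : ∃ k, B.card = k + 5 := ⟨B.card - 5, by omega⟩
      rw [hk] at h6 h1 ⊢
      have e1 : k + 5 - 2 - 1 = k + 2 := by omega
      have e2 : k + 5 - 1 = (k + 2) + 2 := by omega
      rw [e1] at h6
      rw [e2] at h1 ⊢
      rw [ch_add]
      have c22 : Nat.choose 2 2 = 1 := rfl
      omega
    · have h6 := ZZ_small G S0 S1 (B \ p) hG (by omega)
      have h7 := GB_T_small G T (B \ p) hG h2 (by omega)
      have h9 : (3 - 1).choose 2 = 1 := by decide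
      have h10 : (4 - 1).choose 2 = 3 := by decide
      have h8 : B.card = 3 ∨ B.card = 4 := by omega
      unfold YY at h1 ⊢
      rcases h8 with h8 | h8 <;> rw [h8] at h1 h3 ⊢ <;> omega
  · have h7 : (GB T B).card = 0 := by
      rw [Finset.card_eq_zero, Finset.eq_empty_iff_forall_notMem]
      intro q hq
      rw [mem_GB] at hq
      exact hp ⟨q, hq⟩
    have := phi0 G S0 S1 hG hC hS hS01 B.card B rfl ⟨w, hwB, hw⟩
    unfold YY
    omega

theorem psi0 (G T : Finset (Finset ℕ)) (hG : ∀ e ∈ G, e.card = 3) (hC : NoC G)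
    (hT2 : ∀ q ∈ T, q.card = 2) (hT : ∀ q ∈ T, ∀ e ∈ G, ¬ Disjoint e q → q ⊆ e) :
    ∀ (N : ℕ) (B : Finset ℕ), B.card = N → Cov G T B →
      YY G T ∅ ∅ B ≤ B.card.choose 2 + 1 := by
  intro N
  induction N using Nat.strong_induction_on with
  | _ N ih =>
  rintro B hBN hcov
  have hF : ∀ B : Finset ℕ, ZZ G ∅ ∅ B ≤ B.card.choose 2 := by
    intro B
    have h7 := lemF (GB G B) B (fun e he => hG e (mem_GB.1 he).1)
        (fun e he => (mem_GB.1 he).2) (by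
          intro a b c a' b' c' q1 q2 q3 q4 q5 q6 q7 q8 q9 x1 x2 x3
          exact hC a b c a' b' c' q1 q2 q3 q4 q5 q6 q7 q8 q9 (mem_GB.1 x1).1 (mem_GB.1 x2).1
            (mem_GB.1 x3).1)
    simpa [ZZ] using h7
  by_cases hp : ∃ p ∈ T, p ⊆ B
  · obtain ⟨p, hp, hpB⟩ := hp
    obtain ⟨h1, h2, h3, h4⟩ := step G T ∅ ∅ B p hG hT2 hT (by simp) hp hpB hcov
    by_cases h5 : 5 ≤ B.card
    · have h6 := ih (B \ p).card (by omega) (B \ p) rfl h2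
      rw [h3] at h6
      obtain ⟨k, hk⟩ : ∃ k, B.card = k + 2 := ⟨B.card - 2, by omega⟩
      rw [hk] at h6 h1 ⊢
      have e1 : k + 2 - 2 = k := by omega
      rw [e1] at h6
      rw [ch_add]
      have c22 : Nat.choose 2 2 = 1 := rfl
      omega
    · have h6 := hF (B \ p)
      have h7 := GB_T_small G T (B \ p) hG h2 (by omega)
      have h9 : (3 - 2).choose 2 = 0 := by decide
      have h10 : (4 - 2).choose 2 = 1 := by decide
      have h11 : (3).choose 2 = 3 := by decide
      have h12 : (4).choose 2 = 6 := by decide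
      have h8 : B.card = 3 ∨ B.card = 4 := by omega
      unfold YY at h1 ⊢
      rw [h3] at h6
      rcases h8 with h8 | h8 <;> rw [h8] at h1 h6 ⊢ <;> omega
  · have h7 : (GB T B).card = 0 := by
      rw [Finset.card_eq_zero, Finset.eq_empty_iff_forall_notMem]
      intro q hq
      rw [mem_GB] at hq
      exact hp ⟨q, hq⟩
    have := hF B
    unfold YY
    omega

theorem psiT (G T : Finset (Finset ℕ)) (hG : ∀ e ∈ G, e.card = 3) (hC : NoC G)
    (hT2 : ∀ q ∈ T, q.card = 2) (hT : ∀ q ∈ T, ∀ e ∈ G, ¬ Disjoint e q → q ⊆ e)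
    (B p : Finset ℕ) (hB : 5 ≤ B.card) (hcov : Cov G T B) (hp : p ∈ T) (hpB : p ⊆ B) :
    YY G T ∅ ∅ B ≤ (B.card - 1).choose 2 + 2 := by
  obtain ⟨h1, h2, h3, h4⟩ := step G T ∅ ∅ B p hG hT2 hT (by simp) hp hpB hcov
  have h6 := psi0 G T hG hC hT2 hT _ (B \ p) rfl h2
  rw [h3] at h6
  obtain ⟨k, hk⟩ : ∃ k, B.card = k + 2 := ⟨B.card - 2, by omega⟩
  rw [hk] at h6 h1 ⊢
  have e1 : k + 2 - 2 = k := by omega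
  have e2 : k + 2 - 1 = k + 1 := by omega
  rw [e1] at h6
  rw [e2] at h1 ⊢
  have := ch2 k
  omega


theorem inter_one {e f : Finset ℕ} {v : ℕ} (h1 : v ∈ e) (h2 : v ∈ f) (h3 : ∀ z ∈ e, z ∈ f → z = v) :
    (e ∩ f).card = 1 := by
  rw [Finset.card_eq_one]
  refine ⟨v, ?_⟩
  ext z
  simp only [Finset.mem_inter, Finset.mem_singleton]
  exact ⟨fun h => h3 z h.1 h.2, by rintro rfl; exact ⟨h1, h2⟩⟩

theorem NoP.el {E : Finset (Finset ℕ)} (h : NoP E) {e f g : Finset ℕ} (he : e ∈ E) (hf : f ∈ E)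
    (hg : g ∈ E) (v u : ℕ) (h1 : v ∈ e) (h2 : v ∈ f) (h3 : ∀ z ∈ e, z ∈ f → z = v)
    (h4 : u ∈ f) (h5 : u ∈ g) (h6 : ∀ z ∈ f, z ∈ g → z = u) (h7 : ∀ z ∈ e, z ∉ g) : False :=
  h e he f hf g hg (inter_one h1 h2 h3) (inter_one h4 h5 h6)
    (Finset.disjoint_left.2 (fun z hz => h7 z hz))

/-- The configuration: `A = U ∪ W₀`, `B = W₁`. -/
structure Cfg (E : Finset (Finset ℕ)) (A B : Finset ℕ) (u0 u1 x u3 u4 : ℕ) : Prop where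
  c3 : ∀ e ∈ E, e.card = 3
  noP : NoP E
  noC : NoC E
  n01 : u0 ≠ u1
  n0x : u0 ≠ x
  n03 : u0 ≠ u3
  n04 : u0 ≠ u4
  n1x : u1 ≠ x
  n13 : u1 ≠ u3
  n14 : u1 ≠ u4
  nx3 : x ≠ u3
  nx4 : x ≠ u4
  n34 : u3 ≠ u4
  e1 : ({u0, u1, x} : Finset ℕ) ∈ E
  e2 : ({x, u3, u4} : Finset ℕ) ∈ E
  a0 : u0 ∈ A
  a1 : u1 ∈ A
  ax : x ∈ A
  a3 : u3 ∈ A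
  a4 : u4 ∈ A
  dis : ∀ v ∈ A, v ∉ B
  cov : ∀ w ∈ B, ∃ g ∈ E, g ⊆ B ∧ w ∈ g
  sub : ∀ e ∈ E, ∀ v ∈ e, v ∈ A ∨ v ∈ B
  inW : ∀ e ∈ E, u0 ∉ e → u1 ∉ e → x ∉ e → u3 ∉ e → u4 ∉ e → e ⊆ B

theorem Cfg.swap {E : Finset (Finset ℕ)} {A B : Finset ℕ} {u0 u1 x u3 u4 : ℕ}
    (c : Cfg E A B u0 u1 x u3 u4) : Cfg E A B u3 u4 x u0 u1 where
  c3 := c.c3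
  noP := c.noP
  noC := c.noC
  n01 := c.n34
  n0x := c.nx3.symm
  n03 := c.n03.symm
  n04 := c.n13.symm
  n1x := c.nx4.symm
  n13 := c.n04.symm
  n14 := c.n14.symm
  nx3 := c.n0x.symm
  nx4 := c.n1x.symm
  n34 := c.n01
  e1 := by have := c.e2; rwa [show ({u3, u4, x} : Finset ℕ) = {x, u3, u4} by ext; simp; tauto]
  e2 := by have := c.e1; rwa [show ({x, u0, u1} : Finset ℕ) = {u0, u1, x} by ext; simp; tauto]
  a0 := c.a3
  a1 := c.a4
  ax := c.ax
  a3 := c.a0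
  a4 := c.a1
  dis := c.dis
  cov := c.cov
  sub := c.sub
  inW := fun e he h0 h1 h2 h3 h4 => c.inW e he h3 h4 h2 h0 h1

/-- exchange of `u0` and `u1` -/
theorem Cfg.flip {E : Finset (Finset ℕ)} {A B : Finset ℕ} {u0 u1 x u3 u4 : ℕ}
    (c : Cfg E A B u0 u1 x u3 u4) : Cfg E A B u1 u0 x u3 u4 where
  c3 := c.c3
  noP := c.noP
  noC := c.noC
  n01 := c.n01.symm
  n0x := c.n1x
  n03 := c.n13
  n04 := c.n14
  n1x := c.n0x
  n13 := c.n03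
  n14 := c.n04
  nx3 := c.nx3
  nx4 := c.nx4
  n34 := c.n34
  e1 := by have := c.e1; rwa [show ({u1, u0, x} : Finset ℕ) = {u0, u1, x} by ext; simp; tauto]
  e2 := c.e2
  a0 := c.a1
  a1 := c.a0
  ax := c.ax
  a3 := c.a3
  a4 := c.a4
  dis := c.dis
  cov := c.cov
  sub := c.sub
  inW := fun e he h0 h1 h2 h3 h4 => c.inW e he h1 h0 h2 h3 h4

section
variable {E : Finset (Finset ℕ)} {A B : Finset ℕ} {u0 u1 x u3 u4 : ℕ}

/-- an edge meeting `U` only in `u0` is impossible -/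
theorem Cfg.one (c : Cfg E A B u0 u1 x u3 u4) {f : Finset ℕ} (hf : f ∈ E) (h0 : u0 ∈ f)
    (h1 : u1 ∉ f) (hx : x ∉ f) (h3 : u3 ∉ f) (h4 : u4 ∉ f) : False := by
  obtain ⟨_, noP, _, n01, n0x, n03, n04, n1x, n13, n14, nx3, nx4, n34, e1, e2, -⟩ := c
  refine noP.el e2 e1 hf x u0 (by simp) (by simp) ?_ (by simp) h0 ?_ ?_
  · grind
  · grind
  · grind

/-- an edge `f` meeting `B` and containing `u0` contains `u1` and not others -/
theorem Cfg.cls0 (c : Cfg E A B u0 u1 x u3 u4) {f : Finset ℕ} (hf : f ∈ E) {w : ℕ} (hw : w ∈ B)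
    (hwf : w ∈ f) (h0 : u0 ∈ f) : f = {u0, u1, w} := by
  have one := c.one hf h0
  obtain ⟨g, hg, hgB, hwg⟩ := c.cov w hw
  obtain ⟨c3, noP, _, n01, n0x, n03, n04, n1x, n13, n14, nx3, nx4, n34, e1, e2, a0, a1, ax, a3, a4,
    dis, -, -, -⟩ := c
  have d0 := dis _ a0
  have d1 := dis _ a1
  have dx := dis _ ax
  have d3 := dis _ a3
  have d4 := dis _ a4
  have w0 : u0 ≠ w := by rintro rfl; exact d0 hw
  have w1 : u1 ≠ w := by rintro rfl; exact d1 hw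
  have wx : x ≠ w := by rintro rfl; exact dx hw
  have w3 : u3 ≠ w := by rintro rfl; exact d3 hw
  have w4 : u4 ≠ w := by rintro rfl; exact d4 hw
  have g0 : u0 ∉ g := fun h => d0 (hgB h)
  have g1 : u1 ∉ g := fun h => d1 (hgB h)
  have gx : x ∉ g := fun h => dx (hgB h)
  have g3 : u3 ∉ g := fun h => d3 (hgB h)
  have g4 : u4 ∉ g := fun h => d4 (hgB h)
  clear dis a0 a1 ax a3 a4 hgB d0 d1 dx d3 d4
  obtain ⟨v, hv, hv0, hvw, feq⟩ := third (c3 f hf) h0 hwf w0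
  by_cases hv1 : v = u1
  · subst hv1; rw [feq]; ext; simp; tauto
  exfalso
  by_cases hvx : v = x
  · subst hvx
    refine noP.el e2 hf hg v w (by simp) hv ?_ hwf hwg ?_ ?_
    · rw [feq]; clear * - n03 n04 w3 w4 nx3 nx4; grind
    · rw [feq]; clear * - g0 gx; grind
    · clear * - gx g3 g4; grind
  by_cases hv3 : v = u3 ∨ v = u4
  · refine noP.el e1 hf hg u0 w (by simp) h0 ?_ hwf hwg ?_ ?_
    · rw [feq]; clear * - hv3 n0x w1 wx hv1 hvx; grind
    · rw [feq]; clear * - g0 g3 g4 hv3; grind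
    · clear * - gx g0 g1; grind
  · apply one
    · rw [feq]; clear * - n01 w1 hv1; grind
    · rw [feq]; clear * - n0x wx hvx; grind
    · rw [feq]; clear * - n03 w3 hv3; grind
    · rw [feq]; clear * - n04 w4 hv3; grind

theorem Cfg.cls (c : Cfg E A B u0 u1 x u3 u4) {f : Finset ℕ} (hf : f ∈ E) {w : ℕ} (hw : w ∈ B)
    (hwf : w ∈ f) (hU : ¬ f ⊆ B) : f = {u0, u1, w} ∨ f = {u3, u4, w} ∨
      ∃ w' ∈ B, w' ≠ w ∧ f = {x, w, w'} := by
  by_cases h0 : u0 ∈ f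
  · exact Or.inl (c.cls0 hf hw hwf h0)
  by_cases h1 : u1 ∈ f
  · left; rw [c.flip.cls0 hf hw hwf h1]; ext; simp; tauto
  by_cases h3 : u3 ∈ f
  · exact Or.inr (Or.inl (c.swap.cls0 hf hw hwf h3))
  by_cases h4 : u4 ∈ f
  · right; left; rw [c.swap.flip.cls0 hf hw hwf h4]; ext; simp; tauto
  right; right
  have hx : x ∈ f := by
    by_contra hx
    exact hU (c.inW f hf h0 h1 hx h3 h4)
  have wx : x ≠ w := by rintro rfl; exact c.dis _ c.ax hw
  obtain ⟨w', hw', hwx', hne, feq⟩ := third (c.c3 f hf) hx hwf wx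
  refine ⟨w', ?_, hne, feq⟩
  obtain ⟨g, hg, hgB, hwg⟩ := c.cov w hw
  by_contra hB
  have wg' : w' ∉ g := fun h => hB (hgB h)
  have g0 : u0 ∉ g := fun h => c.dis _ c.a0 (hgB h)
  have g1 : u1 ∉ g := fun h => c.dis _ c.a1 (hgB h)
  have gx : x ∉ g := fun h => c.dis _ c.ax (hgB h)
  refine c.noP.el c.e1 hf hg x w (by simp) hx ?_ hwf hwg ?_ ?_
  · clear * - h0 h1; grind
  · rw [feq]; clear * - gx wg'; grind
  · clear * - g0 g1 gx; grind

theorem Cfg.condS (c : Cfg E A B u0 u1 x u3 u4) {w : ℕ}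
    (hf : ({u0, u1, w} : Finset ℕ) ∈ E) {e e' : Finset ℕ} (he : e ∈ E) (he' : e' ∈ E) (hB : e ⊆ B)
    (hB' : e' ⊆ B) (hwe : w ∈ e) (hwe' : w ∉ e') : (e ∩ e').card ≠ 1 := by
  intro h
  have g0 : u0 ∉ e := fun h => c.dis _ c.a0 (hB h)
  have g1 : u1 ∉ e := fun h => c.dis _ c.a1 (hB h)
  have g0' : u0 ∉ e' := fun h => c.dis _ c.a0 (hB' h)
  have g1' : u1 ∉ e' := fun h => c.dis _ c.a1 (hB' h)
  refine c.noP _ hf e he e' he' (inter_one (v := w) (by simp) hwe ?_) h ?_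
  · clear * - g0 g1; grind
  · rw [Finset.disjoint_left]; clear * - g0' g1' hwe'; grind

theorem Cfg.condS01 (c : Cfg E A B u0 u1 x u3 u4) {w w' : ℕ} (hw : w ∈ B) (hw' : w' ∈ B)
    (hf : ({u0, u1, w} : Finset ℕ) ∈ E) (hf' : ({u3, u4, w'} : Finset ℕ) ∈ E) {e : Finset ℕ}
    (he : e ∈ E) (hB : e ⊆ B) (hwe : w ∈ e) (hwe' : w' ∈ e) : w = w' := by
  by_contra hne
  have g0 : u0 ∉ e := fun h => c.dis _ c.a0 (hB h)
  have g1 : u1 ∉ e := fun h => c.dis _ c.a1 (hB h)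
  have g3 : u3 ∉ e := fun h => c.dis _ c.a3 (hB h)
  have g4 : u4 ∉ e := fun h => c.dis _ c.a4 (hB h)
  have := c.n03
  have := c.n04
  have := c.n13
  have := c.n14
  refine c.noP.el hf he hf' w w' (by simp) hwe ?_ hwe' (by simp) ?_ ?_ <;> clear c hf hf' <;> grind

theorem Cfg.condT (c : Cfg E A B u0 u1 x u3 u4) {p : Finset ℕ}
    (hf : insert x p ∈ E) (hp : p ⊆ B) (hp2 : p.card = 2) {e : Finset ℕ}
    (he : e ∈ E) (hB : e ⊆ B) (hd : ¬ Disjoint e p) : p ⊆ e := by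
  obtain ⟨a, b, hab, rfl⟩ := Finset.card_eq_two.1 hp2
  have g0 : u0 ∉ e := fun h => c.dis _ c.a0 (hB h)
  have g1 : u1 ∉ e := fun h => c.dis _ c.a1 (hB h)
  have gx : x ∉ e := fun h => c.dis _ c.ax (hB h)
  have g0' : u0 ∉ ({a, b} : Finset ℕ) := fun h => c.dis _ c.a0 (hp h)
  have g1' : u1 ∉ ({a, b} : Finset ℕ) := fun h => c.dis _ c.a1 (hp h)
  have n0x := c.n0x
  have n1x := c.n1x
  obtain ⟨v, hv, hv2⟩ := Finset.not_disjoint_iff.1 hd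
  by_contra hne
  refine c.noP.el c.e1 hf he x v (by simp) (by simp) ?_ (Finset.mem_insert_of_mem hv2) hv ?_ ?_
  · clear * - g0' g1' n0x n1x; grind
  · clear * - gx hv hv2 hne; grind
  · clear * - g0 g1 gx; grind

theorem Cfg.condST (c : Cfg E A B u0 u1 x u3 u4) {p : Finset ℕ}
    (hf : insert x p ∈ E) (hp : p ⊆ B) {w : ℕ} (hw : w ∈ p) (hwE : ({u0, u1, w} : Finset ℕ) ∈ E) :
    False := by
  have g0 : u0 ∉ p := fun h => c.dis _ c.a0 (hp h)
  have g1 : u1 ∉ p := fun h => c.dis _ c.a1 (hp h)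
  have gx : x ∉ p := fun h => c.dis _ c.ax (hp h)
  have g3 : u3 ∉ p := fun h => c.dis _ c.a3 (hp h)
  have g4 : u4 ∉ p := fun h => c.dis _ c.a4 (hp h)
  have := c.n03
  have := c.n04
  have := c.n13
  have := c.n14
  have := c.n0x
  have := c.n1x
  have := c.e2
  refine c.noP.el hwE hf c.e2 w x (by simp) (Finset.mem_insert_of_mem hw) ?_ (by simp) (by simp)
    ?_ ?_ <;> clear c hf hwE <;> grind

/-- edges in `A` avoiding `x` -/
theorem Cfg.clsA (c : Cfg E A B u0 u1 x u3 u4) {h : Finset ℕ} (hh : h ∈ E) (hA : h ⊆ A)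
    (hx : x ∉ h) (h0 : u0 ∈ h) : (∀ v ∈ h, v = u0 ∨ v = u1 ∨ v = u3 ∨ v = u4) ∨
      ∃ w ∈ A \ {u0, u1, x, u3, u4}, h = {u0, u1, w} := by
  by_cases hc : ∀ v ∈ h, v = u0 ∨ v = u1 ∨ v = u3 ∨ v = u4
  · exact Or.inl hc
  right
  push Not at hc
  obtain ⟨w, hw, w0, w1, w3, w4⟩ := hc
  have wx : w ≠ x := by rintro rfl; exact hx hw
  refine ⟨w, by simp [w0, w1, w3, w4, wx, hA hw], ?_⟩
  obtain ⟨v, hv, v0, vw, heq⟩ := third (c.c3 h hh) h0 hw (Ne.symm w0)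
  have vx : v ≠ x := by rintro rfl; exact hx hv
  by_cases v1 : v = u1
  · subst v1; rw [heq]; ext; simp; tauto
  exfalso
  have tri : ∀ s s', s ≠ s' → s ≠ u0 → s ≠ u1 → s' ≠ u0 → s' ≠ u1 → s ≠ x → s' ≠ x → w ≠ s →
      w ≠ s' → ({x, s, s'} : Finset ℕ) ∈ E → v = s → False := by
    intro s s' hss s0 s1 s0' s1' sx sx' ws ws' hE hvs
    have t1 : ({u0, s, w} : Finset ℕ) ∈ E := by
      rw [show ({u0, s, w} : Finset ℕ) = h by rw [heq, hvs]; ext; simp; tauto]; exact hh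
    have t2 : ({x, u0, u1} : Finset ℕ) ∈ E := c.swap.e2
    have n0x := c.n0x
    have n1x := c.n1x
    have n01 := c.n01
    refine c.noC x u0 s w s' u1 n0x.symm (Ne.symm s0) (Ne.symm sx) ws' s1' w1
      ?_ ?_ ?_ t1 hE t2
    · simp [*]
    · simp [Ne.symm hss, *]
    · simp [n01.symm, Ne.symm s1, *]
  by_cases v3 : v = u3
  · exact tri u3 u4 c.n34 c.n03.symm c.n13.symm c.n04.symm c.n14.symm c.nx3.symm c.nx4.symm w3 w4
      c.e2 v3
  by_cases v4 : v = u4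
  · exact tri u4 u3 c.n34.symm c.n04.symm c.n14.symm c.n03.symm c.n13.symm c.nx4.symm c.nx3.symm
      w4 w3 c.swap.flip.swap.e2 v4
  have n01 := c.n01
  have n03 := c.n03
  have n04 := c.n04
  refine c.one hh h0 ?_ hx ?_ ?_ <;> rw [heq]
  · clear * - n01 w1 v1; grind
  · clear * - n03 w3 v3; grind
  · clear * - n04 w4 v4; grind

theorem Cfg.clsA' (c : Cfg E A B u0 u1 x u3 u4) {h : Finset ℕ} (hh : h ∈ E) (hA : h ⊆ A)
    (hx : x ∉ h) : (∀ v ∈ h, v = u0 ∨ v = u1 ∨ v = u3 ∨ v = u4) ∨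
      (∃ w ∈ A \ {u0, u1, x, u3, u4}, h = {u0, u1, w}) ∨
      (∃ w ∈ A \ {u0, u1, x, u3, u4}, h = {u3, u4, w}) := by
  by_cases h0 : u0 ∈ h
  · rcases c.clsA hh hA hx h0 with h | h
    · exact Or.inl h
    · exact Or.inr (Or.inl h)
  by_cases h1 : u1 ∈ h
  · rcases c.flip.clsA hh hA hx h1 with h | ⟨w, hw, hw2⟩
    · left; intro v hv; have := h v hv; tauto
    · right; left
      refine ⟨w, ?_, by rw [hw2]; ext; simp; tauto⟩
      simp only [Finset.mem_sdiff, Finset.mem_insert, Finset.mem_singleton] at hw ⊢; tauto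
  by_cases h3 : u3 ∈ h
  · rcases c.swap.clsA hh hA hx h3 with h | ⟨w, hw, hw2⟩
    · left; intro v hv; have := h v hv; tauto
    · right; right
      refine ⟨w, ?_, hw2⟩
      simp only [Finset.mem_sdiff, Finset.mem_insert, Finset.mem_singleton] at hw ⊢; tauto
  by_cases h4 : u4 ∈ h
  · rcases c.swap.flip.clsA hh hA hx h4 with h | ⟨w, hw, hw2⟩
    · left; intro v hv; have := h v hv; tauto
    · right; right
      refine ⟨w, ?_, by rw [hw2]; ext; simp; tauto⟩
      simp only [Finset.mem_sdiff, Finset.mem_insert, Finset.mem_singleton] at hw ⊢; tauto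
  exfalso
  have hB := c.inW h hh h0 h1 hx h3 h4
  have : 0 < h.card := by rw [c.c3 h hh]; norm_num
  obtain ⟨v, hv⟩ := Finset.card_pos.1 this
  exact c.dis v (hA hv) (hB hv)

end


section
variable {E : Finset (Finset ℕ)} {A B : Finset ℕ} {u0 u1 x u3 u4 : ℕ}

theorem Cfg.cardU (c : Cfg E A B u0 u1 x u3 u4) :
    ({u0, u1, x, u3, u4} : Finset ℕ).card = 5 ∧ ({x, u0, u1} : Finset ℕ).card = 3 ∧
    ({u0, u1, x, u3, u4} : Finset ℕ) ⊆ A ∧ ({x, u0, u1} : Finset ℕ) ⊆ A := by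
  obtain ⟨_, noP, _, n01, n0x, n03, n04, n1x, n13, n14, nx3, nx4, n34, e1, e2, a0, a1, ax, a3, a4,
    -, -, -, -⟩ := c
  refine ⟨?_, ?_, ?_, ?_⟩
  · rw [Finset.card_insert_of_notMem (by simp [*]), Finset.card_insert_of_notMem (by simp [*]),
      Finset.card_insert_of_notMem (by simp [*]), Finset.card_pair n34]
  · exact Finset.card_eq_three.2 ⟨x, u0, u1, n0x.symm, n1x.symm, n01, rfl⟩
  · simp [Finset.insert_subset_iff, *]
  · simp [Finset.insert_subset_iff, *]

theorem star_mem (A R h : Finset ℕ) (x : ℕ) (hh : h.card = 3) (hx : x ∈ h) (hA : h ⊆ A)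
    (hR : ∀ v ∈ h, v ≠ x → v ∉ R) (hxR : x ∈ R) :
    h ∈ ((A \ R).powersetCard 2).image (insert x) := by
  rw [Finset.mem_image]
  refine ⟨h.erase x, ?_, Finset.insert_erase hx⟩
  rw [Finset.mem_powersetCard, Finset.card_erase_of_mem hx, hh]
  refine ⟨?_, rfl⟩
  intro v hv
  rw [Finset.mem_erase] at hv
  rw [Finset.mem_sdiff]
  exact ⟨hA hv.2, hR v hv.2 hv.1⟩

theorem Cfg.boundS (c : Cfg E A B u0 u1 x u3 u4) {w : ℕ} (hw : w ∈ B)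
    (hf : ({u0, u1, w} : Finset ℕ) ∈ E) : (GB E A).card + 2 ≤ (A.card - 1).choose 2 := by
  obtain ⟨g, hg, hgB, hwg⟩ := c.cov w hw
  have g0 : u0 ∉ g := fun h => c.dis _ c.a0 (hgB h)
  have g1 : u1 ∉ g := fun h => c.dis _ c.a1 (hgB h)
  have both : ∀ h ∈ E, h ⊆ A → (u0 ∈ h ↔ u1 ∈ h) := by
    intro h hh hA
    have hwh : w ∉ h := fun q => c.dis _ (hA q) hw
    have hd : ∀ z ∈ h, z ∉ g := fun z hz q => c.dis z (hA hz) (hgB q)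
    have n01 := c.n01
    constructor
    · intro h0
      by_contra h1
      refine c.noP.el hh hf hg u0 w h0 (by simp) ?_ (by simp) hwg ?_ hd
      · clear * - h1 hwh; grind
      · clear * - g0 g1; grind
    · intro h1
      by_contra h0
      refine c.noP.el hh hf hg u1 w h1 (by simp) ?_ (by simp) hwg ?_ hd
      · clear * - h0 hwh; grind
      · clear * - g0 g1; grind
  obtain ⟨k5, k3, s5, s3⟩ := c.cardU
  have s2 : ({u0, u1} : Finset ℕ) ⊆ A := pair_sub c.a0 c.a1
  have hsub : GB E A ⊆ ((A \ {x, u0, u1}).powersetCard 2).image (insert x) ∪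
      ((A \ {u0, u1}).image (fun q => {u0, u1, q}) ∪
      (A \ {u0, u1, x, u3, u4}).image (fun q => {u3, u4, q})) := by
    intro h hh
    obtain ⟨hh, hA⟩ := mem_GB.1 hh
    have hb := both h hh hA
    rw [Finset.mem_union, Finset.mem_union]
    by_cases h0 : u0 ∈ h
    · right; left
      obtain ⟨v, hv, hv0, hv1, heq⟩ := third (c.c3 h hh) h0 (hb.1 h0) c.n01
      rw [Finset.mem_image]
      exact ⟨v, by simp [hA hv, hv0, hv1], heq.symm⟩
    have h1 : u1 ∉ h := fun q => h0 (hb.2 q)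
    by_cases hx : x ∈ h
    · left
      apply star_mem _ _ _ _ (c.c3 h hh) hx hA _ (by simp)
      intro v hv hvx
      simp only [Finset.mem_insert, Finset.mem_singleton, not_or]
      exact ⟨hvx, fun q => h0 (q ▸ hv), fun q => h1 (q ▸ hv)⟩
    · right; right
      rcases c.clsA' hh hA hx with q | ⟨w, hw, q⟩ | ⟨w, hw, q⟩
      · exfalso
        have : h ⊆ {u3, u4} := by
          intro v hv
          rcases q v hv with rfl | rfl | rfl | rfl
          · exact absurd hv h0
          · exact absurd hv h1
          · simp
          · simp
        have := (Finset.card_le_card this).trans Finset.card_le_two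
        rw [c.c3 h hh] at this
        omega
      · exfalso; apply h0; rw [q]; simp
      · rw [Finset.mem_image]; exact ⟨w, hw, q.symm⟩
  have h1 := Finset.card_le_card hsub
  have h2 := Finset.card_union_le (((A \ {x, u0, u1}).powersetCard 2).image (insert x))
    ((A \ {u0, u1}).image (fun q => {u0, u1, q}) ∪
      (A \ {u0, u1, x, u3, u4}).image (fun q => {u3, u4, q}))
  have h3 := Finset.card_union_le ((A \ {u0, u1}).image (fun q => ({u0, u1, q} : Finset ℕ)))
      ((A \ {u0, u1, x, u3, u4}).image (fun q => {u3, u4, q}))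
  have h4 := Finset.card_image_le (s := (A \ {x, u0, u1}).powersetCard 2) (f := insert x)
  have h5 := Finset.card_image_le (s := A \ {u0, u1}) (f := fun q => ({u0, u1, q} : Finset ℕ))
  have h6 := Finset.card_image_le (s := A \ {u0, u1, x, u3, u4})
    (f := fun q => ({u3, u4, q} : Finset ℕ))
  rw [Finset.card_powersetCard, Finset.card_sdiff_of_subset s3, k3] at h4
  rw [Finset.card_sdiff_of_subset s2, Finset.card_pair c.n01] at h5
  rw [Finset.card_sdiff_of_subset s5, k5] at h6
  have h7 := Finset.card_le_card s5
  obtain ⟨k, hk⟩ : ∃ k, A.card = k + 5 := ⟨A.card - 5, by omega⟩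
  rw [hk] at h4 h5 h6 ⊢
  have r1 : k + 5 - 1 = (k + 2) + 2 := by omega
  have r2 : k + 5 - 3 = k + 2 := by omega
  rw [r2] at h4
  rw [r1, ch_add]
  have c22 : Nat.choose 2 2 = 1 := rfl
  omega

/-- `x` is a closed vertex of `H[A]` when `T` is nonempty. -/
theorem Cfg.boundT1 (c : Cfg E A B u0 u1 x u3 u4)
    (hx1 : ∀ h ∈ GB E A, ∀ e ∈ GB E A, x ∉ h → x ∈ e → (h ∩ e).card ≠ 1)
    (hU : ∀ h ∈ GB E A, x ∉ h → (∃ w ∈ A \ {u0, u1, x, u3, u4}, h = {u0, u1, w}) ∨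
      (∃ w ∈ A \ {u0, u1, x, u3, u4}, h = {u3, u4, w}))
    {w : ℕ} (hw : w ∈ A \ {u0, u1, x, u3, u4}) (hf : {u0, u1, w} ∈ GB E A) :
    (GB E A).card ≤ (A.card - 1).choose 2 := by
  obtain ⟨k5, k3, s5, s3⟩ := c.cardU
  have hwx : x ≠ w := by rintro rfl; simp at hw
  have hsub : GB E A ⊆ ((A \ {x, u0, u1}).powersetCard 2).image (insert x) ∪
      ({{x, u0, u1}, {x, u0, w}, {x, u1, w}} ∪
      ((A \ {u0, u1, x, u3, u4}).image (fun q => {u0, u1, q}) ∪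
      (A \ {u0, u1, x, u3, u4}).image (fun q => {u3, u4, q}))) := by
    intro h hh
    have hh' := hh
    obtain ⟨hh, hA⟩ := mem_GB.1 hh
    rw [Finset.mem_union, Finset.mem_union, Finset.mem_union]
    by_cases hx : x ∈ h
    · by_cases h01 : u0 ∉ h ∧ u1 ∉ h
      · left
        apply star_mem _ _ _ _ (c.c3 h hh) hx hA _ (by simp)
        intro v hv hvx
        simp only [Finset.mem_insert, Finset.mem_singleton, not_or]
        exact ⟨hvx, fun q => h01.1 (q ▸ hv), fun q => h01.2 (q ▸ hv)⟩
      · right; left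
        have hne := hx1 _ hf h hh' (by simp [c.n0x.symm, c.n1x.symm, hwx]) hx
        have h2 := inter_two _ _ (by
          rw [Finset.not_disjoint_iff]
          by_cases q : u0 ∈ h
          · exact ⟨u0, by simp, q⟩
          · refine ⟨u1, by simp, ?_⟩
            by_contra r; exact h01 ⟨q, r⟩) hne
        by_cases q0 : u0 ∈ h
        · by_cases q1 : u1 ∈ h
          · rw [eq3 (c.c3 h hh) hx q0 q1 c.n0x.symm c.n1x.symm c.n01]; simp
          · have h3 : w ∈ h := by
              rw [show ({u0, u1, w} : Finset ℕ) = {u1, u0, w} by ext; simp; tauto] at h2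
              exact (off2 h2 q1).2
            have hw0 : u0 ≠ w := by rintro rfl; simp at hw
            rw [eq3 (c.c3 h hh) hx q0 h3 c.n0x.symm hwx hw0]; simp
        · have h3 := off2 h2 q0
          have hw1 : u1 ≠ w := by rintro rfl; simp at hw
          rw [eq3 (c.c3 h hh) hx h3.1 h3.2 c.n1x.symm hwx hw1]; simp
    · right; right
      rcases hU h hh' hx with ⟨w, hw, q⟩ | ⟨w, hw, q⟩
      · left; rw [Finset.mem_image]; exact ⟨w, hw, q.symm⟩
      · right; rw [Finset.mem_image]; exact ⟨w, hw, q.symm⟩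
  have h1 := Finset.card_le_card hsub
  have h2 := Finset.card_union_le (((A \ {x, u0, u1}).powersetCard 2).image (insert x))
    ({{x, u0, u1}, {x, u0, w}, {x, u1, w}} ∪
      ((A \ {u0, u1, x, u3, u4}).image (fun q => {u0, u1, q}) ∪
      (A \ {u0, u1, x, u3, u4}).image (fun q => {u3, u4, q})))
  have h2' := Finset.card_union_le ({{x, u0, u1}, {x, u0, w}, {x, u1, w}} : Finset (Finset ℕ))
      ((A \ {u0, u1, x, u3, u4}).image (fun q => ({u0, u1, q} : Finset ℕ)) ∪
      (A \ {u0, u1, x, u3, u4}).image (fun q => {u3, u4, q}))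
  have h3 := Finset.card_union_le ((A \ {u0, u1, x, u3, u4}).image
      (fun q => ({u0, u1, q} : Finset ℕ)))
      ((A \ {u0, u1, x, u3, u4}).image (fun q => {u3, u4, q}))
  have h3' := Finset.card_le_three (a := ({x, u0, u1} : Finset ℕ)) (b := {x, u0, w})
    (c := {x, u1, w})
  have h4 := Finset.card_image_le (s := (A \ {x, u0, u1}).powersetCard 2) (f := insert x)
  have h5 := Finset.card_image_le (s := A \ {u0, u1, x, u3, u4})
    (f := fun q => ({u0, u1, q} : Finset ℕ))
  have h6 := Finset.card_image_le (s := A \ {u0, u1, x, u3, u4})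
    (f := fun q => ({u3, u4, q} : Finset ℕ))
  rw [Finset.card_powersetCard, Finset.card_sdiff_of_subset s3, k3] at h4
  rw [Finset.card_sdiff_of_subset s5, k5] at h5 h6
  have h7 := Finset.card_le_card s5
  obtain ⟨k, hk⟩ : ∃ k, A.card = k + 5 := ⟨A.card - 5, by omega⟩
  rw [hk] at h4 h5 h6 ⊢
  have r1 : k + 5 - 1 = (k + 2) + 2 := by omega
  have r2 : k + 5 - 3 = k + 2 := by omega
  rw [r2] at h4
  rw [r1, ch_add]
  have c22 : Nat.choose 2 2 = 1 := rfl
  omega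

theorem Cfg.boundT (c : Cfg E A B u0 u1 x u3 u4) {p : Finset ℕ} (hp : p ⊆ B)
    (hf : insert x p ∈ E) : (GB E A).card ≤ (A.card - 1).choose 2 := by
  have hx1 : ∀ h ∈ GB E A, ∀ e ∈ GB E A, x ∉ h → x ∈ e → (h ∩ e).card ≠ 1 := by
    intro h hh e he hxh hxe h1
    obtain ⟨hh, hA⟩ := mem_GB.1 hh
    obtain ⟨he, hA'⟩ := mem_GB.1 he
    refine c.noP h hh e he _ hf h1 (inter_one (v := x) hxe (by simp) ?_) ?_
    · intro z hz hz2
      rcases Finset.mem_insert.1 hz2 with q | q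
      · exact q
      · exact absurd (hp q) (c.dis z (hA' hz))
    · rw [Finset.disjoint_left]
      intro z hz hz2
      rcases Finset.mem_insert.1 hz2 with q | q
      · exact hxh (q ▸ hz)
      · exact c.dis z (hA hz) (hp q)
  obtain ⟨k5, k3, s5, s3⟩ := c.cardU
  have hU : ∀ h ∈ GB E A, x ∉ h → (∃ w ∈ A \ {u0, u1, x, u3, u4}, h = {u0, u1, w}) ∨
      (∃ w ∈ A \ {u0, u1, x, u3, u4}, h = {u3, u4, w}) := by
    intro h hh hxh
    have hh' := hh
    obtain ⟨hh, hA⟩ := mem_GB.1 hh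
    rcases c.clsA' hh hA hxh with q | q
    · exfalso
      have he1 : {u0, u1, x} ∈ GB E A := mem_GB.2 ⟨c.e1, fun v hv => s3 (by
        simp only [Finset.mem_insert, Finset.mem_singleton] at hv ⊢; tauto)⟩
      have he2 : {x, u3, u4} ∈ GB E A := mem_GB.2 ⟨c.e2, fun v hv => s5 (by
        simp only [Finset.mem_insert, Finset.mem_singleton] at hv ⊢; tauto)⟩
      have i1 := hx1 h hh' _ he1 hxh (by simp)
      have i2 := hx1 h hh' _ he2 hxh (by simp)
      have hu : h = (h ∩ {u0, u1, x}) ∪ (h ∩ {x, u3, u4}) := by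
        ext v
        simp only [Finset.mem_union, Finset.mem_inter, Finset.mem_insert, Finset.mem_singleton]
        have := q v
        tauto
      have hdj : Disjoint (h ∩ {u0, u1, x}) (h ∩ {x, u3, u4}) := by
        have n03 := c.n03
        have n04 := c.n04
        have n13 := c.n13
        have n14 := c.n14
        rw [Finset.disjoint_left]
        clear * - hxh n03 n04 n13 n14
        grind
      have hcd := congrArg Finset.card hu
      rw [Finset.card_union_of_disjoint hdj, c.c3 h hh] at hcd
      have l1 : (h ∩ {u0, u1, x}).card ≤ 2 := by
        refine le_trans (Finset.card_le_card (t := {u0, u1}) ?_) Finset.card_le_two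
        clear * - hxh
        intro v hv
        grind
      have l2 : (h ∩ {x, u3, u4}).card ≤ 2 := by
        refine le_trans (Finset.card_le_card (t := {u3, u4}) ?_) Finset.card_le_two
        clear * - hxh
        intro v hv
        grind
      omega
    · exact q
  by_cases hall : ∀ h ∈ GB E A, x ∈ h
  · have := phi_star (A.erase x) x (by simp) (GB E A) (by
      intro h hh
      refine ⟨c.c3 h (mem_GB.1 hh).1, hall h hh, ?_⟩
      rw [Finset.insert_erase c.ax]
      exact (mem_GB.1 hh).2)
    rwa [Finset.card_erase_of_mem c.ax] at this
  · push Not at hall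
    obtain ⟨h, hh, hxh⟩ := hall
    rcases hU h hh hxh with ⟨w, hw, q⟩ | ⟨w, hw, q⟩
    · rw [q] at hh
      exact c.boundT1 hx1 hU hw hh
    · rw [q] at hh
      have hset : A \ {u3, u4, x, u0, u1} = A \ {u0, u1, x, u3, u4} := by
        ext; simp; tauto
      refine c.swap.boundT1 hx1 ?_ (w := w) ?_ hh
      · intro h hh hx
        rw [hset]
        exact (hU h hh hx).symm
      · rw [hset]; exact hw

theorem Cfg.total (c : Cfg E A B u0 u1 x u3 u4) (hB : 5 ≤ B.card)
    (hH : ∃ f ∈ E, ¬ f ⊆ B ∧ ¬ f ⊆ A) :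
    E.card ≤ (A.card - 1).choose 2 + (B.card - 1).choose 2 + 3 := by
  set G := GB E B with hG
  set S0 := B.filter (fun w => ({u0, u1, w} : Finset ℕ) ∈ E) with hS0
  set S1 := B.filter (fun w => ({u3, u4, w} : Finset ℕ) ∈ E) with hS1
  set T := (B.powersetCard 2).filter (fun p => insert x p ∈ E) with hT
  have mS0 : ∀ w, w ∈ S0 ↔ w ∈ B ∧ ({u0, u1, w} : Finset ℕ) ∈ E := fun w => by simp [hS0]
  have mS1 : ∀ w, w ∈ S1 ↔ w ∈ B ∧ ({u3, u4, w} : Finset ℕ) ∈ E := fun w => by simp [hS1]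
  have mT : ∀ p, p ∈ T ↔ (p ⊆ B ∧ p.card = 2) ∧ insert x p ∈ E := fun p => by
    rw [hT, Finset.mem_filter, Finset.mem_powersetCard]
  have mG : ∀ e, e ∈ G ↔ e ∈ E ∧ e ⊆ B := fun e => mem_GB
  have H1 : ∀ f ∈ E, ¬ f ⊆ B → ¬ f ⊆ A → (∃ w ∈ S0, f = {u0, u1, w}) ∨ (∃ w ∈ S1, f = {u3, u4, w})
      ∨ ∃ p ∈ T, f = insert x p := by
    intro f hf hfB hfA
    obtain ⟨w, hwf, hwA⟩ := Finset.not_subset.1 hfA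
    have hw : w ∈ B := (c.sub f hf w hwf).resolve_left hwA
    rcases c.cls hf hw hwf hfB with q | q | ⟨w', hw', hne, q⟩
    · left; exact ⟨w, (mS0 w).2 ⟨hw, q ▸ hf⟩, q⟩
    · right; left; exact ⟨w, (mS1 w).2 ⟨hw, q ▸ hf⟩, q⟩
    · right; right
      exact ⟨{w, w'}, (mT _).2 ⟨⟨pair_sub hw hw', Finset.card_pair hne.symm⟩, q ▸ hf⟩, q⟩
  have hsub : E ⊆ GB E A ∪ (G ∪ (S0.image (fun w => {u0, u1, w}) ∪
      (S1.image (fun w => {u3, u4, w}) ∪ T.image (insert x)))) := by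
    intro f hf
    simp only [Finset.mem_union]
    by_cases hA : f ⊆ A
    · left; exact mem_GB.2 ⟨hf, hA⟩
    by_cases hfB : f ⊆ B
    · right; left; exact mem_GB.2 ⟨hf, hfB⟩
    right; right
    rcases H1 f hf hfB hA with ⟨w, hw, q⟩ | ⟨w, hw, q⟩ | ⟨p, hp, q⟩
    · left; exact Finset.mem_image.2 ⟨w, hw, q.symm⟩
    · right; left; exact Finset.mem_image.2 ⟨w, hw, q.symm⟩
    · right; right; exact Finset.mem_image.2 ⟨p, hp, q.symm⟩
  have hcard : E.card ≤ (GB E A).card + (G.card + (S0.card + (S1.card + T.card))) := by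
    refine (Finset.card_le_card hsub).trans ?_
    refine (Finset.card_union_le _ _).trans (Nat.add_le_add le_rfl ?_)
    refine (Finset.card_union_le _ _).trans (Nat.add_le_add le_rfl ?_)
    refine (Finset.card_union_le _ _).trans (Nat.add_le_add Finset.card_image_le ?_)
    refine (Finset.card_union_le _ _).trans (Nat.add_le_add Finset.card_image_le ?_)
    exact Finset.card_image_le
  have hYY : YY G T S0 S1 B = G.card + S0.card + S1.card + T.card := by
    have e1 : GB G B = G := by
      ext e; rw [mem_GB, mG]; tauto
    have e2 : GB T B = T := by
      ext e; rw [mem_GB, mT]; tauto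
    have e3 : S0 ∩ B = S0 := Finset.inter_eq_left.2 (Finset.filter_subset _ _)
    have e4 : S1 ∩ B = S1 := Finset.inter_eq_left.2 (Finset.filter_subset _ _)
    unfold YY ZZ
    rw [e1, e2, e3, e4]
  have G3 : ∀ e ∈ G, e.card = 3 := fun e he => c.c3 e ((mG e).1 he).1
  have GC : NoC G := by
    intro a b c' a' b' c'' q1 q2 q3 q4 q5 q6 q7 q8 q9 x1 x2 x3
    exact c.noC a b c' a' b' c'' q1 q2 q3 q4 q5 q6 q7 q8 q9 ((mG _).1 x1).1 ((mG _).1 x2).1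
      ((mG _).1 x3).1
  have T2 : ∀ q ∈ T, q.card = 2 := fun q hq => ((mT q).1 hq).1.2
  have TT : ∀ q ∈ T, ∀ e ∈ G, ¬ Disjoint e q → q ⊆ e := by
    intro q hq e he hd
    obtain ⟨⟨q1, q2⟩, q3⟩ := (mT q).1 hq
    exact c.condT q3 q1 q2 ((mG e).1 he).1 ((mG e).1 he).2 hd
  have TC : Cov G T B := by
    intro p hp hpB
    have : 0 < p.card := by rw [T2 p hp]; norm_num
    obtain ⟨v, hv⟩ := Finset.card_pos.1 this
    obtain ⟨g, hg, hgB, hvg⟩ := c.cov v (hpB hv)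
    have hgG := (mG g).2 ⟨hg, hgB⟩
    exact ⟨g, hgG, hgB, TT p hp g hgG (Finset.not_disjoint_iff.2 ⟨v, hvg, hv⟩)⟩
  by_cases hS : ∃ w ∈ B, w ∈ S0 ∨ w ∈ S1
  · have h1 := psiS G T S0 S1 G3 GC (by
        intro w hw e he e' he' hwe hwe'
        obtain ⟨he, heB⟩ := (mG e).1 he
        obtain ⟨he', heB'⟩ := (mG e').1 he'
        rcases hw with hw | hw
        · exact c.condS ((mS0 w).1 hw).2 he he' heB heB' hwe hwe'
        · exact c.swap.condS ((mS1 w).1 hw).2 he he' heB heB' hwe hwe')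
      (by
        intro w hw w' hw' e he hwe hwe'
        obtain ⟨he, heB⟩ := (mG e).1 he
        exact c.condS01 ((mS0 w).1 hw).1 ((mS1 w').1 hw').1 ((mS0 w).1 hw).2 ((mS1 w').1 hw').2
          he heB hwe hwe')
      T2 TT (by
        intro q hq w hw
        obtain ⟨⟨q1, q2⟩, q3⟩ := (mT q).1 hq
        exact ⟨fun h => c.condST q3 q1 hw ((mS0 w).1 h).2,
          fun h => c.swap.condST q3 q1 hw ((mS1 w).1 h).2⟩) B.card B rfl TC hS
    have h2 : (GB E A).card + 2 ≤ (A.card - 1).choose 2 := by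
      obtain ⟨w, hw, h | h⟩ := hS
      · exact c.boundS hw ((mS0 w).1 h).2
      · exact c.swap.boundS hw ((mS1 w).1 h).2
    omega
  · have z0 : S0 = ∅ := by
      rw [Finset.eq_empty_iff_forall_notMem]
      intro w hw; exact hS ⟨w, ((mS0 w).1 hw).1, Or.inl hw⟩
    have z1 : S1 = ∅ := by
      rw [Finset.eq_empty_iff_forall_notMem]
      intro w hw; exact hS ⟨w, ((mS1 w).1 hw).1, Or.inr hw⟩
    obtain ⟨f, hf, hfB, hfA⟩ := hH
    obtain ⟨p, hp⟩ : ∃ p, p ∈ T := by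
      rcases H1 f hf hfB hfA with ⟨w, hw, q⟩ | ⟨w, hw, q⟩ | ⟨p, hp, q⟩
      · rw [z0] at hw; simp at hw
      · rw [z1] at hw; simp at hw
      · exact ⟨p, hp⟩
    have hp' := (mT p).1 hp
    have h1 := psiT G T G3 GC T2 TT B p hB TC hp hp'.1.1
    have h2 := c.boundT hp'.1.1 hp'.2
    rw [z0, z1] at hYY hcard
    simp only [Finset.card_empty] at hYY hcard
    omega

theorem arith (a b n : ℕ) (ha : 5 ≤ a) (hb : 5 ≤ b) (hn : a + b = n) :
    (a - 1).choose 2 + (b - 1).choose 2 + 3 < (n - 6).choose 2 + 10 := by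
  obtain ⟨p, rfl⟩ : ∃ p, a = p + 1 := ⟨a - 1, by omega⟩
  obtain ⟨q, rfl⟩ : ∃ q, b = q + 5 := ⟨b - 5, by omega⟩
  have e1 : n - 6 = p + q := by omega
  have e2 : p + 1 - 1 = p := by omega
  have e3 : q + 5 - 1 = q + 4 := by omega
  rw [e1, e2, e3, ch_add, ch_add]
  have : 4 * q ≤ p * q := Nat.mul_le_mul_right q (by omega)
  have c42 : Nat.choose 4 2 = 6 := rfl
  omega

end

theorem third2 {f : Finset ℕ} {c : ℕ} (hf : f.card = 3) (hc : c ∈ f) :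
    ∃ a b, a ≠ b ∧ a ≠ c ∧ b ≠ c ∧ f = {a, b, c} := by
  obtain ⟨a, ha, hac⟩ := Finset.exists_mem_ne (show 1 < f.card by omega) c
  obtain ⟨b, hb, hba, hbc, h⟩ := third hf ha hc hac
  refine ⟨a, b, hba.symm, hac, hbc, ?_⟩
  rw [h]; ext; simp; tauto

theorem noP_of_free (H : ThreeGraph) (hval : H.IsValid) (hP : H.Free pathP) : NoP H.edges := by
  intro e he f hf g hg hef hfg heg
  obtain ⟨c, hc⟩ := Finset.card_eq_one.1 hef
  obtain ⟨d, hd⟩ := Finset.card_eq_one.1 hfg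
  have hc1 : c ∈ e ∩ f := by rw [hc]; simp
  have hd1 : d ∈ f ∩ g := by rw [hd]; simp
  rw [Finset.mem_inter] at hc1 hd1
  have hef' : ∀ z ∈ e, z ∈ f → z = c := fun z h1 h2 => by
    have : z ∈ e ∩ f := Finset.mem_inter.2 ⟨h1, h2⟩
    rw [hc] at this; simpa using this
  have hfg' : ∀ z ∈ f, z ∈ g → z = d := fun z h1 h2 => by
    have : z ∈ f ∩ g := Finset.mem_inter.2 ⟨h1, h2⟩
    rw [hd] at this; simpa using this
  have heg' : ∀ z ∈ e, ∀ y ∈ g, z ≠ y := fun z h1 y h2 h3 =>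
    Finset.disjoint_left.1 heg h1 (h3 ▸ h2)
  have hcd : c ≠ d := heg' c hc1.1 d hd1.2
  obtain ⟨a, b, nab, nac, nbc, eeq⟩ := third2 (hval e he).1 hc1.1
  obtain ⟨m, hm, nmc, nmd, feq⟩ := third (hval f hf).1 hc1.2 hd1.1 hcd
  obtain ⟨r, s, nrs, nrd, nsd, geq⟩ := third2 (hval g hg).1 hd1.2
  have hae : a ∈ e := by rw [eeq]; simp
  have hbe : b ∈ e := by rw [eeq]; simp
  have hrg : r ∈ g := by rw [geq]; simp
  have hsg : s ∈ g := by rw [geq]; simp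
  have nam : a ≠ m := fun h => nmc (hef' m (h ▸ hae) hm)
  have nbm : b ≠ m := fun h => nmc (hef' m (h ▸ hbe) hm)
  have nrm : r ≠ m := fun h => nmd (hfg' m hm (h ▸ hrg))
  have nsm : s ≠ m := fun h => nmd (hfg' m hm (h ▸ hsg))
  have n1 := heg' a hae d hd1.2
  have n2 := heg' b hbe d hd1.2
  have n3 := heg' a hae r hrg
  have n4 := heg' b hbe r hrg
  have n5 := heg' c hc1.1 r hrg
  have n6 := heg' a hae s hsg
  have n7 := heg' b hbe s hsg
  have n8 := heg' c hc1.1 s hsg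
  have hnd : [a, b, c, m, d, r, s].Nodup := by
    simp only [List.nodup_cons, List.mem_cons, List.not_mem_nil, or_false, not_or,
      not_false_eq_true, List.nodup_nil, and_true]
    exact ⟨⟨nab, nac, nam, n1, n3, n6⟩, ⟨nbc, nbm, n2, n4, n7⟩, ⟨nmc.symm, hcd, n5, n8⟩,
      ⟨nmd, nrm.symm, nsm.symm⟩, ⟨nrd.symm, nsd.symm⟩, nrs⟩
  apply hP
  refine ⟨fun i => [a, b, c, m, d, r, s].getD i 0, ?_, ?_, ?_⟩
  · intro i hi j hj hij
    have hi' : i < 7 := by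
      simp only [pathP, Finset.mem_coe, Finset.mem_insert, Finset.mem_singleton] at hi; omega
    have hj' : j < 7 := by
      simp only [pathP, Finset.mem_coe, Finset.mem_insert, Finset.mem_singleton] at hj; omega
    simp only at hij
    rw [List.getD_eq_getElem _ _ (by simpa using hi'),
      List.getD_eq_getElem _ _ (by simpa using hj')] at hij
    exact (hnd.getElem_inj_iff).1 hij
  · intro v hv
    simp only [pathP, Finset.mem_insert, Finset.mem_singleton] at hv
    rcases hv with rfl | rfl | rfl | rfl | rfl | rfl | rfl
    · exact (hval e he).2 hae
    · exact (hval e he).2 hbe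
    · exact (hval e he).2 hc1.1
    · exact (hval f hf).2 hm
    · exact (hval f hf).2 hd1.1
    · exact (hval g hg).2 hrg
    · exact (hval g hg).2 hsg
  · intro q hq
    simp only [pathP, Finset.mem_insert, Finset.mem_singleton] at hq
    rcases hq with rfl | rfl | rfl
    · simp only [Finset.image_insert, Finset.image_singleton]
      change ({a, b, c} : Finset ℕ) ∈ H.edges
      rw [← eeq]; exact he
    · simp only [Finset.image_insert, Finset.image_singleton]
      change ({c, m, d} : Finset ℕ) ∈ H.edges
      rw [show ({c, m, d} : Finset ℕ) = f by rw [feq]; ext; simp; tauto]; exact hf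
    · simp only [Finset.image_insert, Finset.image_singleton]
      change ({d, r, s} : Finset ℕ) ∈ H.edges
      rw [show ({d, r, s} : Finset ℕ) = g by rw [geq]; ext; simp; tauto]; exact hg

theorem noC_of_free (H : ThreeGraph) (hval : H.IsValid) (hC : H.Free triangleC) :
    NoC H.edges := by
  intro a b c a' b' c' nab nbc nac nab' nbc' nac' ha hb hc h1 h2 h3
  simp only [Finset.mem_insert, Finset.mem_singleton, not_or] at ha hb hc
  -- order: a, c', b, a', c, b'
  have hnd : [a, c', b, a', c, b'].Nodup := by
    simp only [List.nodup_cons, List.mem_cons, List.not_mem_nil, or_false, not_or,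
      not_false_eq_true, List.nodup_nil, and_true]
    exact ⟨⟨Ne.symm hc.1, nab, Ne.symm ha.1, nac, Ne.symm hb.1⟩,
      ⟨hc.2.1, nac'.symm, hc.2.2, nbc'.symm⟩, ⟨Ne.symm ha.2.1, nbc, Ne.symm hb.2.1⟩,
      ⟨ha.2.2, nab'⟩, Ne.symm hb.2.2⟩
  apply hC
  refine ⟨fun i => [a, c', b, a', c, b'].getD i 0, ?_, ?_, ?_⟩
  · intro i hi j hj hij
    have hi' : i < 6 := by
      simp only [triangleC, Finset.mem_coe, Finset.mem_insert, Finset.mem_singleton] at hi; omega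
    have hj' : j < 6 := by
      simp only [triangleC, Finset.mem_coe, Finset.mem_insert, Finset.mem_singleton] at hj; omega
    simp only at hij
    rw [List.getD_eq_getElem _ _ (by simpa using hi'),
      List.getD_eq_getElem _ _ (by simpa using hj')] at hij
    exact (hnd.getElem_inj_iff).1 hij
  · intro v hv
    simp only [triangleC, Finset.mem_insert, Finset.mem_singleton] at hv
    rcases hv with rfl | rfl | rfl | rfl | rfl | rfl
    · exact (hval _ h3).2 (by simp)
    · exact (hval _ h3).2 (by simp)
    · exact (hval _ h3).2 (by simp)
    · exact (hval _ h1).2 (by simp)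
    · exact (hval _ h1).2 (by simp)
    · exact (hval _ h2).2 (by simp)
  · intro q hq
    simp only [triangleC, Finset.mem_insert, Finset.mem_singleton] at hq
    rcases hq with rfl | rfl | rfl
    · simp only [Finset.image_insert, Finset.image_singleton]
      change ({a, c', b} : Finset ℕ) ∈ H.edges
      rw [show ({a, c', b} : Finset ℕ) = {a, b, c'} by ext; simp; tauto]; exact h3
    · simp only [Finset.image_insert, Finset.image_singleton]
      change ({b, a', c} : Finset ℕ) ∈ H.edges
      rw [show ({b, a', c} : Finset ℕ) = {b, c, a'} by ext; simp; tauto]; exact h1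
    · simp only [Finset.image_insert, Finset.image_singleton]
      change ({c, b', a} : Finset ℕ) ∈ H.edges
      rw [show ({c, b', a} : Finset ℕ) = {a, c, b'} by ext; simp; tauto]; exact h2


/-- Fact 6: in the Setup with `n ≥ 12`, if `|W₁| ≥ 5` and `H₁ ≠ ∅`, then
`|H| < binom(n-6,2) + 10`. -/
theorem fact_W1_ge_five (n : ℕ) (hn : 12 ≤ n) (H : ThreeGraph)
    (u0 u1 u2 u3 u4 : ℕ) (t : Finset ℕ)
    (hval : H.IsValid) (hcard : H.verts.card = n) (hconn : H.Connected)
    (hP : H.Free pathP) (hC : H.Free triangleC)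
    (hdist : List.Pairwise (· ≠ ·) [u0, u1, u2, u3, u4])
    (he1 : ({u0, u1, u2} : Finset ℕ) ∈ H.edges)
    (he2 : ({u2, u3, u4} : Finset ℕ) ∈ H.edges)
    (ht : t ∈ H.edges) (htdisj : Disjoint t ({u0, u1, u2, u3, u4} : Finset ℕ))
    (hW1 : 5 ≤ (W1set H {u0, u1, u2, u3, u4}).card)
    (hH1 : (H1set H {u0, u1, u2, u3, u4}).Nonempty) :
    H.edges.card < (n - 6).choose 2 + 10 := by
  simp only [List.pairwise_cons, List.mem_cons, List.not_mem_nil, or_false, forall_eq_or_imp,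
    forall_eq, List.Pairwise.nil, and_true] at hdist
  set U : Finset ℕ := {u0, u1, u2, u3, u4} with hU
  have mU : ∀ v, v ∈ U ↔ v = u0 ∨ v = u1 ∨ v = u2 ∨ v = u3 ∨ v = u4 := fun v => by simp [hU]
  have hUV : U ⊆ H.verts := by
    intro v hv
    rcases (mU v).1 hv with rfl | rfl | rfl | rfl | rfl
    · exact (hval _ he1).2 (by simp)
    · exact (hval _ he1).2 (by simp)
    · exact (hval _ he1).2 (by simp)
    · exact (hval _ he2).2 (by simp)
    · exact (hval _ he2).2 (by simp)
  set B := W1set H U with hB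
  have mB : ∀ v, v ∈ B ↔ (v ∈ H.verts ∧ v ∉ U) ∧ ∃ e ∈ H.edges, e ⊆ Wset H U ∧ v ∈ e := by
    intro v
    have hW : v ∈ Wset H U ↔ v ∈ H.verts ∧ v ∉ U := by rw [Wset, Finset.mem_sdiff]
    rw [hB, W1set, Finset.mem_sdiff, W0set, Finset.mem_filter, ← hW]
    constructor
    · rintro ⟨h1, h2⟩
      refine ⟨h1, ?_⟩
      by_contra h3
      exact h2 ⟨h1, fun e he heW hv => h3 ⟨e, he, heW, hv⟩⟩
    · rintro ⟨h1, e, he, heW, hv⟩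
      exact ⟨h1, fun h2 => h2.2 e he heW hv⟩
  have hBV : B ⊆ H.verts := fun v hv => ((mB v).1 hv).1.1
  have hWB : ∀ e ∈ H.edges, e ⊆ Wset H U → e ⊆ B := by
    intro e he heW v hv
    have := heW hv
    rw [Wset, Finset.mem_sdiff] at this
    exact (mB v).2 ⟨this, e, he, heW, hv⟩
  have hUA : ∀ v, v ∈ U → v ∈ H.verts \ B := by
    intro v hv
    rw [Finset.mem_sdiff]
    exact ⟨hUV hv, fun h => ((mB v).1 h).1.2 hv⟩
  have c : Cfg H.edges (H.verts \ B) B u0 u1 u2 u3 u4 :=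
    { c3 := fun e he => (hval e he).1
      noP := noP_of_free H hval hP
      noC := noC_of_free H hval hC
      n01 := hdist.1.1
      n0x := hdist.1.2.1
      n03 := hdist.1.2.2.1
      n04 := hdist.1.2.2.2
      n1x := hdist.2.1.1
      n13 := hdist.2.1.2.1
      n14 := hdist.2.1.2.2
      nx3 := hdist.2.2.1.1
      nx4 := hdist.2.2.1.2
      n34 := hdist.2.2.2.1
      e1 := he1
      e2 := he2
      a0 := hUA _ (by simp [hU])
      a1 := hUA _ (by simp [hU])
      ax := hUA _ (by simp [hU])
      a3 := hUA _ (by simp [hU])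
      a4 := hUA _ (by simp [hU])
      dis := fun v hv => (Finset.mem_sdiff.1 hv).2
      cov := by
        intro w hw
        obtain ⟨-, g, hg, hgW, hwg⟩ := (mB w).1 hw
        exact ⟨g, hg, hWB g hg hgW, hwg⟩
      sub := by
        intro e he v hv
        by_cases h : v ∈ B
        · exact Or.inr h
        · exact Or.inl (Finset.mem_sdiff.2 ⟨(hval e he).2 hv, h⟩)
      inW := by
        intro e he h0 h1 h2 h3 h4
        apply hWB e he
        intro v hv
        rw [Wset, Finset.mem_sdiff]
        refine ⟨(hval e he).2 hv, fun h => ?_⟩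
        rcases (mU v).1 h with rfl | rfl | rfl | rfl | rfl
        · exact h0 hv
        · exact h1 hv
        · exact h2 hv
        · exact h3 hv
        · exact h4 hv }
  have htot := c.total hW1 (by
    obtain ⟨f, hf⟩ := hH1
    rw [H1set, Finset.mem_filter] at hf
    obtain ⟨hf, ⟨v, hv⟩, ⟨w, hw⟩⟩ := hf
    rw [Finset.mem_inter] at hv hw
    refine ⟨f, hf, fun h => ?_, fun h => ?_⟩
    · exact ((mB v).1 (h hv.1)).1.2 hv.2
    · exact (Finset.mem_sdiff.1 (h hw.1)).2 hw.2)
  have ha : 5 ≤ (H.verts \ B).card := by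
    rw [← c.cardU.1]
    exact Finset.card_le_card c.cardU.2.2.1
  have hsum : (H.verts \ B).card + B.card = n := by
    rw [← hcard]; exact Finset.card_sdiff_add_card_eq_card hBV
  exact lt_of_le_of_lt htot (arith _ _ n ha hW1 hsum)
end

section
/- Let H be as in the Setup (a connected {P,C}-free 3-graph on n vertices containing a copy of P_2 ∪ K_3, with U, W_0, W_1, H[U] and H_1 defined from a fixed such copy). If |W_1| ≥ 7, then |H[U]| + |H_1| ≤ 2|W_1| − 1. -/
lemma noP_aux (H : ThreeGraph) (hval : H.IsValid) (hP : H.Free pathP)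
    (a b c d e f g : ℕ) (hn : [a,b,c,d,e,f,g].Nodup)
    (h1 : ({a,b,c} : Finset ℕ) ∈ H.edges) (h2 : ({c,d,e} : Finset ℕ) ∈ H.edges)
    (h3 : ({e,f,g} : Finset ℕ) ∈ H.edges) : False := by
  apply hP
  have v1 := (hval _ h1).2
  have v2 := (hval _ h2).2
  have v3 := (hval _ h3).2
  refine ⟨fun i => [a,b,c,d,e,f,g].getD i 0, ?_, ?_, ?_⟩
  · intro i hi j hj hij
    simp only [pathP, Finset.coe_insert, Finset.coe_singleton, Set.mem_insert_iff,
      Set.mem_singleton_iff] at hi hj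
    have hi' : i < [a,b,c,d,e,f,g].length := by simp; omega
    have hj' : j < [a,b,c,d,e,f,g].length := by simp; omega
    simp only [List.getD_eq_getElem _ _ hi', List.getD_eq_getElem _ _ hj'] at hij
    exact (List.Nodup.getElem_inj_iff hn).1 hij
  · intro v hv
    simp only [Finset.insert_subset_iff, Finset.singleton_subset_iff] at v1 v2 v3
    simp only [pathP, Finset.mem_insert, Finset.mem_singleton] at hv
    rcases hv with rfl | rfl | rfl | rfl | rfl | rfl | rfl <;> simp [v1, v2, v3]
  · intro s hs
    simp only [pathP, Finset.mem_insert, Finset.mem_singleton] at hs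
    rcases hs with rfl | rfl | rfl <;> simpa [Finset.image_insert]

lemma noC_aux (H : ThreeGraph) (hval : H.IsValid) (hC : H.Free triangleC)
    (a b c d e f : ℕ) (hn : [a,b,c,d,e,f].Nodup)
    (h1 : ({a,b,c} : Finset ℕ) ∈ H.edges) (h2 : ({c,d,e} : Finset ℕ) ∈ H.edges)
    (h3 : ({e,f,a} : Finset ℕ) ∈ H.edges) : False := by
  apply hC
  have v1 := (hval _ h1).2
  have v2 := (hval _ h2).2
  have v3 := (hval _ h3).2
  refine ⟨fun i => [a,b,c,d,e,f].getD i 0, ?_, ?_, ?_⟩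
  · intro i hi j hj hij
    simp only [triangleC, Finset.coe_insert, Finset.coe_singleton, Set.mem_insert_iff,
      Set.mem_singleton_iff] at hi hj
    have hi' : i < [a,b,c,d,e,f].length := by simp; omega
    have hj' : j < [a,b,c,d,e,f].length := by simp; omega
    simp only [List.getD_eq_getElem _ _ hi', List.getD_eq_getElem _ _ hj'] at hij
    exact (List.Nodup.getElem_inj_iff hn).1 hij
  · intro v hv
    simp only [Finset.insert_subset_iff, Finset.singleton_subset_iff] at v1 v2 v3
    simp only [triangleC, Finset.mem_insert, Finset.mem_singleton] at hv
    rcases hv with rfl | rfl | rfl | rfl | rfl | rfl <;> simp [v1, v2, v3]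
  · intro s hs
    simp only [triangleC, Finset.mem_insert, Finset.mem_singleton] at hs
    rcases hs with rfl | rfl | rfl <;> simpa [Finset.image_insert]

lemma sw12 (a b c : ℕ) : ({a,b,c} : Finset ℕ) = {b,a,c} := by
  ext; simp; tauto

lemma sw23 (a b c : ℕ) : ({a,b,c} : Finset ℕ) = {a,c,b} := by
  ext; simp; tauto

/-- the ten triples in a 5-set -/
lemma ten (a b x c d : ℕ) (e : Finset ℕ) (he : e.card = 3) (hs : e ⊆ {a,b,x,c,d}) :
    e = {a,b,x} ∨ e = {x,c,d} ∨ e = {a,b,c} ∨ e = {a,b,d} ∨ e = {c,d,a} ∨ e = {c,d,b} ∨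
    e = {x,a,c} ∨ e = {x,a,d} ∨ e = {x,b,c} ∨ e = {x,b,d} := by
  obtain ⟨p, q, r, hpq, hpr, hqr, rfl⟩ := Finset.card_eq_three.1 he
  simp only [Finset.insert_subset_iff, Finset.singleton_subset_iff, Finset.mem_insert,
    Finset.mem_singleton] at hs
  obtain ⟨h1, h2, h3⟩ := hs
  rcases h1 with rfl | rfl | rfl | rfl | rfl <;> rcases h2 with rfl | rfl | rfl | rfl | rfl <;>
    first
    | exact absurd rfl hpq
    | (rcases h3 with rfl | rfl | rfl | rfl | rfl <;>
        first
        | exact absurd rfl hpr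
        | exact absurd rfl hqr
        | (simp only [true_or, or_true]; done)
        | (rw [sw12]; simp only [true_or, or_true]; done)
        | (rw [sw23]; simp only [true_or, or_true]; done)
        | (rw [sw12]; rw [sw23]; simp only [true_or, or_true]; done)
        | (rw [sw23]; rw [sw12]; simp only [true_or, or_true]; done)
        | (rw [sw12]; rw [sw23]; rw [sw12]; simp only [true_or, or_true]; done))

section core

variable {E : Finset (Finset ℕ)} {a b x c d : ℕ} {W1 : Finset ℕ} {W : Finset ℕ}

/-- local data of the setup -/
structure Dat (E : Finset (Finset ℕ)) (a b x c d : ℕ) (W W1 : Finset ℕ) : Prop where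
  card3 : ∀ e ∈ E, e.card = 3
  sub : ∀ e ∈ E, ∀ v ∈ e, v ∈ ({a,b,x,c,d} : Finset ℕ) ∨ v ∈ W
  noP : ∀ p q r s t u v : ℕ, [p,q,r,s,t,u,v].Nodup → ({p,q,r} : Finset ℕ) ∈ E →
    ({r,s,t} : Finset ℕ) ∈ E → ({t,u,v} : Finset ℕ) ∈ E → False
  noC : ∀ p q r s t u : ℕ, [p,q,r,s,t,u].Nodup → ({p,q,r} : Finset ℕ) ∈ E →
    ({r,s,t} : Finset ℕ) ∈ E → ({t,u,p} : Finset ℕ) ∈ E → False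
  nd : [a,b,x,c,d].Nodup
  e1 : ({a,b,x} : Finset ℕ) ∈ E
  e2 : ({x,c,d} : Finset ℕ) ∈ E
  Wd : ∀ w ∈ W, w ≠ a ∧ w ≠ b ∧ w ≠ x ∧ w ≠ c ∧ w ≠ d
  W1W : W1 ⊆ W
  f : ∀ w ∈ W1, ∃ w' w'', w' ∈ W1 ∧ w'' ∈ W1 ∧ w ≠ w' ∧ w ≠ w'' ∧ w' ≠ w'' ∧
    ({w,w',w''} : Finset ℕ) ∈ E

lemma Dat.swab (D : Dat E a b x c d W W1) : Dat E b a x c d W W1 := by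
  refine ⟨D.card3, ?_, D.noP, D.noC, ?_, ?_, D.e2, ?_, D.W1W, D.f⟩
  · intro e he v hv
    have := D.sub e he v hv
    rwa [Finset.insert_comm] at this
  · have := D.nd
    grind
  · rw [sw12]; exact D.e1
  · intro w hw
    have := D.Wd w hw
    tauto

lemma Dat.swcross (D : Dat E a b x c d W W1) : Dat E c d x a b W W1 := by
  refine ⟨D.card3, ?_, D.noP, D.noC, ?_, ?_, ?_, ?_, D.W1W, D.f⟩
  · intro e he v hv
    have := D.sub e he v hv
    simp only [Finset.mem_insert, Finset.mem_singleton] at this ⊢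
    tauto
  · have := D.nd
    grind
  · rw [sw23, sw12]; exact D.e2
  · rw [sw12, sw23]; exact D.e1
  · intro w hw
    have := D.Wd w hw
    tauto

/-- no edge consisting of a and two outer vertices -/
lemma Dat.no1 (D : Dat E a b x c d W W1) {w q : ℕ} (hw : w ∈ W) (hq : q ∈ W) (hwq : w ≠ q)
    (h : ({a,q,w} : Finset ℕ) ∈ E) : False := by
  have := D.nd
  have := D.Wd w hw
  have := D.Wd q hq
  refine D.noP q w a b x c d (by grind) ?_ D.e1 D.e2
  rw [sw23, sw12, sw23, sw23]; exact h

/-- no edge `{a, c, w}` -/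
lemma Dat.no2 (D : Dat E a b x c d W W1) {w : ℕ} (hw : w ∈ W)
    (h : ({a,c,w} : Finset ℕ) ∈ E) : False := by
  have := D.nd
  have := D.Wd w hw
  refine D.noC a b x d c w (by grind) D.e1 ?_ ?_
  · rw [sw23]; exact D.e2
  · rw [sw23, sw12, sw23, sw12, sw23, sw12, sw23] ; rw [sw12]; first | exact h | (rw [sw23]; exact h) | (rw [sw12]; exact h) | (rw [sw12, sw23]; exact h) | (rw [sw23, sw12]; exact h)

/-- no edge `{x, a, w}` -/
lemma Dat.no3 (D : Dat E a b x c d W W1) {w : ℕ} (hw : w ∈ W1)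
    (h : ({x,a,w} : Finset ℕ) ∈ E) : False := by
  obtain ⟨w', w'', h1, h2, n1, n2, n3, hf⟩ := D.f w hw
  have := D.nd
  have := D.Wd w (D.W1W hw)
  have := D.Wd w' (D.W1W h1)
  have := D.Wd w'' (D.W1W h2)
  refine D.noP w' w'' w a x c d (by grind) ?_ ?_ D.e2
  · rw [sw23, sw12]; exact hf
  · rw [sw12, sw23, sw12]; rw [sw23]; first | exact h | (rw [sw23]; exact h) | (rw [sw12]; exact h) | (rw [sw12, sw23]; exact h) | (rw [sw23, sw12]; exact h)

/-- an edge `{x, w, q}` has `q` in every inner edge through `w`. -/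
lemma Dat.twin (D : Dat E a b x c d W W1) {w q w' w'' : ℕ} (hw : w ∈ W) (hq : q ∈ W)
    (hwq : w ≠ q) (h1 : w' ∈ W) (h2 : w'' ∈ W) (n1 : w ≠ w') (n2 : w ≠ w'') (n3 : w' ≠ w'')
    (hf : ({w,w',w''} : Finset ℕ) ∈ E)
    (h : ({x,w,q} : Finset ℕ) ∈ E) : q = w' ∨ q = w'' := by
  by_contra hcon
  have := D.nd
  have := D.Wd w hw
  have := D.Wd w' h1
  have := D.Wd w'' h2
  have := D.Wd q hq
  refine D.noP w' w'' w q x c d (by grind) ?_ ?_ D.e2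
  · rw [sw23, sw12]; exact hf
  · rw [sw23, sw12]; exact h

/-- vertices in `A` have no `x`-edge -/
lemma Dat.noAx (D : Dat E a b x c d W W1) {w q : ℕ} (hw : w ∈ W) (hq : q ∈ W)
    (hwq : w ≠ q) (hA : ({a,b,w} : Finset ℕ) ∈ E) (h : ({x,w,q} : Finset ℕ) ∈ E) : False := by
  have := D.nd
  have := D.Wd w hw
  have := D.Wd q hq
  refine D.noP a b w q x c d (by grind) hA ?_ D.e2
  rw [sw23, sw12]; exact h

lemma Dat.AU (D : Dat E a b x c d W W1) {w p q : ℕ} (hw : w ∈ W1)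
    (hA : ({a,b,w} : Finset ℕ) ∈ E) (hp : p = x ∨ p = c ∨ p = d) (hq : q = x ∨ q = c ∨ q = d)
    (hpq : p ≠ q) (h : ({a,p,q} : Finset ℕ) ∈ E) : False := by
  obtain ⟨w', w'', h1, h2, n1, n2, n3, hf⟩ := D.f w hw
  have := D.nd
  have := D.Wd w (D.W1W hw)
  have := D.Wd w' (D.W1W h1)
  have := D.Wd w'' (D.W1W h2)
  refine D.noP w' w'' w b a p q (by grind) ?_ ?_ h
  · rw [sw23, sw12]; exact hf
  · rw [sw23, sw12, sw23]; exact hA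

lemma Dat.AB (D : Dat E a b x c d W W1) {w w' w'' : ℕ} (hw : w ∈ W) 
    (h1 : w' ∈ W) (h2 : w'' ∈ W) (n1 : w ≠ w') (n2 : w ≠ w'') (n3 : w' ≠ w'')
    (hf : ({w,w',w''} : Finset ℕ) ∈ E)
    (hA : ({a,b,w} : Finset ℕ) ∈ E) (hB : ({c,d,w'} : Finset ℕ) ∈ E) : False := by
  have := D.nd
  have := D.Wd w hw
  have := D.Wd w' h1
  have := D.Wd w'' h2
  refine D.noP a b w w'' w' c d (by grind) hA ?_ ?_
  · rw [sw23]; exact hf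
  · rw [sw12, sw23]; exact hB

lemma Dat.xU (D : Dat E a b x c d W W1) {w q : ℕ} (hw : w ∈ W) (hq : q ∈ W)
    (hwq : w ≠ q) (h : ({x,w,q} : Finset ℕ) ∈ E) (habc : ({a,b,c} : Finset ℕ) ∈ E) : False := by
  have := D.nd
  have := D.Wd w hw
  have := D.Wd q hq
  refine D.noP w q x d c a b (by grind) ?_ ?_ ?_
  · rw [sw23, sw12]; rw [sw23]; first | exact h | (rw [sw23]; exact h) | (rw [sw12]; exact h) | (rw [sw12, sw23]; exact h) | (rw [sw23, sw12]; exact h)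
  · rw [sw23]; exact D.e2
  · rw [sw12, sw23]; exact habc

/-- Classification of `H_1`. -/
lemma Dat.classify (D : Dat E a b x c d W W1) {e : Finset ℕ} (he : e ∈ E) {p w : ℕ}
    (hp : p ∈ ({a,b,x,c,d} : Finset ℕ)) (hpe : p ∈ e) (hw : w ∈ W1) (hwe : w ∈ e) :
    e = {a,b,w} ∨ e = {c,d,w} ∨ ∃ q ∈ W1, w ≠ q ∧ e = {x,w,q} := by
  have hwW := D.W1W hw
  have hwd := D.Wd w hwW
  have hpw : p ≠ w := by
    simp only [Finset.mem_insert, Finset.mem_singleton] at hp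
    grind
  obtain ⟨q, hqp, hqw, rfl⟩ : ∃ q, q ≠ p ∧ q ≠ w ∧ e = {p,q,w} := by
    have h3 := D.card3 e he
    have : ((e.erase p).erase w).card = 1 := by
      rw [Finset.card_erase_of_mem (by simp [hwe, Ne.symm hpw]), Finset.card_erase_of_mem hpe, h3]
    obtain ⟨q, hq⟩ := Finset.card_eq_one.1 this
    have hq' : q ∈ (e.erase p).erase w := by simp [hq]
    simp only [Finset.mem_erase] at hq'
    refine ⟨q, hq'.2.1, hq'.1, ?_⟩
    have hins := Finset.insert_erase (show w ∈ e.erase p by simp [hwe, Ne.symm hpw])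
    rw [← Finset.insert_erase hpe, ← hins, hq, sw23]
  have hnd := D.nd
  rcases D.sub _ he q (by simp) with hq | hq
  · simp only [Finset.mem_insert, Finset.mem_singleton] at hp hq
    have hD1 := D
    have hD2 := D.swab
    have hD3 := D.swcross
    have hD4 := D.swab.swcross
    have hD5 := D.swcross.swab
    have hD6 := D.swab.swcross.swab
    have he' := he
    rw [sw12] at he'
    rcases hp with rfl | rfl | rfl | rfl | rfl <;> rcases hq with rfl | rfl | rfl | rfl | rfl <;>
    first
    | exact absurd rfl hqp
    | exact Or.inl rfl
    | exact Or.inl (sw12 _ _ _)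
    | exact Or.inr (Or.inl rfl)
    | exact Or.inr (Or.inl (sw12 _ _ _))
    | (exfalso
       first
       | exact hD1.no3 hw he
       | exact hD1.no3 hw he'
       | exact hD2.no3 hw he
       | exact hD2.no3 hw he'
       | exact hD3.no3 hw he
       | exact hD3.no3 hw he'
       | exact hD5.no3 hw he
       | exact hD5.no3 hw he'
       | exact hD1.no2 hwW he
       | exact hD1.no2 hwW he'
       | exact hD2.no2 hwW he
       | exact hD2.no2 hwW he'
       | exact hD5.no2 hwW he
       | exact hD5.no2 hwW he'
       | exact hD6.no2 hwW he
       | exact hD6.no2 hwW he')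
  · simp only [Finset.mem_insert, Finset.mem_singleton] at hp
    rcases hp with rfl | rfl | rfl | rfl | rfl
    · exact (D.no1 hwW hq hqw.symm he).elim
    · exact (D.swab.no1 hwW hq hqw.symm he).elim
    · refine Or.inr (Or.inr ⟨q, ?_, hqw.symm, sw23 _ _ _⟩)
      obtain ⟨w', w'', h1, h2, n1, n2, n3, hf⟩ := D.f w hw
      rw [sw23] at he
      rcases D.twin hwW hq hqw.symm (D.W1W h1) (D.W1W h2) n1 n2 n3 hf he with rfl | rfl <;> assumption
    · exact (D.swcross.no1 hwW hq hqw.symm he).elim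
    · exact (D.swcross.swab.no1 hwW hq hqw.symm he).elim

/-- Bound on the `x`-pairs. -/
lemma pairs_le (X : Finset (Finset ℕ)) (S : Finset ℕ) (h2 : ∀ e ∈ X, e.card = 2)
    (hS : ∀ e ∈ X, e ⊆ S) (hdeg : ∀ w ∈ S, (X.filter (fun e => w ∈ e)).card ≤ 2) :
    X.card ≤ S.card := by
  have h := Finset.sum_card_bipartiteAbove_eq_sum_card_bipartiteBelow
    (s := S) (t := X) (fun (w : ℕ) (e : Finset ℕ) => w ∈ e)
  have l : ∑ w ∈ S, (Finset.bipartiteAbove (fun (w : ℕ) (e : Finset ℕ) => w ∈ e) X w).card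
      ≤ S.card * 2 := by
    apply Finset.sum_le_card_nsmul
    intro w hw
    exact hdeg w hw
  have r : ∑ e ∈ X, (Finset.bipartiteBelow (fun (w : ℕ) (e : Finset ℕ) => w ∈ e) S e).card
      = X.card * 2 := by
    apply Finset.sum_const_nat
    intro e he
    rw [← h2 e he]
    congr 1
    ext w
    simp only [Finset.bipartiteBelow, Finset.mem_filter]
    exact ⟨fun h => h.2, fun h => ⟨hS e he h, h⟩⟩
  omega

set_option maxHeartbeats 1000000 in
lemma Dat.main (D : Dat E a b x c d W W1) (hm : 7 ≤ W1.card) (HU H1 : Finset (Finset ℕ))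
    (hHU : ∀ e ∈ HU, e ∈ E ∧ e ⊆ {a,b,x,c,d})
    (hH1 : ∀ e ∈ H1, e ∈ E ∧ (∃ p ∈ ({a,b,x,c,d} : Finset ℕ), p ∈ e) ∧ ∃ w ∈ W1, w ∈ e) :
    HU.card + H1.card ≤ 2 * W1.card - 1 := by
  classical
  set A := W1.filter (fun w => ({a,b,w} : Finset ℕ) ∈ E) with hA
  set B := W1.filter (fun w => ({c,d,w} : Finset ℕ) ∈ E) with hB
  set S := W1 \ (A ∪ B) with hSdef
  set X := (S.powersetCard 2).filter (fun e => insert x e ∈ E) with hX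
  have hnd := D.nd
  -- counts
  have hScard : S.card + (A ∪ B).card = W1.card := by
    apply Finset.card_sdiff_add_card_eq_card
    exact Finset.union_subset (Finset.filter_subset _ _) (Finset.filter_subset _ _)
  have hAB := Finset.card_union_add_card_inter A B
  have hIA : (A ∩ B).card ≤ A.card := Finset.card_le_card Finset.inter_subset_left
  have hIB : (A ∩ B).card ≤ B.card := Finset.card_le_card Finset.inter_subset_right
  have hH1le : H1.card ≤ A.card + B.card + X.card := by
    have hsub : H1 ⊆ (A.image (fun w => ({a,b,w} : Finset ℕ)) ∪
        B.image (fun w => ({c,d,w} : Finset ℕ))) ∪ X.image (fun e => insert x e) := by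
      intro e he
      obtain ⟨heE, ⟨p, hp, hpe⟩, w, hw, hwe⟩ := hH1 e he
      simp only [Finset.mem_union, Finset.mem_image]
      rcases D.classify heE hp hpe hw hwe with rfl | rfl | ⟨q, hq, hwq, rfl⟩
      · exact Or.inl (Or.inl ⟨w, by simp [hA, hw, heE], rfl⟩)
      · exact Or.inl (Or.inr ⟨w, by simp [hB, hw, heE], rfl⟩)
      · refine Or.inr ⟨{w,q}, ?_, rfl⟩
        have heE' := heE
        rw [sw23] at heE'
        have k1 := fun h => D.noAx (D.W1W hw) (D.W1W hq) hwq h heE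
        have k2 := fun h => D.swcross.noAx (D.W1W hw) (D.W1W hq) hwq h heE
        have k3 := fun h => D.noAx (D.W1W hq) (D.W1W hw) hwq.symm h heE'
        have k4 := fun h => D.swcross.noAx (D.W1W hq) (D.W1W hw) hwq.symm h heE'
        simp only [hX, Finset.mem_filter, Finset.mem_powersetCard, Finset.insert_subset_iff,
          Finset.singleton_subset_iff, hSdef, Finset.mem_sdiff, Finset.mem_union, hA, hB]
        refine ⟨⟨⟨⟨hw, by tauto⟩, hq, by tauto⟩, Finset.card_pair hwq⟩, heE⟩
    refine (Finset.card_le_card hsub).trans ?_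
    refine (Finset.card_union_le _ _).trans ?_
    refine add_le_add ((Finset.card_union_le _ _).trans ?_) Finset.card_image_le
    exact add_le_add Finset.card_image_le Finset.card_image_le
  have hSW1 : S ⊆ W1 := Finset.sdiff_subset
  have hXS : X.card ≤ S.card := by
    apply pairs_le
    · intro e he
      simp only [hX, Finset.mem_filter, Finset.mem_powersetCard] at he
      exact he.1.2
    · intro e he
      simp only [hX, Finset.mem_filter, Finset.mem_powersetCard] at he
      exact he.1.1
    · intro w hw
      have hw := hSW1 hw
      obtain ⟨w', w'', h1, h2, n1, n2, n3, hf⟩ := D.f w hw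
      have : X.filter (fun e => w ∈ e) ⊆ {{w,w'},{w,w''}} := by
        intro e he
        simp only [hX, Finset.mem_filter, Finset.mem_powersetCard] at he
        obtain ⟨⟨⟨heS, he2⟩, heE⟩, hwe⟩ := he
        obtain ⟨q, hq⟩ := Finset.card_eq_one.1
          (show (e.erase w).card = 1 by rw [Finset.card_erase_of_mem hwe, he2])
        have hqe : q ∈ e.erase w := by simp [hq]
        have hqw := (Finset.mem_erase.1 hqe).1
        have hqW := D.W1W (hSW1 (heS (Finset.mem_erase.1 hqe).2))
        have : e = {w,q} := by rw [← Finset.insert_erase hwe, hq]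
        subst this
        rcases D.twin (D.W1W hw) hqW hqw.symm (D.W1W h1) (D.W1W h2) n1 n2 n3 hf heE with rfl | rfl
          <;> simp
      exact (Finset.card_le_card this).trans Finset.card_le_two
  have hXc : X.card ≤ S.card.choose 2 := by
    rw [← Finset.card_powersetCard]
    exact Finset.card_filter_le _ _
  -- bounds on HU
  have hten : ∀ e ∈ HU, e ∈ E ∧ _ := fun e he =>
    ⟨(hHU e he).1, ten a b x c d e (D.card3 e (hHU e he).1) (hHU e he).2⟩
  have hHU10 : HU.card ≤ 10 := by
    have : HU ⊆ (({a,b,x,c,d} : Finset ℕ)).powersetCard 3 := by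
      intro e he
      exact Finset.mem_powersetCard.2 ⟨(hHU e he).2, D.card3 e (hHU e he).1⟩
    refine (Finset.card_le_card this).trans ?_
    rw [Finset.card_powersetCard]
    exact (Nat.choose_le_choose 3 Finset.card_le_five).trans (by decide)
  have hHUA : ∀ w ∈ A, HU ⊆ {{a,b,x},{x,c,d},{a,b,c},{a,b,d}} := by
    intro w hw e he
    obtain ⟨hw1, hwE⟩ := Finset.mem_filter.1 hw
    have hwE' := hwE
    rw [sw12] at hwE'
    obtain ⟨heE, h⟩ := hten e he
    simp only [Finset.mem_insert, Finset.mem_singleton]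
    have ka := fun p q => D.AU (p := p) (q := q) hw1 hwE
    have kb := fun p q => D.swab.AU (p := p) (q := q) hw1 hwE'
    rcases h with h | h | h | h | h | h | h | h | h | h
    · tauto
    · tauto
    · tauto
    · tauto
    · subst h; rw [sw23, sw12] at heE
      exact (ka c d (by simp) (by simp) (by grind) heE).elim
    · subst h; rw [sw23, sw12] at heE
      exact (kb c d (by simp) (by simp) (by grind) heE).elim
    · subst h; rw [sw12] at heE
      exact (ka x c (by simp) (by simp) (by grind) heE).elim
    · subst h; rw [sw12] at heE
      exact (ka x d (by simp) (by simp) (by grind) heE).elim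
    · subst h; rw [sw12] at heE
      exact (kb x c (by simp) (by simp) (by grind) heE).elim
    · subst h; rw [sw12] at heE
      exact (kb x d (by simp) (by simp) (by grind) heE).elim
  have hHUB : ∀ w ∈ B, HU ⊆ {{a,b,x},{x,c,d},{c,d,a},{c,d,b}} := by
    intro w hw e he
    obtain ⟨hw1, hwE⟩ := Finset.mem_filter.1 hw
    have hwE' := hwE
    rw [sw12] at hwE'
    obtain ⟨heE, h⟩ := hten e he
    simp only [Finset.mem_insert, Finset.mem_singleton]
    have ka := fun p q => D.swcross.AU (p := p) (q := q) hw1 hwE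
    have kb := fun p q => D.swcross.swab.AU (p := p) (q := q) hw1 hwE'
    rcases h with h | h | h | h | h | h | h | h | h | h
    · tauto
    · tauto
    · subst h; rw [sw23, sw12] at heE
      exact (ka a b (by simp) (by simp) (by grind) heE).elim
    · subst h; rw [sw23, sw12] at heE
      exact (kb a b (by simp) (by simp) (by grind) heE).elim
    · tauto
    · tauto
    · subst h; rw [sw23, sw12] at heE
      exact (ka x a (by simp) (by simp) (by grind) heE).elim
    · subst h; rw [sw23, sw12] at heE
      exact (kb x a (by simp) (by simp) (by grind) heE).elim
    · subst h; rw [sw23, sw12] at heE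
      exact (ka x b (by simp) (by simp) (by grind) heE).elim
    · subst h; rw [sw23, sw12] at heE
      exact (kb x b (by simp) (by simp) (by grind) heE).elim
  have hHUX : X.Nonempty → HU.card ≤ 6 := by
    rintro ⟨s, hs⟩
    simp only [hX, Finset.mem_filter, Finset.mem_powersetCard] at hs
    obtain ⟨⟨hsS, hs2⟩, hsE⟩ := hs
    obtain ⟨w, q, hwq, rfl⟩ := Finset.card_eq_two.1 hs2
    have hwW := D.W1W (hSW1 (hsS (show w ∈ _ by simp)))
    have hqW := D.W1W (hSW1 (hsS (show q ∈ _ by simp)))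
    have : HU ⊆ {{a,b,x},{x,c,d},{x,a,c},{x,a,d},{x,b,c},{x,b,d}} := by
      intro e he
      obtain ⟨heE, h⟩ := hten e he
      simp only [Finset.mem_insert, Finset.mem_singleton]
      rcases h with h | h | h | h | h | h | h | h | h | h
      · tauto
      · tauto
      · subst h
        exact (D.xU hwW hqW hwq hsE heE).elim
      · subst h
        exact (D.swcross.swab.swcross.xU hwW hqW hwq hsE heE).elim
      · subst h
        exact (D.swcross.xU hwW hqW hwq hsE heE).elim
      · subst h
        exact (D.swab.swcross.xU hwW hqW hwq hsE heE).elim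
      · tauto
      · tauto
      · tauto
      · tauto
    exact (Finset.card_le_card this).trans Finset.card_le_six
  rcases A.eq_empty_or_nonempty with hA0 | ⟨u, hu⟩
  · rcases B.eq_empty_or_nonempty with hB0 | ⟨v, hv⟩
    · have a0 : A.card = 0 := by simp [hA0]
      have b0 : B.card = 0 := by simp [hB0]
      rcases X.eq_empty_or_nonempty with hX0 | hXn
      · have x0 : X.card = 0 := by simp [hX0]
        omega
      · have := hHUX hXn
        omega
    · have a0 : A.card = 0 := by simp [hA0]
      have := (Finset.card_le_card (hHUB v hv)).trans Finset.card_le_four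
      omega
  · rcases B.eq_empty_or_nonempty with hB0 | ⟨v, hv⟩
    · have b0 : B.card = 0 := by simp [hB0]
      have := (Finset.card_le_card (hHUA u hu)).trans Finset.card_le_four
      omega
    · have h2 : HU.card ≤ 2 := by
        have : HU ⊆ {{a,b,x},{x,c,d}} := by
          intro e he
          have ha := hHUA u hu he
          obtain ⟨hv1, hvE⟩ := Finset.mem_filter.1 hv
          have hvE' := hvE
          rw [sw12] at hvE'
          have heE := (hHU e he).1
          simp only [Finset.mem_insert, Finset.mem_singleton] at ha ⊢
          rcases ha with h | h | h | h
          · tauto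
          · tauto
          · subst h; rw [sw23, sw12] at heE
            exact (D.swcross.AU hv1 hvE (by simp) (by simp) (by grind) heE).elim
          · subst h; rw [sw23, sw12] at heE
            exact (D.swcross.swab.AU hv1 hvE' (by simp) (by simp) (by grind) heE).elim
        exact (Finset.card_le_card this).trans Finset.card_le_two
      have hint : (A ∩ B).Nonempty → 2 ≤ S.card := by
        rintro ⟨w, hw⟩
        obtain ⟨hwA, hwB⟩ := Finset.mem_inter.1 hw
        obtain ⟨hw1, hwAE⟩ := Finset.mem_filter.1 hwA
        obtain ⟨_, hwBE⟩ := Finset.mem_filter.1 hwB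
        obtain ⟨w', w'', h1, h2, n1, n2, n3, hf⟩ := D.f w hw1
        have hf' := hf
        rw [sw23] at hf'
        have k1 := fun h => D.AB (D.W1W hw1) (D.W1W h1) (D.W1W h2) n1 n2 n3 hf hwAE h
        have k2 := fun h => D.swcross.AB (D.W1W hw1) (D.W1W h1) (D.W1W h2) n1 n2 n3 hf hwBE h
        have k3 := fun h => D.AB (D.W1W hw1) (D.W1W h2) (D.W1W h1) n2 n1 n3.symm hf' hwAE h
        have k4 := fun h => D.swcross.AB (D.W1W hw1) (D.W1W h2) (D.W1W h1) n2 n1 n3.symm hf' hwBE h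
        have : ({w',w''} : Finset ℕ) ⊆ S := by
          simp only [Finset.insert_subset_iff,
            Finset.singleton_subset_iff, hSdef, Finset.mem_sdiff, Finset.mem_union, hA, hB,
            Finset.mem_filter]
          exact ⟨⟨h1, fun h => h.elim (fun h => k2 h.2) (fun h => k1 h.2)⟩, h2,
            fun h => h.elim (fun h => k4 h.2) (fun h => k3 h.2)⟩
        rw [← Finset.card_pair n3]
        exact Finset.card_le_card this
      have hle : (A ∩ B).card ≤ (A ∪ B).card :=
        Finset.card_le_card (Finset.inter_subset_left.trans Finset.subset_union_left)
      rcases (A ∩ B).eq_empty_or_nonempty with h0 | hne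
      · have i0 : (A ∩ B).card = 0 := by simp [h0]
        omega
      · have hS2 := hint hne
        rcases hS2.eq_or_lt with h | h
        · rw [← h] at hXc
          have : X.card ≤ 1 := hXc
          omega
        · omega

end core

/-- Inequality (12) of the paper: in the Setup, if `|W₁| ≥ 7` then
`|H[U]| + |H₁| ≤ 2|W₁| - 1`. -/
theorem fact_HU_H1_bound (n : ℕ) (H : ThreeGraph)
    (u0 u1 u2 u3 u4 : ℕ) (t : Finset ℕ)
    (hval : H.IsValid) (hcard : H.verts.card = n) (hconn : H.Connected)
    (hP : H.Free pathP) (hC : H.Free triangleC)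
    (hdist : List.Pairwise (· ≠ ·) [u0, u1, u2, u3, u4])
    (he1 : ({u0, u1, u2} : Finset ℕ) ∈ H.edges)
    (he2 : ({u2, u3, u4} : Finset ℕ) ∈ H.edges)
    (ht : t ∈ H.edges) (htdisj : Disjoint t ({u0, u1, u2, u3, u4} : Finset ℕ))
    (hW1 : 7 ≤ (W1set H {u0, u1, u2, u3, u4}).card) :
    (HUset H {u0, u1, u2, u3, u4}).card + (H1set H {u0, u1, u2, u3, u4}).card ≤
      2 * (W1set H {u0, u1, u2, u3, u4}).card - 1 := by
  have D : Dat H.edges u0 u1 u2 u3 u4 (Wset H {u0, u1, u2, u3, u4})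
      (W1set H {u0, u1, u2, u3, u4}) := by
    refine ⟨fun e he => (hval e he).1, ?_, noP_aux H hval hP, noC_aux H hval hC, hdist, he1, he2,
      ?_, Finset.sdiff_subset, ?_⟩
    · intro e he v hv
      have := (hval e he).2 hv
      by_cases h : v ∈ ({u0, u1, u2, u3, u4} : Finset ℕ)
      · exact Or.inl h
      · exact Or.inr (Finset.mem_sdiff.2 ⟨this, h⟩)
    · intro w hw
      have := (Finset.mem_sdiff.1 hw).2
      simpa using this
    · intro w hw
      obtain ⟨hwW, hw0⟩ := Finset.mem_sdiff.1 hw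
      simp only [W0set, Finset.mem_filter, not_and, not_forall] at hw0
      obtain ⟨e, he, hsub, hwe⟩ := hw0 hwW
      have hwe := not_not.1 hwe
      have hin : ∀ v ∈ e, v ∈ W1set H {u0, u1, u2, u3, u4} := by
        intro v hv
        refine Finset.mem_sdiff.2 ⟨hsub hv, fun h => ?_⟩
        exact (Finset.mem_filter.1 h).2 e he hsub hv
      obtain ⟨w', w'', hn, hq⟩ := Finset.card_eq_two.1
        (show (e.erase w).card = 2 by rw [Finset.card_erase_of_mem hwe, (hval e he).1])
      have h1 : w' ∈ e.erase w := by simp [hq]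
      have h2 : w'' ∈ e.erase w := by simp [hq]
      obtain ⟨a1, a2⟩ := Finset.mem_erase.1 h1
      obtain ⟨b1, b2⟩ := Finset.mem_erase.1 h2
      refine ⟨w', w'', hin _ a2, hin _ b2, a1.symm, b1.symm, hn, ?_⟩
      rw [← hq, Finset.insert_erase hwe]
      exact he
  refine D.main hW1 _ _ ?_ ?_
  · intro e he
    exact Finset.mem_filter.1 he
  · intro e he
    obtain ⟨h1, ⟨p, hp⟩, ⟨w, hw⟩⟩ := Finset.mem_filter.1 he
    obtain ⟨hp1, hp2⟩ := Finset.mem_inter.1 hp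
    obtain ⟨hw1, hw2⟩ := Finset.mem_inter.1 hw
    exact ⟨h1, ⟨p, hp2, hp1⟩, ⟨w, hw2, hw1⟩⟩
end
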